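/- arXiv:math/0007200 — 9 statements merged into one kernel-verified Lean document; each statement's English description precedes it below -/
import Mathlib

section
/- There exists a constant C such that for every family (B_i)_{i ∈ I} of metric balls of positive radius in ℍ with μ(⋃_{i∈I} B_i) < ∞, one can select a finite subset J ⊆ I such that (i) μ(⋃_{i∈I} B_i) ≤ C · μ(⋃_{j∈J} B_j), and (ii) ‖Σ_{j∈J} 1_{B_j}‖_{L^{2,∞}(μ)} ≤ C · μ(⋃_{i∈I} B_i)^{1/2}. -/
open MeasureTheory ENNReal NNReal UpperHalfPlane

noncomputable section

instance : MeasurableSpace UpperHalfPlane := borel UpperHalfPlane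

instance : BorelSpace UpperHalfPlane := ⟨rfl⟩

/-- The hyperbolic measure on the upper half-plane: the measure with density
`(Im z)⁻²` with respect to two-dimensional Lebesgue measure. -/
def hypMeasure : Measure UpperHalfPlane :=
  (Measure.comap (fun z : UpperHalfPlane => (z : ℂ)) volume).withDensity
    fun z => ENNReal.ofReal (1 / z.im ^ 2)

/-- The Lorentz quasi-norm `‖f‖_{L^{2,∞}(μ)} = sup_{t>0} t · μ({x : f x > t})^{1/2}`. -/
def lorentz2inf {α : Type*} [MeasurableSpace α] (μ : Measure α) (f : α → ℝ≥0∞) : ℝ≥0∞ :=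
  ⨆ (t : ℝ) (_ : 0 < t), ENNReal.ofReal t * (μ {x | ENNReal.ofReal t < f x}) ^ (1 / 2 : ℝ)

section Helpers

open Set Filter Topology Metric

/-! ### Coordinates -/

/-- coordinates on the upper half plane (junk below the real axis) -/
def hE (p : ℝ × ℝ) : UpperHalfPlane :=
  ⟨⟨p.1, if 0 < p.2 then p.2 else 1⟩, by
    show 0 < (if 0 < p.2 then p.2 else 1)
    split_ifs with h
    · exact h
    · exact one_pos⟩

lemma hE_re (p : ℝ × ℝ) : (hE p).re = p.1 := rfl

lemma hE_im {p : ℝ × ℝ} (h : 0 < p.2) : (hE p).im = p.2 := by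
  show (if 0 < p.2 then p.2 else 1) = p.2
  simp [h]

lemma hE_re_im (z : UpperHalfPlane) : hE (z.re, z.im) = z := by
  apply UpperHalfPlane.ext_re_im
  · rfl
  · exact hE_im z.im_pos

lemma coe_membedding : MeasurableEmbedding (fun z : UpperHalfPlane => (z : ℂ)) :=
  UpperHalfPlane.isOpenEmbedding_coe.measurableEmbedding

lemma measurable_hE : Measurable hE := by
  rw [← coe_membedding.measurable_comp_iff]
  have : (fun z : UpperHalfPlane => (z : ℂ)) ∘ hE =
      fun p : ℝ × ℝ => Complex.measurableEquivRealProd.symm (p.1, if 0 < p.2 then p.2 else 1) := by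
    ext p
    rfl
  rw [this]
  apply Complex.measurableEquivRealProd.symm.measurable.comp
  apply Measurable.prodMk measurable_fst
  exact Measurable.ite (measurableSet_lt measurable_const measurable_snd) measurable_snd
    measurable_const

lemma measurable_him : Measurable (fun z : UpperHalfPlane => z.im) :=
  UpperHalfPlane.continuous_im.measurable

lemma measurable_hre : Measurable (fun z : UpperHalfPlane => z.re) :=
  UpperHalfPlane.continuous_re.measurable

lemma hyp_lintegral_complex (f : UpperHalfPlane → ℝ≥0∞) (hf : Measurable f) :
    ∫⁻ z, f z ∂hypMeasure =
      ∫⁻ w in {w : ℂ | 0 < w.im}, ENNReal.ofReal (1 / w.im ^ 2) * f (hE (w.re, w.im)) := by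
  have hd : Measurable (fun z : UpperHalfPlane => ENNReal.ofReal (1 / z.im ^ 2)) :=
    ((measurable_him.pow_const 2).const_div 1).ennreal_ofReal
  rw [hypMeasure, lintegral_withDensity_eq_lintegral_mul _ hd hf]
  have hr : {w : ℂ | 0 < w.im} = range (fun z : UpperHalfPlane => (z : ℂ)) := by
    ext w
    constructor
    · intro h
      exact ⟨⟨w, h⟩, rfl⟩
    · rintro ⟨z, rfl⟩
      exact z.im_pos
  rw [hr, ← coe_membedding.map_comap, coe_membedding.lintegral_map]
  apply lintegral_congr
  intro z
  simp only [Pi.mul_apply, UpperHalfPlane.coe_re, UpperHalfPlane.coe_im, hE_re_im]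

lemma hyp_lintegral (f : UpperHalfPlane → ℝ≥0∞) (hf : Measurable f) :
    ∫⁻ z, f z ∂hypMeasure =
      ∫⁻ p in (univ : Set ℝ) ×ˢ Ioi (0 : ℝ), ENNReal.ofReal (1 / p.2 ^ 2) * f (hE p) := by
  rw [hyp_lintegral_complex f hf]
  have := Complex.volume_preserving_equiv_real_prod.setLIntegral_comp_preimage_emb
    Complex.measurableEquivRealProd.measurableEmbedding
    (fun p : ℝ × ℝ => ENNReal.ofReal (1 / p.2 ^ 2) * f (hE p))
    ((univ : Set ℝ) ×ˢ Ioi (0 : ℝ))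
  rw [← this]
  have hs : Complex.measurableEquivRealProd ⁻¹' ((univ : Set ℝ) ×ˢ Ioi (0 : ℝ)) =
      {w : ℂ | 0 < w.im} := by
    ext w
    simp [Complex.measurableEquivRealProd]
  rw [hs]
  rfl

lemma dens_measurable :
    Measurable (fun p : ℝ × ℝ => ENNReal.ofReal (1 / p.2 ^ 2)) :=
  ((measurable_snd.pow_const 2).const_div 1).ennreal_ofReal

lemma hyp_lintegral_iter (f : UpperHalfPlane → ℝ≥0∞) (hf : Measurable f) :
    ∫⁻ z, f z ∂hypMeasure =
      ∫⁻ x : ℝ, ∫⁻ y in Ioi (0 : ℝ), ENNReal.ofReal (1 / y ^ 2) * f (hE (x, y)) := by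
  rw [hyp_lintegral f hf, Measure.volume_eq_prod, ← Measure.prod_restrict, Measure.restrict_univ,
    lintegral_prod (fun p : ℝ × ℝ => ENNReal.ofReal (1 / p.2 ^ 2) * f (hE p))
      (dens_measurable.mul (hf.comp measurable_hE)).aemeasurable]

lemma hyp_apply_iter (S : Set UpperHalfPlane) (hS : MeasurableSet S) :
    hypMeasure S =
      ∫⁻ v in Ioi (0 : ℝ), ENNReal.ofReal (1 / v ^ 2) * volume {u : ℝ | hE (u, v) ∈ S} := by
  have h1 : Measurable (S.indicator (fun _ => (1 : ℝ≥0∞))) := measurable_const.indicator hS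
  rw [← lintegral_indicator_one hS]
  show ∫⁻ z, S.indicator (fun _ => (1 : ℝ≥0∞)) z ∂hypMeasure = _
  rw [hyp_lintegral _ h1, Measure.volume_eq_prod, ← Measure.prod_restrict, Measure.restrict_univ,
    lintegral_prod_symm
      (fun p : ℝ × ℝ => ENNReal.ofReal (1 / p.2 ^ 2) * S.indicator (fun _ => (1 : ℝ≥0∞)) (hE p))
      (dens_measurable.mul (h1.comp measurable_hE)).aemeasurable]
  apply lintegral_congr
  intro v
  have hm : Measurable (fun u : ℝ => hE (u, v)) := measurable_hE.comp (by fun_prop)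
  have h2 : Measurable (fun u : ℝ => S.indicator (fun _ => (1 : ℝ≥0∞)) (hE (u, v))) :=
    h1.comp hm
  simp only
  rw [lintegral_const_mul _ h2]
  congr 1
  have : (fun u : ℝ => S.indicator (fun _ => (1 : ℝ≥0∞)) (hE (u, v))) =
      indicator {u : ℝ | hE (u, v) ∈ S} 1 := by
    ext u
    simp [indicator]
  rw [this]
  exact lintegral_indicator_one (hm hS)

lemma hyp_apply_complex (S : Set UpperHalfPlane) (hS : MeasurableSet S) :
    hypMeasure S = ∫⁻ w in (fun z : UpperHalfPlane => (z : ℂ)) '' S,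
      ENNReal.ofReal (1 / w.im ^ 2) := by
  have h1 : Measurable (S.indicator (fun _ => (1 : ℝ≥0∞))) := measurable_const.indicator hS
  rw [← lintegral_indicator_one hS]
  show ∫⁻ z, S.indicator (fun _ => (1 : ℝ≥0∞)) z ∂hypMeasure = _
  have hi := coe_membedding.measurableSet_image.2 hS
  have hu : MeasurableSet {w : ℂ | 0 < w.im} :=
    measurableSet_lt measurable_const Complex.measurable_im
  rw [hyp_lintegral_complex _ h1, ← lintegral_indicator hi, ← lintegral_indicator hu]
  apply lintegral_congr
  intro w
  by_cases hw : 0 < w.im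
  · obtain ⟨z, rfl⟩ : ∃ z : UpperHalfPlane, (z : ℂ) = w := ⟨⟨w, hw⟩, rfl⟩
    have h0 : (z : ℂ) ∈ {w : ℂ | 0 < w.im} := hw
    rw [indicator_of_mem h0, UpperHalfPlane.coe_re, UpperHalfPlane.coe_im, hE_re_im]
    by_cases hz : z ∈ S
    · rw [indicator_of_mem hz, indicator_of_mem (mem_image_of_mem _ hz), mul_one,
        UpperHalfPlane.coe_im]
    · have : (z : ℂ) ∉ (fun z : UpperHalfPlane => (z : ℂ)) '' S := by
        rintro ⟨z', hz', h⟩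
        exact hz (UpperHalfPlane.coe_injective h ▸ hz')
      rw [indicator_of_notMem hz, indicator_of_notMem this, mul_zero]
  · have : w ∉ (fun z : UpperHalfPlane => (z : ℂ)) '' S := by
      rintro ⟨z, -, rfl⟩
      exact hw z.im_pos
    simp [indicator, hw, this]

/-! ### Vitali -/

lemma vitali_gen {α ι : Type*} [PseudoMetricSpace α] [SecondCountableTopology α] [MeasurableSpace α]
    [BorelSpace α] (μ : Measure α) (t : Set ι) (x : ι → α) (r : ι → ℝ) (R : ℝ)
    (hR : ∀ a ∈ t, r a ≤ R) (hr : ∀ a ∈ t, 0 < r a) (K : ℝ≥0∞)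
    (hK : ∀ a ∈ t, μ (closedBall (x a) (5 * r a)) ≤ K * μ (ball (x a) (r a))) :
    ∃ u ⊆ t, u.Countable ∧ (u.PairwiseDisjoint fun a => ball (x a) (r a)) ∧
      μ (⋃ a ∈ t, ball (x a) (r a)) ≤ K * μ (⋃ a ∈ u, ball (x a) (r a)) := by
  obtain ⟨u, hut, hd, hc⟩ :=
    Vitali.exists_disjoint_subfamily_covering_enlargement_closedBall t x r R hR 5 (by norm_num)
  have hd' : u.PairwiseDisjoint fun a => ball (x a) (r a) :=
    hd.mono fun a => ball_subset_closedBall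
  have hcount : u.Countable := hd'.countable_of_isOpen (fun _ _ => isOpen_ball)
    (fun i hi => nonempty_ball.2 (hr i (hut hi)))
  refine ⟨u, hut, hcount, hd', ?_⟩
  rw [measure_biUnion hcount hd' (fun _ _ => measurableSet_ball), ← ENNReal.tsum_mul_left]
  calc μ (⋃ a ∈ t, ball (x a) (r a)) ≤ μ (⋃ b ∈ u, closedBall (x b) (5 * r b)) := by
        apply measure_mono
        apply iUnion₂_subset
        intro a ha
        obtain ⟨b, hb, hab⟩ := hc a ha
        exact (ball_subset_closedBall.trans hab).trans
          (subset_biUnion_of_mem (u := fun b => closedBall (x b) (5 * r b)) hb)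
    _ ≤ ∑' b : u, μ (closedBall (x b) (5 * r b)) := measure_biUnion_le _ hcount _
    _ ≤ _ := ENNReal.tsum_le_tsum fun b => hK b (hut b.2)

/-- finite approximation -/
lemma finite_approx {α ι : Type*} [MeasurableSpace α] (μ : Measure α) (t : Set ι)
    (ht : t.Countable) (s : ι → Set α)
    (hfin : μ (⋃ i ∈ t, s i) ≠ ∞) :
    ∃ J : Finset ι, ↑J ⊆ t ∧ μ (⋃ i ∈ t, s i) ≤ 2 * μ (⋃ i ∈ J, s i) := by
  classical
  by_cases h0 : μ (⋃ i ∈ t, s i) = 0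
  · exact ⟨∅, by simp, by simp [h0]⟩
  have hlt : μ (⋃ i ∈ t, s i) / 2 < μ (⋃ i ∈ t, s i) := ENNReal.half_lt_self h0 hfin
  have : Countable t := ht.to_subtype
  have hU : (⋃ i ∈ t, s i) = ⋃ F : Finset t, ⋃ i ∈ F, s i := by
    ext z
    simp only [mem_iUnion]
    constructor
    · rintro ⟨i, hi, hz⟩
      exact ⟨{⟨i, hi⟩}, ⟨i, hi⟩, by simp, hz⟩
    · rintro ⟨F, i, -, hz⟩
      exact ⟨i, i.2, hz⟩
  have hdir : Directed (· ⊆ ·) (fun F : Finset t => ⋃ i ∈ F, s i) := by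
    apply Monotone.directed_le
    intro F G hFG
    exact biUnion_subset_biUnion_left hFG
  have h2 : μ (⋃ i ∈ t, s i) = ⨆ F : Finset t, μ (⋃ i ∈ F, s i) := by
    rw [hU, hdir.measure_iUnion]
  nth_rewrite 2 [h2] at hlt
  obtain ⟨F, hF⟩ := lt_iSup_iff.1 hlt
  refine ⟨F.map (Function.Embedding.subtype _), ?_, ?_⟩
  · intro i hi
    simp only [Finset.coe_map, Function.Embedding.subtype_apply, mem_image] at hi
    obtain ⟨j, -, rfl⟩ := hi
    exact j.2
  · have h3 : (⋃ i ∈ F.map (Function.Embedding.subtype _), s i) = ⋃ i ∈ F, s i := by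
      ext z
      simp
    rw [h3, mul_comm]
    exact (ENNReal.div_le_iff_le_mul (by simp) (by simp)).1 hF.le

/-! ### Small balls -/

lemma hyp_closedBall_le (z : UpperHalfPlane) (R : ℝ) (hR : 0 ≤ R) :
    hypMeasure (closedBall z R) ≤
      ENNReal.ofReal ((Real.exp R * Real.sinh R) ^ 2) * NNReal.pi := by
  rw [hyp_apply_complex _ measurableSet_closedBall]
  have him := UpperHalfPlane.image_coe_closedBall z R
  have hmeas : MeasurableSet ((fun z : UpperHalfPlane => (z : ℂ)) '' closedBall z R) :=
    coe_membedding.measurableSet_image.2 measurableSet_closedBall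
  calc ∫⁻ w in (fun z : UpperHalfPlane => (z : ℂ)) '' closedBall z R, ENNReal.ofReal (1 / w.im ^ 2)
      ≤ ∫⁻ w in (fun z : UpperHalfPlane => (z : ℂ)) '' closedBall z R,
          ENNReal.ofReal ((Real.exp R / z.im) ^ 2) := by
        apply setLIntegral_mono' hmeas
        rintro w ⟨z', hz', rfl⟩
        apply ENNReal.ofReal_le_ofReal
        have h1 := UpperHalfPlane.im_div_exp_dist_le z z'
        rw [mem_closedBall, dist_comm] at hz'
        have h2 : Real.exp (dist z z') ≤ Real.exp R := Real.exp_le_exp.2 hz'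
        have h3 := z.im_pos
        have h4 := z'.im_pos
        have h5 : z.im ≤ z'.im * Real.exp R := by
          rw [div_le_iff₀ (Real.exp_pos _)] at h1
          exact h1.trans (by gcongr)
        rw [UpperHalfPlane.coe_im, div_pow, div_le_div_iff₀ (by positivity) (by positivity), one_mul,
          ← mul_pow, mul_comm (Real.exp R)]
        gcongr
    _ = ENNReal.ofReal ((Real.exp R / z.im) ^ 2) *
          volume ((fun z : UpperHalfPlane => (z : ℂ)) '' closedBall z R) := by
        rw [lintegral_const, Measure.restrict_apply_univ]
    _ = ENNReal.ofReal ((Real.exp R / z.im) ^ 2) *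
          (ENNReal.ofReal (z.im * Real.sinh R) ^ 2 * NNReal.pi) := by
        rw [← Complex.volume_closedBall, ← him]
    _ = _ := by
        have h3 := z.im_pos
        have hs : 0 ≤ Real.sinh R := Real.sinh_nonneg_iff.2 hR
        rw [← mul_assoc, ← ENNReal.ofReal_pow (by positivity), ← ENNReal.ofReal_mul (by positivity)]
        congr 2
        field_simp
    _ ≤ _ := le_rfl

lemma le_hyp_ball (z : UpperHalfPlane) (r : ℝ) (hr : 0 ≤ r) :
    ENNReal.ofReal ((Real.exp (-r) * Real.sinh r) ^ 2) * NNReal.pi ≤ hypMeasure (ball z r) := by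
  rw [hyp_apply_complex _ measurableSet_ball]
  have him := UpperHalfPlane.image_coe_ball z r
  have hmeas : MeasurableSet ((fun z : UpperHalfPlane => (z : ℂ)) '' ball z r) :=
    coe_membedding.measurableSet_image.2 measurableSet_ball
  rw [← ge_iff_le]
  calc ∫⁻ w in (fun z : UpperHalfPlane => (z : ℂ)) '' ball z r, ENNReal.ofReal (1 / w.im ^ 2)
      ≥ ∫⁻ w in (fun z : UpperHalfPlane => (z : ℂ)) '' ball z r,
          ENNReal.ofReal ((Real.exp (-r) / z.im) ^ 2) := by
        apply setLIntegral_mono' hmeas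
        rintro w ⟨z', hz', rfl⟩
        apply ENNReal.ofReal_le_ofReal
        have h1 := UpperHalfPlane.im_div_exp_dist_le z' z
        rw [mem_ball] at hz'
        have h2 : Real.exp (dist z' z) ≤ Real.exp r := Real.exp_le_exp.2 hz'.le
        have h3 := z.im_pos
        have h4 := z'.im_pos
        have h5 : z'.im ≤ z.im * Real.exp r := by
          rw [div_le_iff₀ (Real.exp_pos _)] at h1
          exact h1.trans (by gcongr)
        rw [UpperHalfPlane.coe_im, div_pow, div_le_div_iff₀ (by positivity) (by positivity), one_mul,
          ← mul_pow]
        gcongr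
        calc Real.exp (-r) * z'.im ≤ Real.exp (-r) * (z.im * Real.exp r) := by gcongr
          _ = z.im * (Real.exp (-r) * Real.exp r) := by ring
          _ = z.im := by rw [← Real.exp_add]; simp
    _ = ENNReal.ofReal ((Real.exp (-r) / z.im) ^ 2) *
          volume ((fun z : UpperHalfPlane => (z : ℂ)) '' ball z r) := by
        rw [lintegral_const, Measure.restrict_apply_univ]
    _ = ENNReal.ofReal ((Real.exp (-r) / z.im) ^ 2) *
          (ENNReal.ofReal (z.im * Real.sinh r) ^ 2 * NNReal.pi) := by
        rw [← Complex.volume_ball, ← him]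
    _ = _ := by
        have h3 := z.im_pos
        have hs : 0 ≤ Real.sinh r := Real.sinh_nonneg_iff.2 hr
        rw [← mul_assoc, ← ENNReal.ofReal_pow (by positivity), ← ENNReal.ofReal_mul (by positivity)]
        congr 2
        field_simp

lemma hyp_ball_lt_top (z : UpperHalfPlane) (r : ℝ) : hypMeasure (ball z r) < ∞ := by
  rcases le_or_gt 0 r with h | h
  · refine lt_of_le_of_lt ((measure_mono ball_subset_closedBall).trans (hyp_closedBall_le z r h)) ?_
    exact ENNReal.mul_lt_top ENNReal.ofReal_lt_top ENNReal.coe_lt_top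
  · rw [ball_eq_empty.2 h.le]
    simp

lemma small_doubling : ∃ K : ℝ≥0, ∀ (z : UpperHalfPlane) (r : ℝ), 0 < r → r ≤ 1 →
    hypMeasure (closedBall z (5 * r)) ≤ K * hypMeasure (ball z r) := by
  have hc : 0 ≤ Real.exp 6 * (8 * Real.cosh 4 ^ 3) := by positivity
  refine ⟨Real.toNNReal ((Real.exp 6 * (8 * Real.cosh 4 ^ 3)) ^ 2), fun z r hr hr1 => ?_⟩
  refine (hyp_closedBall_le z (5 * r) (by positivity)).trans ?_
  refine le_trans ?_ (mul_le_mul_right (le_hyp_ball z r hr.le) _)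
  have hs : 0 ≤ Real.sinh r := Real.sinh_nonneg_iff.2 hr.le
  have e : ((Real.toNNReal ((Real.exp 6 * (8 * Real.cosh 4 ^ 3)) ^ 2) : ℝ≥0) : ℝ≥0∞) =
    ENNReal.ofReal ((Real.exp 6 * (8 * Real.cosh 4 ^ 3)) ^ 2) := rfl
  rw [e, ← mul_assoc, ← ENNReal.ofReal_mul (by positivity)]
  gcongr
  rw [← mul_pow]
  have hs5 : 0 ≤ Real.sinh (5 * r) := Real.sinh_nonneg_iff.2 (by positivity)
  apply pow_le_pow_left₀ (by positivity)
  have h1 : Real.sinh (5 * r) ≤ 8 * Real.cosh 4 ^ 3 * Real.sinh r := by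
    have h8 : Real.sinh (5 * r) ≤ Real.sinh (2 * (2 * (2 * r))) := Real.sinh_le_sinh.2 (by linarith)
    rw [Real.sinh_two_mul, Real.sinh_two_mul, Real.sinh_two_mul] at h8
    have c1 : Real.cosh r ≤ Real.cosh 4 := by
      rw [Real.cosh_le_cosh, abs_of_pos hr, abs_of_pos (by norm_num)]; linarith
    have c2 : Real.cosh (2 * r) ≤ Real.cosh 4 := by
      rw [Real.cosh_le_cosh, abs_of_pos (by positivity), abs_of_pos (by norm_num)]; linarith
    have c3 : Real.cosh (2 * (2 * r)) ≤ Real.cosh 4 := by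
      rw [Real.cosh_le_cosh, abs_of_pos (by positivity), abs_of_pos (by norm_num)]; linarith
    have p1 := Real.cosh_pos r
    have p2 := Real.cosh_pos (2 * r)
    have p3 := Real.cosh_pos (2 * (2 * r))
    have p4 := Real.cosh_pos 4
    calc _ ≤ 2 * (2 * (2 * Real.sinh r * Real.cosh r) * Real.cosh (2 * r)) *
          Real.cosh (2 * (2 * r)) := h8
      _ ≤ 2 * (2 * (2 * Real.sinh r * Real.cosh 4) * Real.cosh 4) * Real.cosh 4 := by gcongr
      _ = _ := by ring
  have h2 : Real.exp (5 * r) ≤ Real.exp 6 * Real.exp (-r) := by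
    rw [← Real.exp_add]
    exact Real.exp_le_exp.2 (by linarith)
  calc _ ≤ (Real.exp 6 * Real.exp (-r)) * (8 * Real.cosh 4 ^ 3 * Real.sinh r) := by
        gcongr
    _ = _ := by ring

/-! ### Selection -/

lemma selection {α ι : Type*} [MeasurableSpace α] (μ : Measure α) (B : ι → Set α)
    (hB : ∀ i, MeasurableSet (B i)) (hfin : ∀ i, μ (B i) ≠ ∞) (J₀ : Finset ι) :
    ∃ J ⊆ J₀, (∀ i ∈ J₀, μ (B i) ≤ 2 * μ (B i ∩ ⋃ j ∈ J, B j)) ∧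
      ∀ g : α → ℝ≥0∞, ∀ a : ι → ℝ≥0∞, (∀ j ∈ J, ∀ x ∈ B j, a j ≤ g x) →
        ∑ j ∈ J, a j * μ (B j) ≤ 2 * ∫⁻ x in ⋃ j ∈ J, B j, g x ∂μ := by
  classical
  induction J₀ using Finset.induction_on with
  | empty => exact ⟨∅, by simp, by simp, by simp⟩
  | insert i s hi ih =>
    obtain ⟨J, hJ, h1, h2⟩ := ih
    have hUm : MeasurableSet (⋃ j ∈ J, B j) := Finset.measurableSet_biUnion _ fun j _ => hB j
    by_cases h : μ (B i) ≤ 2 * μ (B i ∩ ⋃ j ∈ J, B j)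
    · refine ⟨J, hJ.trans (Finset.subset_insert _ _), ?_, h2⟩
      intro k hk
      rcases Finset.mem_insert.1 hk with rfl | hk
      · exact h
      · exact h1 k hk
    · have hiJ : i ∉ J := fun h' => hi (hJ h')
      have hUU : (⋃ j ∈ insert i J, B j) = (⋃ j ∈ J, B j) ∪ (B i \ ⋃ j ∈ J, B j) := by
        rw [Finset.set_biUnion_insert, union_sdiff_self, union_comm]
      have hdd : μ (B i) ≤ 2 * μ (B i \ ⋃ j ∈ J, B j) := by
        have e := measure_inter_add_sdiff (μ := μ) (B i) hUm
        rw [not_le] at h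
        have f1 : μ (B i ∩ ⋃ j ∈ J, B j) ≠ ∞ := ne_top_of_le_ne_top (hfin i) (measure_mono inter_subset_left)
        have f2 : μ (B i \ ⋃ j ∈ J, B j) ≠ ∞ := ne_top_of_le_ne_top (hfin i) (measure_mono sdiff_subset)
        rw [← e] at h ⊢
        lift μ (B i ∩ ⋃ j ∈ J, B j) to ℝ≥0 using f1 with p
        lift μ (B i \ ⋃ j ∈ J, B j) to ℝ≥0 using f2 with q
        norm_cast at h ⊢
        have h' : (2 : ℝ) * p < p + q := by exact_mod_cast h
        have : (p : ℝ) + q ≤ 2 * q := by linarith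
        exact_mod_cast this
      refine ⟨insert i J, Finset.insert_subset_insert _ hJ, ?_, ?_⟩
      · intro k hk
        rcases Finset.mem_insert.1 hk with rfl | hk
        · have : B k ∩ ⋃ j ∈ insert k J, B j = B k := by
            apply inter_eq_left.2
            rw [Finset.set_biUnion_insert]
            exact subset_union_left
          rw [this, two_mul]
          exact le_self_add
        · refine (h1 k hk).trans ?_
          gcongr 2 * μ (_ ∩ ?_)
          exact biUnion_subset_biUnion_left (Finset.subset_insert i J)
      · intro g a hga
        rw [Finset.sum_insert hiJ, hUU, lintegral_union ((hB i).diff hUm) disjoint_sdiff_right, mul_add,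
          add_comm]
        apply add_le_add
        · exact h2 g a fun j hj => hga j (Finset.mem_insert_of_mem hj)
        · calc a i * μ (B i) ≤ a i * (2 * μ (B i \ ⋃ j ∈ J, B j)) := by gcongr
            _ = 2 * ∫⁻ x in B i \ ⋃ j ∈ J, B j, a i ∂μ := by
              rw [lintegral_const, Measure.restrict_apply_univ]; ring
            _ ≤ _ := by
              gcongr 2 * ?_
              apply setLIntegral_mono' ((hB i).diff hUm)
              intro x hx
              exact hga i (Finset.mem_insert_self _ _) x hx.1

/-! ### One-dimensional maximal function -/

/-- Hardy-Littlewood maximal function (over rational intervals) of the indicator of `E` -/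
def mx (E : Set ℝ) (x : ℝ) : ℝ≥0∞ :=
  ⨆ (p : ℚ × ℚ), ⨆ (_ : (p.1 : ℝ) < x ∧ x < (p.2 : ℝ)),
    volume (E ∩ Ioo (p.1 : ℝ) p.2) / ENNReal.ofReal ((p.2 : ℝ) - p.1)

lemma mx_le_one (E : Set ℝ) (x : ℝ) : mx E x ≤ 1 := by
  refine iSup_le fun p => iSup_le fun hp => ?_
  apply ENNReal.div_le_of_le_mul
  rw [one_mul, ← Real.volume_Ioo]
  exact measure_mono inter_subset_right

lemma le_mx (E : Set ℝ) (x a L : ℝ) (hx1 : a - L < x) (hx2 : x < a + L) :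
    volume (E ∩ Ioo (a - L) (a + L)) ≤ ENNReal.ofReal (4 * L) * mx E x := by
  have hL : 0 < L := by linarith
  obtain ⟨p, hp1, hp2⟩ := exists_rat_btwn (show a - 2 * L < a - L by linarith)
  obtain ⟨q, hq1, hq2⟩ := exists_rat_btwn (show a + L < a + 2 * L by linarith)
  have hpq : 0 < (q : ℝ) - p := by linarith
  have h1 : volume (E ∩ Ioo (p : ℝ) q) / ENNReal.ofReal ((q : ℝ) - p) ≤ mx E x :=
    le_iSup_of_le (p, q) (le_iSup_of_le ⟨by simpa using hp2.trans hx1, by simpa using hx2.trans hq1⟩ le_rfl)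
  calc volume (E ∩ Ioo (a - L) (a + L)) ≤ volume (E ∩ Ioo (p : ℝ) q) := by
        apply measure_mono
        exact inter_subset_inter_right _ (Ioo_subset_Ioo hp2.le hq1.le)
    _ ≤ mx E x * ENNReal.ofReal ((q : ℝ) - p) := by
        rwa [ENNReal.div_le_iff_le_mul (Or.inl (by simpa using hpq)) (Or.inl (by simp))] at h1
    _ ≤ mx E x * ENNReal.ofReal (4 * L) := by
        gcongr
        linarith
    _ = _ := mul_comm _ _

lemma mx_weak (E : Set ℝ) (s : ℝ) (hs : 0 < s) :
    volume {x | ENNReal.ofReal s < mx E x} ≤ ENNReal.ofReal (5 / s) * volume E := by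
  by_cases hE : volume E = ∞
  · rw [hE, ENNReal.mul_top]
    · exact le_top
    · simpa using by positivity
  let t : Set (ℚ × ℚ) := {p | (p.1 : ℝ) < p.2 ∧
    ENNReal.ofReal s * ENNReal.ofReal ((p.2 : ℝ) - p.1) ≤ volume (E ∩ Ioo (p.1 : ℝ) p.2)}
  let c : ℚ × ℚ → ℝ := fun p => ((p.1 : ℝ) + p.2) / 2
  let r : ℚ × ℚ → ℝ := fun p => ((p.2 : ℝ) - p.1) / 2
  have hball : ∀ p, ball (c p) (r p) = Ioo (p.1 : ℝ) p.2 := by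
    intro p
    rw [Real.ball_eq_Ioo]
    simp only [c, r]
    congr 1 <;> ring
  have hv : ∀ p ∈ t, ENNReal.ofReal s * volume (ball (c p) (r p)) ≤
      (volume.restrict E) (ball (c p) (r p)) := by
    intro p hp
    rw [Measure.restrict_apply measurableSet_ball, hball, Real.volume_Ioo, inter_comm]
    exact hp.2
  obtain ⟨u, hut, huc, hud, hle⟩ := vitali_gen volume t c r ((volume E).toReal / s)
    (by
      intro p hp
      have h1 : 0 < (p.2 : ℝ) - p.1 := sub_pos.2 hp.1
      have h2 := hp.2.trans (measure_mono inter_subset_left)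
      rw [← ENNReal.ofReal_mul hs.le] at h2
      have h3 : s * ((p.2 : ℝ) - p.1) ≤ (volume E).toReal :=
        (ENNReal.ofReal_le_iff_le_toReal hE).1 h2
      rw [le_div_iff₀ hs]
      simp only [r]
      nlinarith)
    (by
      intro p hp
      have h1 : 0 < (p.2 : ℝ) - p.1 := sub_pos.2 hp.1
      simp only [r]
      positivity) (ENNReal.ofReal 5)
    (by
      intro p hp
      have h1 : 0 < (p.2 : ℝ) - p.1 := sub_pos.2 hp.1
      rw [Real.volume_closedBall, Real.volume_ball, ← ENNReal.ofReal_mul (by norm_num)]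
      apply le_of_eq
      congr 1
      ring)
  calc volume {x | ENNReal.ofReal s < mx E x} ≤ volume (⋃ p ∈ t, ball (c p) (r p)) := by
        apply measure_mono
        intro x hx
        have hx' : ENNReal.ofReal s < mx E x := hx
        obtain ⟨p, hp⟩ := lt_iSup_iff.1 hx'
        obtain ⟨hpx, hp⟩ := lt_iSup_iff.1 hp
        have h1 : 0 < (p.2 : ℝ) - p.1 := by linarith [hpx.1, hpx.2]
        refine mem_biUnion (x := p) ⟨by linarith, ?_⟩ (by rw [hball]; exact hpx)
        rw [ENNReal.lt_div_iff_mul_lt (Or.inl (by simpa using h1)) (Or.inl (by simp))] at hp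
        exact hp.le
    _ ≤ ENNReal.ofReal 5 * volume (⋃ p ∈ u, ball (c p) (r p)) := hle
    _ ≤ ENNReal.ofReal 5 * (ENNReal.ofReal (1 / s) * volume E) := by
        gcongr
        have h4 : ENNReal.ofReal s * volume (⋃ p ∈ u, ball (c p) (r p)) ≤ volume E := by
          rw [measure_biUnion huc hud (fun _ _ => measurableSet_ball), ← ENNReal.tsum_mul_left]
          calc _ ≤ ∑' p : u, (volume.restrict E) (ball (c p) (r p)) :=
                ENNReal.tsum_le_tsum fun p => hv p (hut p.2)
            _ = (volume.restrict E) (⋃ p ∈ u, ball (c p) (r p)) := by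
                rw [measure_biUnion huc hud (fun _ _ => measurableSet_ball)]
            _ ≤ volume E := by
                rw [← Measure.restrict_apply_univ E]
                exact measure_mono (subset_univ _)
        calc volume (⋃ p ∈ u, ball (c p) (r p))
            = ENNReal.ofReal (1 / s) * (ENNReal.ofReal s * volume (⋃ p ∈ u, ball (c p) (r p))) := by
              rw [← mul_assoc, ← ENNReal.ofReal_mul (by positivity)]
              rw [one_div, inv_mul_cancel₀ hs.ne', ENNReal.ofReal_one, one_mul]
          _ ≤ _ := by gcongr
    _ = _ := by
        rw [← mul_assoc, ← ENNReal.ofReal_mul (by norm_num)]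
        congr 2
        ring

lemma measurable_mx2 (F : Set (ℝ × ℝ)) (hF : MeasurableSet F) :
    Measurable (fun q : ℝ × ℝ => mx {u | (u, q.2) ∈ F} q.1) := by
  unfold mx
  apply Measurable.iSup
  intro p
  simp_rw [iSup_eq_if]
  refine Measurable.ite ?_ ?_ measurable_const
  · exact (measurableSet_lt measurable_const measurable_fst).inter
      (measurableSet_lt measurable_fst measurable_const)
  · apply Measurable.div_const
    have h := measurable_measure_prodMk_right (μ := (volume : Measure ℝ))
      (hF.inter ((measurableSet_Ioo (a := (p.1 : ℝ)) (b := p.2)).prod (MeasurableSet.univ (α := ℝ))))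
    have e : (fun q : ℝ × ℝ => volume ({u | (u, q.2) ∈ F} ∩ Ioo (p.1 : ℝ) p.2)) =
      (fun y => volume ((fun x => (x, y)) ⁻¹' (F ∩ Ioo (p.1 : ℝ) p.2 ×ˢ univ))) ∘ Prod.snd := by
      ext q
      simp only [Function.comp]
      congr 1
      ext u
      simp
    rw [e]
    exact h.comp measurable_snd

lemma lint_a : ∫⁻ t in Ioc (0 : ℝ) 1, ENNReal.ofReal (t ^ (-(2 / 3) : ℝ)) ≤ ENNReal.ofReal 3 := by
  have h : IntervalIntegrable (fun t : ℝ => t ^ (-(2 / 3) : ℝ)) volume 0 1 :=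
    intervalIntegral.intervalIntegrable_rpow' (by norm_num)
  rw [← ofReal_integral_eq_lintegral_ofReal]
  · apply ENNReal.ofReal_le_ofReal
    rw [← intervalIntegral.integral_of_le zero_le_one, integral_rpow (Or.inl (by norm_num))]
    norm_num
  · exact (intervalIntegrable_iff_integrableOn_Ioc_of_le zero_le_one).1 h
  · filter_upwards [ae_restrict_mem measurableSet_Ioc] with t ht
    exact Real.rpow_nonneg ht.1.le _

lemma lint_b (V : ℝ) (hV : 0 < V) :
    ∫⁻ t in Ioi V, ENNReal.ofReal (t ^ (-(3 / 2) : ℝ)) ≤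
      ENNReal.ofReal (2 * V ^ (-(1 / 2) : ℝ)) := by
  rw [← ofReal_integral_eq_lintegral_ofReal]
  · apply ENNReal.ofReal_le_ofReal
    rw [integral_Ioi_rpow_of_lt (by norm_num) hV]
    norm_num
    ring_nf
    norm_num
  · exact integrableOn_Ioi_rpow_of_lt (by norm_num) hV
  · filter_upwards [ae_restrict_mem measurableSet_Ioi] with t ht
    exact Real.rpow_nonneg (hV.trans ht).le _

lemma mx_strong (E : Set ℝ) (hm : Measurable (mx E)) :
    ∫⁻ x, mx E x ^ (4 / 3 : ℝ) ≤ 20 * volume E := by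
  have hne : ∀ x, mx E x ≠ ∞ := fun x => ne_top_of_le_ne_top one_ne_top (mx_le_one E x)
  have h := lintegral_rpow_eq_lintegral_meas_lt_mul (volume : Measure ℝ)
    (f := fun x => (mx E x).toReal) (Eventually.of_forall fun x => ENNReal.toReal_nonneg)
    hm.ennreal_toReal.aemeasurable (p := 4 / 3) (by norm_num)
  have e : ∀ x, mx E x ^ (4 / 3 : ℝ) = ENNReal.ofReal ((mx E x).toReal ^ (4 / 3 : ℝ)) := by
    intro x
    rw [← ENNReal.ofReal_rpow_of_nonneg ENNReal.toReal_nonneg (by norm_num),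
      ENNReal.ofReal_toReal (hne x)]
  simp_rw [e]
  rw [h]
  have key : ∫⁻ t in Ioi (0 : ℝ), volume {a | t < (mx E a).toReal} *
      ENNReal.ofReal (t ^ ((4 / 3 : ℝ) - 1)) ≤ 15 * volume E := by
    calc _ ≤ ∫⁻ t in Ioi (0 : ℝ), (Ioc (0 : ℝ) 1).indicator
          (fun t => 5 * volume E * ENNReal.ofReal (t ^ (-(2 / 3) : ℝ))) t := by
          apply setLIntegral_mono' measurableSet_Ioi
          intro t ht
          have ht : 0 < t := ht
          by_cases h1 : t ≤ 1
          · rw [indicator_of_mem (show t ∈ Ioc (0 : ℝ) 1 from ⟨ht, h1⟩)]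
            have : {a | t < (mx E a).toReal} = {a | ENNReal.ofReal t < mx E a} := by
              ext a
              exact (ENNReal.ofReal_lt_iff_lt_toReal ht.le (hne a)).symm
            rw [this]
            calc _ ≤ ENNReal.ofReal (5 / t) * volume E * ENNReal.ofReal (t ^ ((4 / 3 : ℝ) - 1)) := by
                  gcongr
                  exact mx_weak E t ht
              _ = volume E * (ENNReal.ofReal (5 / t) * ENNReal.ofReal (t ^ ((4 / 3 : ℝ) - 1))) := by
                  ring
              _ = volume E * (ENNReal.ofReal 5 * ENNReal.ofReal (t ^ (-(2 / 3) : ℝ))) := by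
                  rw [← ENNReal.ofReal_mul (by positivity), ← ENNReal.ofReal_mul (by positivity)]
                  congr 2
                  rw [div_mul_eq_mul_div, mul_div_assoc]
                  congr 1
                  rw [← Real.rpow_sub_one ht.ne']
                  norm_num
              _ = _ := by
                  rw [ENNReal.ofReal_ofNat]
                  ring
              _ ≤ _ := le_rfl
          · have : {a | t < (mx E a).toReal} = ∅ := by
              ext a
              simp only [mem_ofPred_eq, mem_empty_iff_false, iff_false, not_lt]
              have := ENNReal.toReal_mono one_ne_top (mx_le_one E a)
              simp at this
              linarith
            rw [this]
            simp
      _ ≤ ∫⁻ t, (Ioc (0 : ℝ) 1).indicator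
          (fun t => 5 * volume E * ENNReal.ofReal (t ^ (-(2 / 3) : ℝ))) t :=
          setLIntegral_le_lintegral _ _
      _ = 5 * volume E * ∫⁻ t in Ioc (0 : ℝ) 1, ENNReal.ofReal (t ^ (-(2 / 3) : ℝ)) := by
          rw [lintegral_indicator measurableSet_Ioc, lintegral_const_mul]
          exact (measurable_id.pow_const _).ennreal_ofReal
      _ ≤ 5 * volume E * ENNReal.ofReal 3 := by
          gcongr
          exact lint_a
      _ = _ := by
          rw [ENNReal.ofReal_ofNat, mul_right_comm]
          norm_num
  calc _ ≤ ENNReal.ofReal (4 / 3) * (15 * volume E) := by gcongr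
    _ = 20 * volume E := by
      rw [← mul_assoc]
      congr 1
      have : (15 : ℝ≥0∞) = ENNReal.ofReal 15 := by simp
      rw [this, ← ENNReal.ofReal_mul (by norm_num)]
      norm_num

/-! ### The bathtub lemma -/

lemma real_young (v n κ : ℝ) (hv : 0 < v) (hn : 0 ≤ n) (hκ : 0 < κ) :
    v ^ (-(3 / 2) : ℝ) * n ≤ κ * (1 / v ^ 2 * n ^ (4 / 3 : ℝ)) + 1 / κ ^ 3 := by
  set s := v ^ (-(1 / 2) : ℝ) * n ^ (1 / 3 : ℝ) with hs
  have hs0 : 0 ≤ s := by positivity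
  have h3 : v ^ (-(3 / 2) : ℝ) * n = s ^ 3 := by
    rw [hs, mul_pow, ← Real.rpow_natCast, ← Real.rpow_natCast, ← Real.rpow_mul hv.le,
      ← Real.rpow_mul hn]
    norm_num
  have h4 : 1 / v ^ 2 * n ^ (4 / 3 : ℝ) = s ^ 4 := by
    rw [hs, mul_pow, ← Real.rpow_natCast (v ^ (-(1 / 2) : ℝ)), ← Real.rpow_natCast (n ^ (1 / 3 : ℝ)),
      ← Real.rpow_mul hv.le, ← Real.rpow_mul hn]
    norm_num
  rw [h3, h4]
  by_cases h : 1 ≤ κ * s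
  · have : 0 ≤ 1 / κ ^ 3 := by positivity
    nlinarith [pow_nonneg hs0 3, mul_nonneg (pow_nonneg hs0 3) (sub_nonneg.2 h)]
  · push Not at h
    have h5 : s ≤ 1 / κ := by
      rw [le_div_iff₀ hκ]
      linarith
    have h6 : s ^ 3 ≤ (1 / κ) ^ 3 := by gcongr
    have : 0 ≤ κ * s ^ 4 := by positivity
    rw [div_pow, one_pow] at h6
    linarith

lemma bathtub_aux (m : ℝ → ℝ≥0∞) (hm : Measurable m) (h1 : ∀ v, m v ≤ 1) (κ : ℝ) (hκ : 0 < κ) :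
    ∫⁻ v in Ioi (0 : ℝ), ENNReal.ofReal (v ^ (-(3 / 2) : ℝ)) * m v ≤
      ENNReal.ofReal (3 / κ) + ENNReal.ofReal κ *
        ∫⁻ v in Ioi (0 : ℝ), ENNReal.ofReal (1 / v ^ 2) * m v ^ (4 / 3 : ℝ) := by
  have hV : 0 < κ ^ 2 := by positivity
  have hA : Measurable (fun v : ℝ => ENNReal.ofReal (1 / v ^ 2) * m v ^ (4 / 3 : ℝ)) :=
    ((measurable_id.pow_const 2).const_div 1).ennreal_ofReal.mul (hm.pow_const _)
  rw [← Ioc_union_Ioi_eq_Ioi hV.le, lintegral_union measurableSet_Ioi (Ioc_disjoint_Ioi le_rfl)]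
  have p1 : ∫⁻ v in Ioc 0 (κ ^ 2), ENNReal.ofReal (v ^ (-(3 / 2) : ℝ)) * m v ≤
      ENNReal.ofReal κ * (∫⁻ v in Ioc 0 (κ ^ 2) ∪ Ioi (κ ^ 2), ENNReal.ofReal (1 / v ^ 2) * m v ^ (4 / 3 : ℝ)) +
        ENNReal.ofReal (1 / κ) := by
    calc _ ≤ ∫⁻ v in Ioc 0 (κ ^ 2), (ENNReal.ofReal κ * (ENNReal.ofReal (1 / v ^ 2) * m v ^ (4 / 3 : ℝ)) +
            ENNReal.ofReal (1 / κ ^ 3)) := by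
          apply setLIntegral_mono' measurableSet_Ioc
          intro v hv
          have hv0 : 0 < v := hv.1
          have hmt : m v ≠ ∞ := ne_top_of_le_ne_top one_ne_top (h1 v)
          rw [← ENNReal.ofReal_toReal hmt, ENNReal.ofReal_rpow_of_nonneg ENNReal.toReal_nonneg (by norm_num),
            ← ENNReal.ofReal_mul (by positivity), ← ENNReal.ofReal_mul (by positivity),
            ← ENNReal.ofReal_mul (by positivity), ← ENNReal.ofReal_add (by positivity) (by positivity)]
          exact ENNReal.ofReal_le_ofReal (real_young v _ κ hv0 ENNReal.toReal_nonneg hκ)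
      _ = ENNReal.ofReal κ * (∫⁻ v in Ioc 0 (κ ^ 2), ENNReal.ofReal (1 / v ^ 2) * m v ^ (4 / 3 : ℝ)) +
          ENNReal.ofReal (1 / κ) := by
          rw [lintegral_add_right _ measurable_const, lintegral_const_mul _ hA, lintegral_const,
            Measure.restrict_apply_univ, Real.volume_Ioc, ← ENNReal.ofReal_mul (by positivity)]
          congr 2
          field_simp
          simp
      _ ≤ _ := by
          gcongr
          exact subset_union_left
  have p2 : ∫⁻ v in Ioi (κ ^ 2), ENNReal.ofReal (v ^ (-(3 / 2) : ℝ)) * m v ≤ ENNReal.ofReal (2 / κ) := by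
    calc _ ≤ ∫⁻ v in Ioi (κ ^ 2), ENNReal.ofReal (v ^ (-(3 / 2) : ℝ)) := by
          apply lintegral_mono
          intro v
          exact mul_le_of_le_one_right zero_le (h1 v)
      _ ≤ _ := lint_b _ hV
      _ = _ := by
          congr 1
          rw [← Real.rpow_natCast, ← Real.rpow_mul hκ.le]
          norm_num
          rw [Real.rpow_neg_one]
          rfl
  refine (add_le_add p1 p2).trans (le_of_eq ?_)
  rw [add_assoc, ← ENNReal.ofReal_add (by positivity) (by positivity), add_comm]
  congr 2
  ring

lemma bathtub (m : ℝ → ℝ≥0∞) (hm : Measurable m) (h1 : ∀ v, m v ≤ 1) :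
    ∫⁻ v in Ioi (0 : ℝ), ENNReal.ofReal (v ^ (-(3 / 2) : ℝ)) * m v ≤
      4 * (∫⁻ v in Ioi (0 : ℝ), ENNReal.ofReal (1 / v ^ 2) * m v ^ (4 / 3 : ℝ)) ^ (1 / 2 : ℝ) := by
  have h := bathtub_aux m hm h1
  set G := ∫⁻ v in Ioi (0 : ℝ), ENNReal.ofReal (v ^ (-(3 / 2) : ℝ)) * m v
  set A := ∫⁻ v in Ioi (0 : ℝ), ENNReal.ofReal (1 / v ^ 2) * m v ^ (4 / 3 : ℝ)
  by_cases hA : A = ∞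
  · rw [hA]
    simp
  by_cases hA0 : A = 0
  · rw [hA0] at h ⊢
    simp only [mul_zero, add_zero] at h
    have : G ≤ 0 := by
      apply ENNReal.le_of_forall_pos_le_add
      intro ε hε _
      have := h (3 / ε) (by positivity)
      refine this.trans (le_of_eq ?_)
      have hε' : (ε : ℝ) ≠ 0 := by positivity
      rw [zero_add, show (3 : ℝ) / (3 / ε) = ε by field_simp]
      simp
    exact this.trans zero_le
  · have ha : 0 < A.toReal := ENNReal.toReal_pos hA0 hA
    have hs : 0 < √A.toReal := Real.sqrt_pos.2 ha
    have := h (1 / √A.toReal) (by positivity)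
    refine this.trans (le_of_eq ?_)
    clear_value A
    obtain ⟨a, ha0, rfl⟩ : ∃ a : ℝ, 0 ≤ a ∧ A = ENNReal.ofReal a :=
      ⟨A.toReal, ha.le, (ENNReal.ofReal_toReal hA).symm⟩
    rw [ENNReal.toReal_ofReal ha0] at *
    rw [ENNReal.ofReal_rpow_of_nonneg ha.le (by norm_num), ← ENNReal.ofReal_mul (by positivity),
      ← ENNReal.ofReal_add (by positivity) (by positivity), ← Real.sqrt_eq_rpow]
    have : (4 : ℝ≥0∞) = ENNReal.ofReal 4 := by simp
    rw [this, ← ENNReal.ofReal_mul (by norm_num)]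
    congr 1
    field_simp
    rw [Real.sq_sqrt ha.le]
    ring

/-! ### Geometry of large balls -/

lemma mem_ball_iff_coord (w c : UpperHalfPlane) (r : ℝ) (hr : 0 ≤ r) :
    w ∈ ball c r ↔ (w.re - c.re) ^ 2 + w.im ^ 2 + c.im ^ 2 < 2 * w.im * c.im * Real.cosh r := by
  have h1 := w.im_pos
  have h2 := c.im_pos
  rw [mem_ball, ← abs_of_nonneg (dist_nonneg (x := w) (y := c))]
  nth_rewrite 1 [← abs_of_nonneg hr]
  rw [← Real.cosh_lt_cosh, UpperHalfPlane.cosh_dist', div_lt_iff₀ (by positivity), mul_comm]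

lemma cosh_ge (r : ℝ) (hr : 1 ≤ r) : 3 / 2 ≤ Real.cosh r := by
  have h1 : r / 2 ≤ Real.sinh (r / 2) := Real.self_le_sinh_iff.2 (by linarith)
  have h2 := Real.cosh_two_mul (r / 2)
  have h3 := Real.cosh_sq (r / 2)
  rw [show 2 * (r / 2) = r by ring] at h2
  nlinarith

lemma large_ball_lower (c : UpperHalfPlane) (r : ℝ) (hr : 1 ≤ r) :
    ENNReal.ofReal (Real.cosh r / 4) ≤ hypMeasure (ball c r) := by
  have hC := cosh_ge r hr
  set C := Real.cosh r with hCdef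
  have hC0 : 0 < C := by linarith
  have hy := c.im_pos
  set y := c.im with hydef
  have ha : 0 < 3 / 2 * y / C := by positivity
  rw [hyp_apply_iter _ measurableSet_ball]
  calc ENNReal.ofReal (C / 4)
      = ∫⁻ v in Ioo (3 / 2 * y / C) (2 * y / C), ENNReal.ofReal (C ^ 2 / (4 * y ^ 2) * (2 * y)) := by
        rw [lintegral_const, Measure.restrict_apply_univ, Real.volume_Ioo,
          ← ENNReal.ofReal_mul (by positivity)]
        congr 1
        field_simp
        norm_num
    _ ≤ ∫⁻ v in Ioo (3 / 2 * y / C) (2 * y / C),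
          ENNReal.ofReal (1 / v ^ 2) * volume {u : ℝ | hE (u, v) ∈ ball c r} := by
        apply setLIntegral_mono' measurableSet_Ioo
        intro v hv
        have hv0 : 0 < v := ha.trans hv.1
        have h1 : 3 / 2 * y < v * C := by
          have := hv.1
          rwa [div_lt_iff₀ hC0] at this
        have h2 : v * C < 2 * y := by
          have := hv.2
          rwa [lt_div_iff₀ hC0] at this
        rw [ENNReal.ofReal_mul (by positivity)]
        refine mul_le_mul' (ENNReal.ofReal_le_ofReal ?_) ?_
        · rw [div_le_div_iff₀ (by positivity) (by positivity)]
          nlinarith [mul_pos hv0 hC0]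
        · have : ENNReal.ofReal (2 * y) = volume (Ioo (c.re - y) (c.re + y)) := by
            rw [Real.volume_Ioo]
            congr 1
            ring
          rw [this]
          apply measure_mono
          intro u hu
          show hE (u, v) ∈ ball c r
          rw [mem_ball_iff_coord _ _ _ (by linarith), hE_re, hE_im (show 0 < (u, v).2 from hv0)]
          simp only
          rw [← hydef, ← hCdef]
          have h3 : (u - c.re) ^ 2 < y ^ 2 := by
            apply sq_lt_sq'
            · linarith [hu.1]
            · linarith [hu.2]
          have h4 : 2 * y ^ 2 + v ^ 2 ≤ 2 * v * y * C := by
            -- k = v * C / y in (3/2, 2), C^2 ≥ 9/4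
            have h5 : v ^ 2 * (9 / 4) ≤ (v * C) ^ 2 := by
              rw [mul_pow]
              gcongr
              nlinarith
            nlinarith
          linarith
    _ ≤ _ := by
        apply lintegral_mono_set
        intro v hv
        exact ha.trans hv.1

/-- the density function on the boundary -/
def bd (F : Set UpperHalfPlane) (x : ℝ) : ℝ≥0∞ :=
  ∫⁻ v in Ioi (0 : ℝ), ENNReal.ofReal (1 / v ^ 2) * mx {u | hE (u, v) ∈ F} x ^ (4 / 3 : ℝ)

lemma measurable_mxF (F : Set UpperHalfPlane) (hF : MeasurableSet F) :
    Measurable (fun q : ℝ × ℝ => mx {u | hE (u, q.2) ∈ F} q.1) :=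
  measurable_mx2 (hE ⁻¹' F) (measurable_hE hF)

lemma measurable_bd_integrand (F : Set UpperHalfPlane) (hF : MeasurableSet F) :
    Measurable (fun q : ℝ × ℝ =>
      ENNReal.ofReal (1 / q.2 ^ 2) * mx {u | hE (u, q.2) ∈ F} q.1 ^ (4 / 3 : ℝ)) :=
  dens_measurable.mul ((measurable_mxF F hF).pow_const _)

lemma measurable_bd (F : Set UpperHalfPlane) (hF : MeasurableSet F) : Measurable (bd F) :=
  (measurable_bd_integrand F hF).lintegral_prod_right'

lemma lintegral_bd (F : Set UpperHalfPlane) (hF : MeasurableSet F) :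
    ∫⁻ x, bd F x ≤ 20 * hypMeasure F := by
  unfold bd
  rw [lintegral_lintegral_swap (measurable_bd_integrand F hF).aemeasurable, hyp_apply_iter F hF]
  have hm : ∀ v : ℝ, Measurable (fun x => mx {u | hE (u, v) ∈ F} x) := fun v =>
    (measurable_mxF F hF).comp (f := fun x : ℝ => (x, v)) (by fun_prop)
  have h2 : Measurable (fun v : ℝ => ENNReal.ofReal (1 / v ^ 2) * volume {u : ℝ | hE (u, v) ∈ F}) := by
    apply Measurable.mul
    · exact ((measurable_id.pow_const 2).const_div 1).ennreal_ofReal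
    · exact measurable_measure_prodMk_right (measurable_hE hF)
  rw [← lintegral_const_mul _ h2]
  apply lintegral_mono
  intro v
  simp only
  rw [lintegral_const_mul _ ((hm v).pow_const _)]
  calc _ ≤ ENNReal.ofReal (1 / v ^ 2) * (20 * volume {u | hE (u, v) ∈ F}) := by
        gcongr
        exact mx_strong _ (hm v)
    _ = _ := by ring

/-- the majorant of the maximal function -/
def mj (F : Set UpperHalfPlane) (z : UpperHalfPlane) : ℝ≥0∞ :=
  ENNReal.ofReal (128 * √z.im) * bd F z.re ^ (1 / 2 : ℝ)

lemma measurable_mj (F : Set UpperHalfPlane) (hF : MeasurableSet F) : Measurable (mj F) :=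
  (measurable_him.sqrt.const_mul 128).ennreal_ofReal.mul
    (((measurable_bd F hF).comp measurable_hre).pow_const _)

lemma slice_bound (F : Set UpperHalfPlane) (c : UpperHalfPlane) (r : ℝ)
    (hr : 1 ≤ r) (z : UpperHalfPlane) (hz : z ∈ ball c r) (v : ℝ) (hv : 0 < v) :
    volume {u : ℝ | hE (u, v) ∈ ball c r ∩ F} ≤
      ENNReal.ofReal (8 * Real.cosh r * √(v * z.im)) * mx {u | hE (u, v) ∈ F} z.re := by
  have hr0 : 0 ≤ r := by linarith
  rcases Set.eq_empty_or_nonempty {u : ℝ | hE (u, v) ∈ ball c r ∩ F} with he | ⟨u₀, hu₀⟩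
  · rw [he]
    simp
  have hC := cosh_ge r hr
  have hy0 := c.im_pos
  have hy := z.im_pos
  have hcoord : ∀ u : ℝ, hE (u, v) ∈ ball c r →
      (u - c.re) ^ 2 + v ^ 2 + c.im ^ 2 < 2 * v * c.im * Real.cosh r := by
    intro u hu
    rw [mem_ball_iff_coord _ _ _ hr0, hE_re, hE_im (show 0 < (u, v).2 from hv)] at hu
    exact hu
  have hz' := (mem_ball_iff_coord _ _ _ hr0).1 hz
  have h0 := hcoord u₀ hu₀.1
  set C := Real.cosh r
  have hC0 : 0 < C := by linarith
  -- heights are bounded below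
  have hb1 : c.im < 2 * v * C := by
    have : c.im * c.im < (2 * v * C) * c.im := by nlinarith [sq_nonneg (u₀ - c.re), sq_nonneg v]
    exact lt_of_mul_lt_mul_right this hy0.le
  have hb2 : c.im < 2 * z.im * C := by
    have : c.im * c.im < (2 * z.im * C) * c.im := by
      nlinarith [sq_nonneg (z.re - c.re), sq_nonneg z.im]
    exact lt_of_mul_lt_mul_right this hy0.le
  set L := √(2 * c.im * C * max v z.im) with hL
  have hS : 0 < 2 * c.im * C := by positivity
  have hin : ∀ a h : ℝ, 0 < h → h ≤ max v z.im →
      (a - c.re) ^ 2 + h ^ 2 + c.im ^ 2 < 2 * h * c.im * C → c.re - L < a ∧ a < c.re + L := by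
    intro a h hh hm hlt
    have h1 : (a - c.re) ^ 2 < 2 * c.im * C * max v z.im := by
      have : 2 * c.im * C * h ≤ 2 * c.im * C * max v z.im := by gcongr
      nlinarith [sq_nonneg h, sq_nonneg c.im]
    have h2 : |a - c.re| < L := Real.lt_sqrt (abs_nonneg _) |>.2 (by rwa [sq_abs])
    rw [abs_lt] at h2
    constructor <;> linarith [h2.1, h2.2]
  have hzx := hin z.re z.im hy (le_max_right _ _) hz'
  have hLle : 4 * L ≤ 8 * C * √(v * z.im) := by
    have h1 : L ≤ √((2 * C) ^ 2 * (v * z.im)) := by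
      apply Real.sqrt_le_sqrt
      rcases le_total v z.im with h | h
      · rw [max_eq_right h]
        have : c.im * (2 * C * z.im) ≤ 2 * v * C * (2 * C * z.im) := by gcongr
        nlinarith
      · rw [max_eq_left h]
        have : c.im * (2 * C * v) ≤ 2 * z.im * C * (2 * C * v) := by gcongr
        nlinarith
    rw [Real.sqrt_mul (by positivity), Real.sqrt_sq (by positivity)] at h1
    linarith
  calc volume {u : ℝ | hE (u, v) ∈ ball c r ∩ F}
      ≤ volume ({u | hE (u, v) ∈ F} ∩ Ioo (c.re - L) (c.re + L)) := by
        apply measure_mono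
        intro u hu
        exact ⟨hu.2, hin u v hv (le_max_left _ _) (hcoord u hu.1)⟩
    _ ≤ ENNReal.ofReal (4 * L) * mx {u | hE (u, v) ∈ F} z.re := le_mx _ _ _ _ hzx.1 hzx.2
    _ ≤ _ := by gcongr

lemma mj_ball (F : Set UpperHalfPlane) (hF : MeasurableSet F) (c : UpperHalfPlane) (r : ℝ)
    (hr : 1 ≤ r) (z : UpperHalfPlane) (hz : z ∈ ball c r) :
    hypMeasure (ball c r ∩ F) ≤ mj F z * hypMeasure (ball c r) := by
  have hy := z.im_pos
  have hC := cosh_ge r hr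
  have hm : Measurable (fun v => mx {u | hE (u, v) ∈ F} z.re) :=
    (measurable_mxF F hF).comp (f := fun v : ℝ => (z.re, v)) (by fun_prop)
  have hC0 : 0 < Real.cosh r := by linarith
  calc hypMeasure (ball c r ∩ F)
      = ∫⁻ v in Ioi (0 : ℝ), ENNReal.ofReal (1 / v ^ 2) *
          volume {u : ℝ | hE (u, v) ∈ ball c r ∩ F} :=
        hyp_apply_iter _ (measurableSet_ball.inter hF)
    _ ≤ ∫⁻ v in Ioi (0 : ℝ), ENNReal.ofReal (8 * Real.cosh r * √z.im) *
          (ENNReal.ofReal (v ^ (-(3 / 2) : ℝ)) * mx {u | hE (u, v) ∈ F} z.re) := by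
        apply setLIntegral_mono' measurableSet_Ioi
        intro v hv
        have hv : 0 < v := hv
        calc _ ≤ ENNReal.ofReal (1 / v ^ 2) *
              (ENNReal.ofReal (8 * Real.cosh r * √(v * z.im)) * mx {u | hE (u, v) ∈ F} z.re) := by
              gcongr
              exact slice_bound F c r hr z hz v hv
          _ = _ := by
              rw [← mul_assoc, ← mul_assoc, ← ENNReal.ofReal_mul (by positivity),
                ← ENNReal.ofReal_mul (by positivity)]
              congr 2
              rw [Real.sqrt_mul hv.le]
              have : v ^ (-(3 / 2) : ℝ) = 1 / v ^ 2 * √v := by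
                rw [Real.sqrt_eq_rpow, one_div, ← Real.rpow_natCast, ← Real.rpow_neg hv.le,
                  ← Real.rpow_add hv]
                norm_num
              rw [this]
              ring
    _ = ENNReal.ofReal (8 * Real.cosh r * √z.im) *
          ∫⁻ v in Ioi (0 : ℝ), ENNReal.ofReal (v ^ (-(3 / 2) : ℝ)) * mx {u | hE (u, v) ∈ F} z.re := by
        rw [lintegral_const_mul]
        exact (measurable_id.pow_const _).ennreal_ofReal.mul hm
    _ ≤ ENNReal.ofReal (8 * Real.cosh r * √z.im) * (4 * bd F z.re ^ (1 / 2 : ℝ)) := by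
        gcongr
        exact bathtub _ hm (fun v => mx_le_one _ _)
    _ = mj F z * ENNReal.ofReal (Real.cosh r / 4) := by
        unfold mj
        have : (4 : ℝ≥0∞) = ENNReal.ofReal 4 := by simp
        rw [this, ← mul_assoc, ← ENNReal.ofReal_mul (by positivity),
          mul_right_comm (ENNReal.ofReal (128 * √z.im)),
          ← ENNReal.ofReal_mul (by positivity)]
        congr 2
        ring
    _ ≤ _ := by
        gcongr
        exact large_ball_lower c r hr

lemma mj_inner (a s : ℝ) (ha : 0 < a) (hs : 0 < s) :
    ∫⁻ y in Ioi (0 : ℝ), ENNReal.ofReal (1 / y ^ 2) *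
      (if s < 128 * √y * √a then ENNReal.ofReal (128 * √y * √a) else 0) ≤
      ENNReal.ofReal (32768 / s * a) := by
  set Y := (s / (128 * √a)) ^ 2 with hY
  have hsa : 0 < √a := Real.sqrt_pos.2 ha
  have hY0 : 0 < Y := by positivity
  calc _ ≤ ∫⁻ y in Ioi (0 : ℝ), (Ioi Y).indicator
        (fun y => ENNReal.ofReal (128 * √a) * ENNReal.ofReal (y ^ (-(3 / 2) : ℝ))) y := by
        apply setLIntegral_mono' measurableSet_Ioi
        intro y hy
        have hy : 0 < y := hy
        split_ifs with h
        · have hyY : y ∈ Ioi Y := by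
            show Y < y
            rw [hY]
            have : s / (128 * √a) < √y := by
              rw [div_lt_iff₀ (by positivity)]
              linarith
            exact (Real.lt_sqrt (by positivity)).1 this
          rw [indicator_of_mem hyY, ← ENNReal.ofReal_mul (by positivity),
            ← ENNReal.ofReal_mul (by positivity)]
          apply le_of_eq
          congr 1
          have : y ^ (-(3 / 2) : ℝ) = 1 / y ^ 2 * √y := by
            rw [Real.sqrt_eq_rpow, one_div, ← Real.rpow_natCast, ← Real.rpow_neg hy.le,
              ← Real.rpow_add hy]
            norm_num
          rw [this]
          ring
        · simp
    _ ≤ ∫⁻ y, (Ioi Y).indicator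
        (fun y => ENNReal.ofReal (128 * √a) * ENNReal.ofReal (y ^ (-(3 / 2) : ℝ))) y :=
        setLIntegral_le_lintegral _ _
    _ = ENNReal.ofReal (128 * √a) * ∫⁻ y in Ioi Y, ENNReal.ofReal (y ^ (-(3 / 2) : ℝ)) := by
        rw [lintegral_indicator measurableSet_Ioi, lintegral_const_mul]
        exact (measurable_id.pow_const _).ennreal_ofReal
    _ ≤ ENNReal.ofReal (128 * √a) * ENNReal.ofReal (2 * Y ^ (-(1 / 2) : ℝ)) := by
        gcongr
        exact lint_b Y hY0
    _ = _ := by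
        rw [← ENNReal.ofReal_mul (by positivity)]
        congr 1
        have : Y ^ (-(1 / 2) : ℝ) = 128 * √a / s := by
          rw [Real.rpow_neg hY0.le, ← Real.sqrt_eq_rpow, hY, Real.sqrt_sq (by positivity), inv_div]
        rw [this]
        have h2 := Real.mul_self_sqrt ha.le
        field_simp
        rw [Real.sq_sqrt ha.le]
        ring

lemma mj_weak (F : Set UpperHalfPlane) (hF : MeasurableSet F) (W : Set UpperHalfPlane)
    (s : ℝ) (hs : 0 < s) :
    ∫⁻ z in W, mj F z ∂hypMeasure ≤
      ENNReal.ofReal s * hypMeasure W + ENNReal.ofReal (655360 / s) * hypMeasure F := by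
  have hg := measurable_mj F hF
  let h : UpperHalfPlane → ℝ≥0∞ := fun z => if ENNReal.ofReal s < mj F z then mj F z else 0
  have hh : Measurable h := Measurable.ite (measurableSet_lt measurable_const hg) hg measurable_const
  calc ∫⁻ z in W, mj F z ∂hypMeasure ≤ ∫⁻ z in W, (ENNReal.ofReal s + h z) ∂hypMeasure := by
        apply lintegral_mono
        intro z
        simp only [h]
        split_ifs with h1
        · exact le_add_self
        · rw [add_zero]
          exact not_lt.1 h1
    _ = ENNReal.ofReal s * hypMeasure W + ∫⁻ z in W, h z ∂hypMeasure := by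
        rw [lintegral_add_left measurable_const, lintegral_const, Measure.restrict_apply_univ]
    _ ≤ ENNReal.ofReal s * hypMeasure W + ∫⁻ z, h z ∂hypMeasure := by
        gcongr
        exact Measure.restrict_le_self
    _ ≤ ENNReal.ofReal s * hypMeasure W + ∫⁻ x, ENNReal.ofReal (32768 / s) * bd F x := by
        gcongr
        rw [hyp_lintegral_iter h hh]
        apply lintegral_mono
        intro x
        by_cases htop : bd F x = ∞
        · simp only
          rw [htop, ENNReal.mul_top]
          · exact le_top
          · simpa using by positivity
        by_cases h0 : bd F x = 0
        · simp only
          apply le_of_eq_of_le _ zero_le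
          apply lintegral_eq_zero_of_ae_eq_zero
          apply Eventually.of_forall
          intro y
          simp [h, mj, hE_re, h0]
        · obtain ⟨a, ha0, ha⟩ : ∃ a : ℝ, 0 < a ∧ bd F x = ENNReal.ofReal a :=
            ⟨_, ENNReal.toReal_pos h0 htop, (ENNReal.ofReal_toReal htop).symm⟩
          simp only
          rw [ha, ← ENNReal.ofReal_mul (by positivity)]
          refine le_trans (le_of_eq ?_) (mj_inner a s ha0 hs)
          apply setLIntegral_congr_fun measurableSet_Ioi
          intro y hy
          have hy : 0 < y := hy
          have e : mj F (hE (x, y)) = ENNReal.ofReal (128 * √y * √a) := by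
            unfold mj
            rw [hE_re, hE_im (show 0 < (x, y).2 from hy), ha,
              ENNReal.ofReal_rpow_of_nonneg ha0.le (by norm_num),
              ← ENNReal.ofReal_mul (by positivity), ← Real.sqrt_eq_rpow]
          have hpos : 0 < 128 * √y * √a := by
            have := Real.sqrt_pos.2 hy
            have := Real.sqrt_pos.2 ha0
            positivity
          simp only [h, e, ENNReal.ofReal_lt_ofReal_iff hpos]
    _ = ENNReal.ofReal s * hypMeasure W + ENNReal.ofReal (32768 / s) * ∫⁻ x, bd F x := by
        rw [lintegral_const_mul _ (measurable_bd F hF)]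
    _ ≤ ENNReal.ofReal s * hypMeasure W + ENNReal.ofReal (32768 / s) * (20 * hypMeasure F) := by
        gcongr
        exact lintegral_bd F hF
    _ = _ := by
        rw [← mul_assoc]
        congr 2
        have : (20 : ℝ≥0∞) = ENNReal.ofReal 20 := by simp
        rw [this, ← ENNReal.ofReal_mul (by positivity)]
        congr 1
        ring

/-! ### Final assembly -/

lemma large_lemma {ι : Type*} (c : ι → UpperHalfPlane) (r : ι → ℝ) (J₀ : Finset ι)
    (hr : ∀ i ∈ J₀, 1 ≤ r i) :
    ∃ J ⊆ J₀,
      hypMeasure (⋃ i ∈ J₀, ball (c i) (r i)) ≤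
        10485760 * hypMeasure (⋃ j ∈ J, ball (c j) (r j)) ∧
      ∀ t : ℝ, 0 < t → ENNReal.ofReal (t ^ 2) * hypMeasure {z | ENNReal.ofReal t <
        ∑ j ∈ J, (ball (c j) (r j)).indicator (fun _ => (1 : ℝ≥0∞)) z} ≤
          10485760 * hypMeasure (⋃ j ∈ J, ball (c j) (r j)) := by
  obtain ⟨J, hJ, h1, h2⟩ := selection hypMeasure (fun i => ball (c i) (r i))
    (fun i => measurableSet_ball) (fun i => (hyp_ball_lt_top _ _).ne) J₀
  have hfin : ∀ S : Finset ι, hypMeasure (⋃ i ∈ S, ball (c i) (r i)) ≠ ∞ := fun S =>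
    ((measure_biUnion_lt_top S.finite_toSet (fun i _ => hyp_ball_lt_top _ _))).ne
  have hpos : ∀ i ∈ J₀, hypMeasure (ball (c i) (r i)) ≠ 0 := by
    intro i hi h
    have h3 := large_ball_lower (c i) (r i) (hr i hi)
    rw [h, nonpos_iff_eq_zero, ENNReal.ofReal_eq_zero] at h3
    linarith [cosh_ge (r i) (hr i hi)]
  have hUm : MeasurableSet (⋃ j ∈ J, ball (c j) (r j)) :=
    Finset.measurableSet_biUnion J (fun i _ => measurableSet_ball)
  have hWm : MeasurableSet (⋃ j ∈ J₀, ball (c j) (r j)) :=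
    Finset.measurableSet_biUnion J₀ (fun i _ => measurableSet_ball)
  refine ⟨J, hJ, ?_, ?_⟩
  · set U := ⋃ j ∈ J, ball (c j) (r j) with hU
    set W := ⋃ j ∈ J₀, ball (c j) (r j) with hW
    have hge : ∀ z ∈ W, 1 ≤ 2 * mj U z := by
      intro z hz
      obtain ⟨i, hi, hzi⟩ := mem_iUnion₂.1 hz
      have h3 := (h1 i hi).trans (mul_le_mul_right (mj_ball U hUm (c i) (r i) (hr i hi) z hzi) 2)
      rw [← mul_assoc] at h3
      nth_rewrite 1 [← one_mul (hypMeasure (ball (c i) (r i)))] at h3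
      exact (ENNReal.mul_le_mul_iff_left (hpos i hi) (hyp_ball_lt_top _ _).ne).1 h3
    have h4 : hypMeasure W ≤ 2 * ∫⁻ z in W, mj U z ∂hypMeasure := by
      rw [← lintegral_const_mul _ (measurable_mj U hUm), ← setLIntegral_one]
      exact setLIntegral_mono' hWm hge
    have h5 := h4.trans (mul_le_mul_right (mj_weak U hUm W (1 / 4) (by norm_num)) 2)
    have hWf : hypMeasure W ≠ ∞ := hfin J₀
    have hUf : hypMeasure U ≠ ∞ := hfin J
    lift hypMeasure W to ℝ≥0 using hWf with w
    lift hypMeasure U to ℝ≥0 using hUf with u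
    have h6 : w ≤ 2 * (Real.toNNReal (1 / 4) * w + Real.toNNReal (655360 / (1 / 4)) * u) := by
      simp only [ENNReal.ofReal] at h5
      exact_mod_cast h5
    have h7 : (w : ℝ) ≤ 2 * (1 / 4 * w + (655360 / (1 / 4)) * u) := by
      have := NNReal.coe_le_coe.2 h6
      push_cast at this
      rw [Real.coe_toNNReal _ (by norm_num), Real.coe_toNNReal _ (by norm_num)] at this
      exact this
    have h8 : w ≤ 10485760 * u := by
      rw [← NNReal.coe_le_coe]
      push_cast
      linarith
    exact_mod_cast h8
  · intro t ht
    set U := ⋃ j ∈ J, ball (c j) (r j) with hU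
    set N : UpperHalfPlane → ℝ≥0∞ :=
      fun z => ∑ j ∈ J, (ball (c j) (r j)).indicator (fun _ => (1 : ℝ≥0∞)) z with hN
    have hNm : Measurable N := Finset.measurable_fun_sum J
      (fun j _ => measurable_const.indicator measurableSet_ball)
    show ENNReal.ofReal (t ^ 2) * hypMeasure {z | ENNReal.ofReal t < N z} ≤ _
    set F := {z | ENNReal.ofReal t < N z} with hF
    have hFm : MeasurableSet F := measurableSet_lt measurable_const hNm
    have hFU : F ⊆ U := by
      intro z hz
      by_contra hzU
      have : N z = 0 := by
        apply Finset.sum_eq_zero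
        intro j hj
        apply indicator_of_notMem
        intro h
        exact hzU (mem_iUnion₂.2 ⟨j, hj, h⟩)
      rw [hF, mem_ofPred_eq, this] at hz
      exact _root_.not_lt_zero hz
    have h3 : ENNReal.ofReal t * hypMeasure F ≤ ∑ j ∈ J, hypMeasure (ball (c j) (r j) ∩ F) := by
      calc ENNReal.ofReal t * hypMeasure F = ∫⁻ z in F, ENNReal.ofReal t ∂hypMeasure := by
            rw [setLIntegral_const]
        _ ≤ ∫⁻ z in F, N z ∂hypMeasure := setLIntegral_mono' hFm (fun z hz => le_of_lt hz)
        _ = ∑ j ∈ J, ∫⁻ z in F, (ball (c j) (r j)).indicator (fun _ => (1 : ℝ≥0∞)) z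
              ∂hypMeasure := by
            rw [hN, lintegral_finsetSum]
            exact fun j _ => measurable_const.indicator measurableSet_ball
        _ = _ := by
            apply Finset.sum_congr rfl
            intro j _
            rw [lintegral_indicator_const measurableSet_ball, one_mul,
              Measure.restrict_apply measurableSet_ball]
    have h4 := h2 (mj F) (fun j => hypMeasure (ball (c j) (r j) ∩ F) / hypMeasure (ball (c j) (r j)))
      (fun j hj z hz => by
        apply ENNReal.div_le_of_le_mul
        exact mj_ball F hFm (c j) (r j) (hr j (hJ hj)) z hz)
    have h5 : ∑ j ∈ J, hypMeasure (ball (c j) (r j) ∩ F) / hypMeasure (ball (c j) (r j)) *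
        hypMeasure (ball (c j) (r j)) = ∑ j ∈ J, hypMeasure (ball (c j) (r j) ∩ F) := by
      apply Finset.sum_congr rfl
      intro j hj
      exact ENNReal.div_mul_cancel (hpos j (hJ hj)) (hyp_ball_lt_top _ _).ne
    rw [h5] at h4
    have h6 := (h3.trans h4).trans (mul_le_mul_right (mj_weak F hFm U (4 * 655360 / t) (by positivity)) 2)
    have hUf : hypMeasure U ≠ ∞ := hfin J
    have hFf : hypMeasure F ≠ ∞ := ((measure_mono hFU).trans_lt hUf.lt_top).ne
    generalize hypMeasure F = mF at *
    generalize hypMeasure U = mU at *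
    lift mF to ℝ≥0 using hFf
    lift mU to ℝ≥0 using hUf
    have h7 : Real.toNNReal t * mF ≤ 2 * (Real.toNNReal (4 * 655360 / t) * mU +
        Real.toNNReal (655360 / (4 * 655360 / t)) * mF) := by
      simp only [ENNReal.ofReal] at h6
      exact_mod_cast h6
    have h8 : t * mF ≤ 2 * ((4 * 655360 / t) * mU + (655360 / (4 * 655360 / t)) * mF) := by
      have := NNReal.coe_le_coe.2 h7
      push_cast at this
      rw [Real.coe_toNNReal _ ht.le, Real.coe_toNNReal _ (by positivity),
        Real.coe_toNNReal _ (by positivity)] at this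
      exact this
    have h9 : Real.toNNReal (t ^ 2) * mF ≤ 10485760 * mU := by
      rw [← NNReal.coe_le_coe]
      push_cast
      rw [Real.coe_toNNReal _ (by positivity)]
      have e1 : 655360 / (4 * 655360 / t) = t / 4 := by field_simp
      rw [e1] at h8
      have h10 : t * mF / 2 ≤ 8 * 655360 / t * mU := by
        have : 2 * (4 * 655360 / t * (mU : ℝ)) = 8 * 655360 / t * mU := by ring
        linarith
      have h11 := mul_le_mul_of_nonneg_left h10 (show 0 ≤ 2 * t by positivity)
      have e2 : 2 * t * (8 * 655360 / t * (mU : ℝ)) = 10485760 * mU := by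
        field_simp
        ring
      nlinarith
    simp only [ENNReal.ofReal]
    exact_mod_cast h9

lemma lorentz_of_sq {α : Type*} [MeasurableSpace α] (μ : Measure α) (f : α → ℝ≥0∞) (A : ℝ≥0)
    (hA : 1 ≤ A) (M : ℝ≥0∞)
    (h : ∀ t : ℝ, 0 < t → ENNReal.ofReal (t ^ 2) * μ {x | ENNReal.ofReal t < f x} ≤ A * M) :
    lorentz2inf μ f ≤ A * M ^ (1 / 2 : ℝ) := by
  unfold lorentz2inf
  refine iSup₂_le fun t ht => ?_
  have h1 := ENNReal.rpow_le_rpow (h t ht) (show (0 : ℝ) ≤ 1 / 2 by norm_num)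
  rw [ENNReal.mul_rpow_of_nonneg _ _ (by norm_num), ENNReal.mul_rpow_of_nonneg _ _ (by norm_num),
    ENNReal.ofReal_rpow_of_nonneg (by positivity) (by norm_num), ← Real.sqrt_eq_rpow,
    Real.sqrt_sq ht.le] at h1
  refine h1.trans ?_
  gcongr
  calc (A : ℝ≥0∞) ^ (1 / 2 : ℝ) ≤ (A : ℝ≥0∞) ^ (1 : ℝ) :=
        ENNReal.rpow_le_rpow_of_exponent_le (by exact_mod_cast hA) (by norm_num)
    _ = A := ENNReal.rpow_one _

lemma disjoint_sq {α ι : Type*} [MeasurableSpace α] (μ : Measure α) (B : ι → Set α)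
    (J : Finset ι) (hd : (J : Set ι).PairwiseDisjoint B) (t : ℝ) (ht : 0 < t) :
    ENNReal.ofReal (t ^ 2) * μ {x | ENNReal.ofReal t <
      ∑ j ∈ J, (B j).indicator (fun _ => (1 : ℝ≥0∞)) x} ≤ μ (⋃ j ∈ J, B j) := by
  classical
  have key : ∀ x, ENNReal.ofReal t < ∑ j ∈ J, (B j).indicator (fun _ => (1 : ℝ≥0∞)) x →
      x ∈ (⋃ j ∈ J, B j) ∧ t < 1 := by
    intro x hx
    by_cases hxU : x ∈ ⋃ j ∈ J, B j
    · refine ⟨hxU, ?_⟩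
      obtain ⟨j, hj, hxj⟩ := mem_iUnion₂.1 hxU
      rw [Finset.sum_eq_single_of_mem j hj, indicator_of_mem hxj] at hx
      · rw [← ENNReal.ofReal_one] at hx
        exact (ENNReal.ofReal_lt_ofReal_iff one_pos).1 hx
      · intro k hk hkj
        apply indicator_of_notMem
        intro hxk
        exact (Set.disjoint_left.1 (hd hk hj hkj)) hxk hxj
    · exfalso
      rw [Finset.sum_eq_zero] at hx
      · exact _root_.not_lt_zero hx
      · intro j hj
        apply indicator_of_notMem
        intro h
        exact hxU (mem_iUnion₂.2 ⟨j, hj, h⟩)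
  by_cases ht1 : t < 1
  · calc _ ≤ 1 * μ (⋃ j ∈ J, B j) := by
          apply mul_le_mul'
          · rw [← ENNReal.ofReal_one]
            apply ENNReal.ofReal_le_ofReal
            nlinarith
          · exact measure_mono fun x hx => (key x hx).1
      _ = _ := one_mul _
  · have : {x | ENNReal.ofReal t <
      ∑ j ∈ J, (B j).indicator (fun _ => (1 : ℝ≥0∞)) x} = ∅ := by
      ext x
      simp only [mem_ofPred_eq, mem_empty_iff_false, iff_false]
      exact fun hx => ht1 (key x hx).2
    rw [this]
    simp

lemma covering_aux :
    ∃ C : ℝ≥0, ∀ (I : Type*) (c : I → UpperHalfPlane) (r : I → ℝ), (∀ i, 0 < r i) →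
      hypMeasure (⋃ i, Metric.ball (c i) (r i)) < ∞ →
      ∃ J : Finset I,
        hypMeasure (⋃ i, Metric.ball (c i) (r i)) ≤
          C * hypMeasure (⋃ j ∈ J, Metric.ball (c j) (r j)) ∧
        lorentz2inf hypMeasure
            (fun z => ∑ j ∈ J, (Metric.ball (c j) (r j)).indicator (fun _ => (1 : ℝ≥0∞)) z) ≤
          C * hypMeasure (⋃ i, Metric.ball (c i) (r i)) ^ (1 / 2 : ℝ) := by
  obtain ⟨K, hK⟩ := small_doubling
  refine ⟨1 + 4 * K + 41943040, ?_⟩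
  intro I c r hr hfin
  set A := ⋃ i, ball (c i) (r i) with hA
  have hsubF : ∀ J : Finset I, (⋃ j ∈ J, ball (c j) (r j)) ⊆ A := fun J =>
    iUnion₂_subset_iUnion _ _
  have hsubS : ∀ J : Set I, (⋃ j ∈ J, ball (c j) (r j)) ⊆ A := fun J =>
    iUnion₂_subset_iUnion _ _
  have hsplit : hypMeasure A ≤ 2 * hypMeasure (⋃ i ∈ {i | r i ≤ 1}, ball (c i) (r i)) ∨
      hypMeasure A ≤ 2 * hypMeasure (⋃ i ∈ {i | 1 < r i}, ball (c i) (r i)) := by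
    have h1 : hypMeasure A ≤ hypMeasure (⋃ i ∈ {i | r i ≤ 1}, ball (c i) (r i)) +
        hypMeasure (⋃ i ∈ {i | 1 < r i}, ball (c i) (r i)) := by
      refine (measure_mono ?_).trans (measure_union_le _ _)
      apply iUnion_subset
      intro i
      rcases le_or_gt (r i) 1 with h | h
      · exact subset_union_of_subset_left
          (subset_biUnion_of_mem (u := fun i => ball (c i) (r i)) h) _
      · exact subset_union_of_subset_right
          (subset_biUnion_of_mem (u := fun i => ball (c i) (r i)) h) _
    rcases le_total (hypMeasure (⋃ i ∈ {i | r i ≤ 1}, ball (c i) (r i)))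
      (hypMeasure (⋃ i ∈ {i | 1 < r i}, ball (c i) (r i))) with h | h
    · right
      rw [two_mul]
      exact h1.trans (add_le_add_left h _)
    · left
      rw [two_mul]
      exact h1.trans (add_le_add_right h _)
  rcases hsplit with h | h
  · obtain ⟨u, hu, huc, hud, hum⟩ := vitali_gen hypMeasure {i | r i ≤ 1} c r 1
      (fun _ h => h) (fun i _ => hr i) K (fun i hi => hK _ _ (hr i) hi)
    obtain ⟨J, hJ, hJm⟩ := finite_approx hypMeasure u huc (fun i => ball (c i) (r i))
      ((measure_mono (hsubS u)).trans_lt hfin).ne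
    refine ⟨J, ?_, ?_⟩
    · calc hypMeasure A ≤ 2 * (K * (2 * hypMeasure (⋃ j ∈ J, ball (c j) (r j)))) := by
            refine h.trans (mul_le_mul_right (hum.trans (mul_le_mul_right hJm _)) _)
        _ = ((4 * K : ℝ≥0) : ℝ≥0∞) * hypMeasure (⋃ j ∈ J, ball (c j) (r j)) := by
            push_cast
            ring
        _ ≤ _ := by
            apply mul_le_mul_left
            rw [ENNReal.coe_le_coe]
            calc 4 * K ≤ 1 + 4 * K := le_add_self
              _ ≤ _ := le_self_add
    · refine lorentz_of_sq hypMeasure _ _ ?_ _ ?_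
      · rw [add_assoc]
        exact le_self_add
      · intro t ht
        refine (disjoint_sq hypMeasure (fun i => ball (c i) (r i)) J (hud.subset hJ) t ht).trans ?_
        refine (measure_mono (hsubF J)).trans ?_
        apply le_mul_of_one_le_left zero_le
        rw [ENNReal.one_le_coe_iff, add_assoc]
        exact le_self_add
  · obtain ⟨T, hT, hTc, hTU⟩ := TopologicalSpace.isOpen_biUnion_countable {i | 1 < r i}
      (fun i => ball (c i) (r i)) (fun _ _ => isOpen_ball)
    obtain ⟨J₀, hJ₀, hJm⟩ := finite_approx hypMeasure T hTc (fun i => ball (c i) (r i))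
      ((measure_mono (hsubS T)).trans_lt hfin).ne
    obtain ⟨J, hJ, h1, h2⟩ := large_lemma c r J₀ (fun i hi => le_of_lt (hT (hJ₀ hi)))
    refine ⟨J, ?_, ?_⟩
    · rw [← hTU] at h
      calc hypMeasure A ≤ 2 * (2 * (10485760 * hypMeasure (⋃ j ∈ J, ball (c j) (r j)))) := by
            refine h.trans (mul_le_mul_right (hJm.trans (mul_le_mul_right h1 _)) _)
        _ = ((41943040 : ℝ≥0) : ℝ≥0∞) * hypMeasure (⋃ j ∈ J, ball (c j) (r j)) := by
            rw [← mul_assoc, ← mul_assoc]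
            congr 1
            push_cast
            norm_num
        _ ≤ _ := by
            apply mul_le_mul_left
            rw [ENNReal.coe_le_coe]
            exact le_add_self
    · refine lorentz_of_sq hypMeasure _ _ ?_ _ ?_
      · rw [add_assoc]
        exact le_self_add
      · intro t ht
        refine (h2 t ht).trans ?_
        apply mul_le_mul' _ (measure_mono (hsubF J))
        have : ((10485760 : ℝ≥0) : ℝ≥0∞) ≤ ((1 + 4 * K + 41943040 : ℝ≥0) : ℝ≥0∞) := by
          rw [ENNReal.coe_le_coe]
          refine le_trans ?_ (le_add_self (a := (41943040 : ℝ≥0)))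
          norm_num
        exact_mod_cast this

end Helpers

/-- **Covering lemma on the hyperbolic plane.**  From any family of metric balls whose union
has finite measure one can select a finite subfamily covering a fixed proportion of the union
and whose overlap function has small `L^{2,∞}` norm. -/
theorem covering_lemma :
    ∃ C : ℝ≥0, ∀ (I : Type*) (c : I → UpperHalfPlane) (r : I → ℝ), (∀ i, 0 < r i) →
      hypMeasure (⋃ i, Metric.ball (c i) (r i)) < ∞ →
      ∃ J : Finset I,
        hypMeasure (⋃ i, Metric.ball (c i) (r i)) ≤
          C * hypMeasure (⋃ j ∈ J, Metric.ball (c j) (r j)) ∧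
        lorentz2inf hypMeasure
            (fun z => ∑ j ∈ J, (Metric.ball (c j) (r j)).indicator (fun _ => (1 : ℝ≥0∞)) z) ≤
          C * hypMeasure (⋃ i, Metric.ball (c i) (r i)) ^ (1 / 2 : ℝ) :=
  covering_aux

end
end

section
/- There exists a constant C = C(m₁, m₂) ≥ 1 such that for every s ∈ ℝ and every measurable function F : ℝ → [0,∞], C⁻¹ · J ≤ e^{ρ s} ∫_{ℝ^{m₁} × ℝ^{m₂}} F(T_s(v,w)) dv dw ≤ C · J, where J = ∫_{|s|}^∞ F(t) · ψ̃(t,s) dt. (This is the integration formula of Lemma 1 computing the kernel relating the Iwasawa and Cartan decompositions.) -/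
open MeasureTheory ENNReal NNReal

noncomputable section

/-- The kernel `ψ̃(t,s) = sinh t · (cosh t)^{m₂/2} · (cosh t − cosh s)^{(m₁+m₂−2)/2}`
(real powers; the factor `(cosh t)^{m₂/2}` is automatically `1` when `m₂ = 0`). -/
def psiT (m₁ m₂ : ℕ) (t s : ℝ) : ℝ :=
  Real.sinh t * Real.cosh t ^ ((m₂ : ℝ) / 2) *
    (Real.cosh t - Real.cosh s) ^ (((m₁ : ℝ) + (m₂ : ℝ) - 2) / 2)


lemma polar_sq (d : ℕ) (hd : 1 ≤ d) (l : ℝ) (hl : 0 < l) (g : ℝ → ℝ≥0∞) (hg : Measurable g) :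
    ENNReal.ofReal (l ^ ((d : ℝ) / 2)) * ∫⁻ x : EuclideanSpace ℝ (Fin d), g (l * ‖x‖ ^ 2) =
      ((volume : Measure (EuclideanSpace ℝ (Fin d))).toSphere Set.univ * 2⁻¹) *
        ∫⁻ u in Set.Ioi (0:ℝ), ENNReal.ofReal (u ^ ((d : ℝ) / 2 - 1)) * g u := by
  have : Nonempty (Fin d) := ⟨⟨0, hd⟩⟩
  set μ : Measure (EuclideanSpace ℝ (Fin d)) := volume with hμ
  have h1 : ∫⁻ x : EuclideanSpace ℝ (Fin d), g (l * ‖x‖ ^ 2) =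
      μ.toSphere Set.univ * ∫⁻ r in Set.Ioi (0:ℝ), ENNReal.ofReal (r ^ (d - 1)) * g (l * r ^ 2) := by
    have h := μ.measurePreserving_homeomorphUnitSphereProd.lintegral_comp_emb
      (Homeomorph.measurableEmbedding _)
      (fun x : Metric.sphere (0 : EuclideanSpace ℝ (Fin d)) 1 × Set.Ioi (0:ℝ) => g (l * (x.2 : ℝ) ^ 2))
    simp only [homeomorphUnitSphereProd_apply_snd_coe] at h
    rw [lintegral_subtype_comap (measurableSet_singleton _).compl
      (f := fun x : EuclideanSpace ℝ (Fin d) => g (l * ‖x‖ ^ 2)), restrict_compl_singleton] at h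
    rw [h, lintegral_prod _ (by fun_prop)]
    simp only
    rw [lintegral_const, mul_comm]
    congr 1
    have hd1 : Module.finrank ℝ (EuclideanSpace ℝ (Fin d)) - 1 = d - 1 := by simp
    rw [hd1, Measure.volumeIoiPow, lintegral_withDensity_eq_lintegral_mul _ (by fun_prop) (by fun_prop)]
    simp only [Pi.mul_apply]
    rw [lintegral_subtype_comap measurableSet_Ioi
      (f := fun r : ℝ => ENNReal.ofReal (r ^ (d - 1)) * g (l * r ^ 2))]
  have himg : (fun r : ℝ => l * r ^ 2) '' Set.Ioi 0 = Set.Ioi 0 := by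
    ext y
    constructor
    · rintro ⟨r, hr, rfl⟩
      have : 0 < r := hr
      show 0 < l * r ^ 2
      positivity
    · intro hy
      have hy : 0 < y := hy
      refine ⟨√(y / l), ?_, ?_⟩
      · show 0 < √(y / l)
        positivity
      · show l * √(y / l) ^ 2 = y
        rw [Real.sq_sqrt (by positivity)]; field_simp
  have h2 : ∫⁻ u in Set.Ioi (0:ℝ), ENNReal.ofReal (u ^ ((d : ℝ) / 2 - 1)) * g u =
      ∫⁻ r in Set.Ioi (0:ℝ), ENNReal.ofReal (2 * l ^ ((d : ℝ) / 2)) *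
        (ENNReal.ofReal (r ^ (d - 1)) * g (l * r ^ 2)) := by
    conv_lhs => rw [← himg]
    rw [lintegral_image_eq_lintegral_abs_deriv_mul (f := fun r : ℝ => l * r ^ 2)
      (f' := fun r => l * (2 * r)) measurableSet_Ioi]
    · apply setLIntegral_congr_fun measurableSet_Ioi
      intro r hr
      have hr : 0 < r := hr
      simp only
      rw [← mul_assoc, ← mul_assoc (ENNReal.ofReal (2 * _)), ← ENNReal.ofReal_mul (by positivity),
        ← ENNReal.ofReal_mul (by positivity)]
      congr 2
      rw [abs_of_pos (by positivity), Real.mul_rpow hl.le (by positivity), ← Real.rpow_natCast r 2,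
        ← Real.rpow_mul hr.le, ← Real.rpow_natCast r (d-1), Nat.cast_sub hd]
      have e1 : l ^ ((d:ℝ)/2) = l * l ^ ((d:ℝ)/2 - 1) := by
        conv_rhs => rw [← Real.rpow_one_add' hl.le (by ring_nf; positivity)]
        ring_nf
      have e2 : r ^ ((d:ℝ) - (1:ℕ)) = r * r ^ (((2:ℕ):ℝ) * ((d:ℝ)/2 - 1)) := by
        nth_rw 2 [← Real.rpow_one r]
        rw [← Real.rpow_add hr]
        push_cast
        ring_nf
      rw [e1, e2]
      ring
    · intro x hx
      have := ((hasDerivAt_pow 2 x).const_mul l).hasDerivWithinAt (s := Set.Ioi 0)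
      simpa using this
    · intro x hx y hy hxy
      have hx : 0 < x := hx
      have hy : 0 < y := hy
      have : x ^ 2 = y ^ 2 := mul_left_cancel₀ hl.ne' hxy
      exact (pow_left_inj₀ hx.le hy.le two_ne_zero).1 this
  rw [h1, h2, lintegral_const_mul _ (by fun_prop), ENNReal.ofReal_mul (by norm_num)]
  have : (2:ℝ≥0∞)⁻¹ * ENNReal.ofReal 2 = 1 := by
    rw [ENNReal.ofReal_ofNat]; exact ENNReal.inv_mul_cancel (by simp) (by simp)
  generalize (∫⁻ r in Set.Ioi (0:ℝ), ENNReal.ofReal (r ^ (d - 1)) * g (l * r ^ 2)) = I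
  generalize μ.toSphere Set.univ = S
  generalize ENNReal.ofReal (l ^ ((d : ℝ) / 2)) = L
  calc L * (S * I) = L * S * 1 * I := by ring
    _ = _ := by rw [← this]; ring

lemma polar_const_ne_zero (d : ℕ) (hd : 1 ≤ d) :
    ((volume : Measure (EuclideanSpace ℝ (Fin d))).toSphere Set.univ * 2⁻¹) ≠ 0 := by
  have : Nonempty (Fin d) := ⟨⟨0, hd⟩⟩
  refine mul_ne_zero ?_ (by simp)
  rw [Ne, Measure.measure_univ_eq_zero]
  exact Measure.toSphere_ne_zero _

lemma polar_const_ne_top (d : ℕ) :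
    ((volume : Measure (EuclideanSpace ℝ (Fin d))).toSphere Set.univ * 2⁻¹) ≠ ∞ :=
  ENNReal.mul_ne_top (measure_ne_top _ _) (by simp)

/-- Beta integral. -/
lemma beta_lint (α β L : ℝ) (hα : 0 < α) (hβ : 0 < β) (hL : 0 < L) :
    ∫⁻ u in Set.Ioo 0 L, ENNReal.ofReal (u ^ (α - 1) * (L - u) ^ (β - 1)) =
      ENNReal.ofReal (ProbabilityTheory.beta α β) * ENNReal.ofReal (L ^ (α + β - 1)) := by
  have hb := ProbabilityTheory.beta_pos hα hβ
  have h := ProbabilityTheory.lintegral_betaPDF_eq_one hα hβ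
  rw [ProbabilityTheory.lintegral_betaPDF] at h
  have himg : (fun y : ℝ => L * y) '' Set.Ioo 0 1 = Set.Ioo 0 L := by
    rw [Set.image_mul_left_Ioo hL]; simp
  rw [← himg, lintegral_image_eq_lintegral_abs_deriv_mul (f := fun r : ℝ => L * r)
      (f' := fun r => L) measurableSet_Ioo]
  · have : ∀ y ∈ Set.Ioo (0:ℝ) 1, ENNReal.ofReal |L| *
        ENNReal.ofReal ((L * y) ^ (α - 1) * (L - L * y) ^ (β - 1)) =
        (ENNReal.ofReal (ProbabilityTheory.beta α β) * ENNReal.ofReal (L ^ (α + β - 1))) *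
        ENNReal.ofReal (1 / ProbabilityTheory.beta α β * y ^ (α - 1) * (1 - y) ^ (β - 1)) := by
      rintro y ⟨hy0, hy1⟩
      have h1y : 0 < 1 - y := by linarith
      rw [← ENNReal.ofReal_mul (by positivity), ← ENNReal.ofReal_mul (by positivity),
        ← ENNReal.ofReal_mul (by positivity), abs_of_pos hL]
      congr 1
      rw [show L - L * y = L * (1 - y) by ring, Real.mul_rpow hL.le hy0.le,
        Real.mul_rpow hL.le h1y.le]
      have e : L ^ (α + β - 1) = L * L ^ (α - 1) * L ^ (β - 1) := by
        nth_rw 2 [← Real.rpow_one L]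
        rw [← Real.rpow_add hL, ← Real.rpow_add hL]
        ring_nf
      rw [e]
      field_simp
    rw [setLIntegral_congr_fun measurableSet_Ioo this, lintegral_const_mul _ (by fun_prop), h, mul_one]
  · intro x hx
    simpa using ((hasDerivAt_id x).const_mul L).hasDerivWithinAt
  · intro x _ y _ hxy
    exact mul_left_cancel₀ hL.ne' hxy

lemma rpow_two_bd (y b : ℝ) (h1 : 1 ≤ y) (h2 : y ≤ 2) :
    ((2:ℝ) ^ |b|)⁻¹ ≤ y ^ b ∧ y ^ b ≤ (2:ℝ) ^ |b| := by
  have hy : 0 < y := by linarith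
  have k1 : y ^ |b| ≤ 2 ^ |b| := Real.rpow_le_rpow hy.le h2 (abs_nonneg b)
  constructor
  · calc ((2:ℝ) ^ |b|)⁻¹ ≤ (y ^ |b|)⁻¹ := by gcongr
      _ = y ^ (-|b|) := (Real.rpow_neg hy.le _).symm
      _ ≤ y ^ b := Real.rpow_le_rpow_of_exponent_le h1 (neg_abs_le b)
  · exact (Real.rpow_le_rpow_of_exponent_le h1 (le_abs_self b)).trans k1

/-- The inner kernel estimate. -/
lemma kernel_bd (α β a c : ℝ) (hα : 0 < α) (hβ : 0 < β) (hc : 0 < c) (hac : c < a) :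
    ENNReal.ofReal (2 * (2 ^ |β - 1|)⁻¹ * ProbabilityTheory.beta α β) *
        ENNReal.ofReal (a ^ β * (a - c) ^ (α + β - 1)) ≤
      ∫⁻ u in Set.Ioo 0 (a - c), ENNReal.ofReal (u ^ (α - 1)) *
        ENNReal.ofReal (2 * a * (a ^ 2 - (c + u) ^ 2) ^ (β - 1)) ∧
    ∫⁻ u in Set.Ioo 0 (a - c), ENNReal.ofReal (u ^ (α - 1)) *
        ENNReal.ofReal (2 * a * (a ^ 2 - (c + u) ^ 2) ^ (β - 1)) ≤
      ENNReal.ofReal (2 * 2 ^ |β - 1| * ProbabilityTheory.beta α β) *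
        ENNReal.ofReal (a ^ β * (a - c) ^ (α + β - 1)) := by
  have ha : 0 < a := hc.trans hac
  have hL : 0 < a - c := by linarith
  have hb := ProbabilityTheory.beta_pos hα hβ
  have key : ∀ k : ℝ, 0 < k → ENNReal.ofReal (2 * k * ProbabilityTheory.beta α β) *
        ENNReal.ofReal (a ^ β * (a - c) ^ (α + β - 1)) =
      ∫⁻ u in Set.Ioo 0 (a - c), ENNReal.ofReal (2 * k * a ^ β) * 
        ENNReal.ofReal (u ^ (α - 1) * ((a - c) - u) ^ (β - 1)) := by
    intro k hk
    rw [lintegral_const_mul _ (by fun_prop), beta_lint α β _ hα hβ hL,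
      ← ENNReal.ofReal_mul (by positivity), ← ENNReal.ofReal_mul (by positivity),
      ← ENNReal.ofReal_mul (by positivity)]
    congr 1
    ring
  have pt : ∀ u ∈ Set.Ioo 0 (a - c), 2 * a * (a ^ 2 - (c + u) ^ 2) ^ (β - 1) =
      2 * ((a + c + u) / a) ^ (β - 1) * a ^ β * ((a - c) - u) ^ (β - 1) := by
    rintro u ⟨hu0, hu1⟩
    have h3 : 0 < a - c - u := by linarith
    rw [show a ^ 2 - (c + u) ^ 2 = a * ((a + c + u) / a) * (a - c - u) by field_simp; ring,
      Real.mul_rpow (by positivity) h3.le, Real.mul_rpow ha.le (by positivity)]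
    have e : a ^ β = a * a ^ (β - 1) := by
      conv_rhs => rw [← Real.rpow_one_add' ha.le (by ring_nf; positivity)]
      ring_nf
    rw [e]; ring
  have rng : ∀ u ∈ Set.Ioo 0 (a - c), 1 ≤ (a + c + u) / a ∧ (a + c + u) / a ≤ 2 := by
    rintro u ⟨hu0, hu1⟩
    rw [le_div_iff₀ ha, div_le_iff₀ ha]
    constructor <;> linarith
  rw [key _ (by positivity), key _ (by positivity)]
  constructor
  · apply setLIntegral_mono' measurableSet_Ioo
    intro u hu
    have h := (rpow_two_bd _ (β - 1) (rng u hu).1 (rng u hu).2).1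
    have hu0 := hu.1
    have h3 : 0 < a - c - u := by linarith [hu.2]
    rw [pt u hu, ← ENNReal.ofReal_mul (by positivity), ← ENNReal.ofReal_mul (by positivity)]
    apply ENNReal.ofReal_le_ofReal
    calc _ = (u ^ (α - 1) * 2 * a ^ β * (a - c - u) ^ (β - 1)) * (2 ^ |β - 1|)⁻¹ := by ring
      _ ≤ (u ^ (α - 1) * 2 * a ^ β * (a - c - u) ^ (β - 1)) * ((a + c + u) / a) ^ (β - 1) := by
        gcongr
      _ = _ := by ring
  · apply setLIntegral_mono' measurableSet_Ioo
    intro u hu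
    have h := (rpow_two_bd _ (β - 1) (rng u hu).1 (rng u hu).2).2
    have hu0 := hu.1
    have h3 : 0 < a - c - u := by linarith [hu.2]
    rw [pt u hu, ← ENNReal.ofReal_mul (by positivity), ← ENNReal.ofReal_mul (by positivity)]
    apply ENNReal.ofReal_le_ofReal
    calc _ = (u ^ (α - 1) * 2 * a ^ β * (a - c - u) ^ (β - 1)) * ((a + c + u) / a) ^ (β - 1) := by ring
      _ ≤ (u ^ (α - 1) * 2 * a ^ β * (a - c - u) ^ (β - 1)) * 2 ^ |β - 1| := by
        gcongr
      _ = _ := by ring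

/-- substitution `p = a² - b²` -/
lemma inner_sub (β b : ℝ) (hb : 0 < b) (G : ℝ → ℝ≥0∞) :
    ∫⁻ p in Set.Ioi (0:ℝ), ENNReal.ofReal (p ^ (β - 1)) * G (√(b ^ 2 + p)) =
      ∫⁻ a in Set.Ioi b, ENNReal.ofReal (2 * a * (a ^ 2 - b ^ 2) ^ (β - 1)) * G a := by
  have himg : (fun a : ℝ => a ^ 2 - b ^ 2) '' Set.Ioi b = Set.Ioi 0 := by
    ext y
    constructor
    · rintro ⟨a, ha, rfl⟩
      have : b < a := ha
      show 0 < a ^ 2 - b ^ 2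
      nlinarith
    · intro hy
      have hy : 0 < y := hy
      refine ⟨√(b ^ 2 + y), ?_, ?_⟩
      · show b < √(b ^ 2 + y)
        apply Real.lt_sqrt_of_sq_lt; linarith
      · show √(b ^ 2 + y) ^ 2 - b ^ 2 = y
        rw [Real.sq_sqrt (by positivity)]; ring
  rw [← himg, lintegral_image_eq_lintegral_abs_deriv_mul (f := fun a : ℝ => a ^ 2 - b ^ 2)
      (f' := fun a => 2 * a) measurableSet_Ioi]
  · apply setLIntegral_congr_fun measurableSet_Ioi
    intro a ha
    have ha : b < a := ha
    have ha0 : 0 < a := hb.trans ha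
    simp only
    rw [← mul_assoc, ← ENNReal.ofReal_mul (by positivity), abs_of_pos (by positivity)]
    congr 2
    rw [show b ^ 2 + (a ^ 2 - b ^ 2) = a ^ 2 by ring, Real.sqrt_sq ha0.le]
  · intro x hx
    simpa using ((hasDerivAt_pow 2 x).sub_const (b ^ 2)).hasDerivWithinAt (s := Set.Ioi b)
  · intro x hx y hy hxy
    have hx : b < x := hx
    have hy : b < y := hy
    have : x ^ 2 = y ^ 2 := by simpa using hxy
    exact (pow_left_inj₀ (hb.trans hx).le (hb.trans hy).le two_ne_zero).1 this

/-- Tonelli -/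
lemma double_eq (α β c : ℝ) (hc : 0 < c) (G : ℝ → ℝ≥0∞) (hG : Measurable G) :
    ∫⁻ u in Set.Ioi (0:ℝ), ENNReal.ofReal (u ^ (α - 1)) *
      ∫⁻ p in Set.Ioi (0:ℝ), ENNReal.ofReal (p ^ (β - 1)) * G (√((c + u) ^ 2 + p)) =
    ∫⁻ a in Set.Ioi c, G a * ∫⁻ u in Set.Ioo 0 (a - c), ENNReal.ofReal (u ^ (α - 1)) *
        ENNReal.ofReal (2 * a * (a ^ 2 - (c + u) ^ 2) ^ (β - 1)) := by
  set S : Set (ℝ × ℝ) := {q | 0 < q.1 ∧ c + q.1 < q.2} with hS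
  have hSm : MeasurableSet S :=
    (measurableSet_lt (f := fun _ : ℝ × ℝ => (0:ℝ)) (g := fun q : ℝ × ℝ => q.1)
      (by fun_prop) (by fun_prop)).inter
    (measurableSet_lt (f := fun q : ℝ × ℝ => c + q.1) (g := fun q : ℝ × ℝ => q.2)
      (by fun_prop) (by fun_prop))
  set H : ℝ × ℝ → ℝ≥0∞ := fun q => ENNReal.ofReal (q.1 ^ (α - 1)) *
    (ENNReal.ofReal (2 * q.2 * (q.2 ^ 2 - (c + q.1) ^ 2) ^ (β - 1)) * G q.2) with hH
  have hHm : Measurable H := by fun_prop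
  have hi : Measurable (S.indicator H) := hHm.indicator hSm
  have L : ∫⁻ u in Set.Ioi (0:ℝ), ENNReal.ofReal (u ^ (α - 1)) *
      ∫⁻ p in Set.Ioi (0:ℝ), ENNReal.ofReal (p ^ (β - 1)) * G (√((c + u) ^ 2 + p)) =
      ∫⁻ u, ∫⁻ a, S.indicator H (u, a) := by
    rw [← lintegral_indicator measurableSet_Ioi]
    congr 1
    ext u
    by_cases hu : 0 < u
    · rw [Set.indicator_of_mem (by exact hu), inner_sub β (c + u) (by linarith),
        ← lintegral_const_mul _ (by fun_prop), ← lintegral_indicator measurableSet_Ioi]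
      congr 1
      ext a
      by_cases ha : c + u < a
      · rw [Set.indicator_of_mem (by exact ha), Set.indicator_of_mem (by exact ⟨hu, ha⟩)]
      · rw [Set.indicator_of_notMem (by exact ha), Set.indicator_of_notMem (fun h => ha h.2)]
    · rw [Set.indicator_of_notMem (by exact hu)]
      symm
      rw [lintegral_eq_zero_iff (by fun_prop)]
      filter_upwards with a
      exact Set.indicator_of_notMem (fun h => hu h.1) _
  have R : ∫⁻ a in Set.Ioi c, G a * ∫⁻ u in Set.Ioo 0 (a - c), ENNReal.ofReal (u ^ (α - 1)) *
        ENNReal.ofReal (2 * a * (a ^ 2 - (c + u) ^ 2) ^ (β - 1)) =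
      ∫⁻ a, ∫⁻ u, S.indicator H (u, a) := by
    rw [← lintegral_indicator measurableSet_Ioi]
    congr 1
    ext a
    by_cases ha : c < a
    · rw [Set.indicator_of_mem (by exact ha),
        ← lintegral_const_mul _ (by fun_prop), ← lintegral_indicator measurableSet_Ioo]
      congr 1
      ext u
      by_cases hu : u ∈ Set.Ioo 0 (a - c)
      · rw [Set.indicator_of_mem hu, Set.indicator_of_mem (by exact ⟨hu.1, by linarith [hu.2]⟩)]
        simp only [hH]
        ring
      · rw [Set.indicator_of_notMem hu, Set.indicator_of_notMem]
        exact fun h => hu ⟨h.1, by linarith [h.2]⟩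
    · rw [Set.indicator_of_notMem (by exact ha)]
      symm
      rw [lintegral_eq_zero_iff (by fun_prop)]
      filter_upwards with u
      refine Set.indicator_of_notMem (fun h => ha ?_) _
      have := h.1
      have := h.2
      simp only at *
      linarith
  rw [L, R]
  exact lintegral_lintegral_swap hi.aemeasurable

lemma double_bd (α β c : ℝ) (hα : 0 < α) (hβ : 0 < β) (hc : 0 < c) (G : ℝ → ℝ≥0∞)
    (hG : Measurable G) :
    ENNReal.ofReal (2 * (2 ^ |β - 1|)⁻¹ * ProbabilityTheory.beta α β) *
        ∫⁻ a in Set.Ioi c, G a * ENNReal.ofReal (a ^ β * (a - c) ^ (α + β - 1)) ≤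
      ∫⁻ u in Set.Ioi (0:ℝ), ENNReal.ofReal (u ^ (α - 1)) *
      ∫⁻ p in Set.Ioi (0:ℝ), ENNReal.ofReal (p ^ (β - 1)) * G (√((c + u) ^ 2 + p)) ∧
    ∫⁻ u in Set.Ioi (0:ℝ), ENNReal.ofReal (u ^ (α - 1)) *
      ∫⁻ p in Set.Ioi (0:ℝ), ENNReal.ofReal (p ^ (β - 1)) * G (√((c + u) ^ 2 + p)) ≤
      ENNReal.ofReal (2 * 2 ^ |β - 1| * ProbabilityTheory.beta α β) *
        ∫⁻ a in Set.Ioi c, G a * ENNReal.ofReal (a ^ β * (a - c) ^ (α + β - 1)) := by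
  rw [double_eq α β c hc G hG, ← lintegral_const_mul _ (by fun_prop),
    ← lintegral_const_mul _ (by fun_prop)]
  constructor
  · apply setLIntegral_mono' measurableSet_Ioi
    intro a ha
    rw [mul_left_comm]
    gcongr
    exact (kernel_bd α β a c hα hβ hc ha).1
  · apply setLIntegral_mono' measurableSet_Ioi
    intro a ha
    rw [mul_left_comm (ENNReal.ofReal _) (G a)]
    gcongr
    exact (kernel_bd α β a c hα hβ hc ha).2

lemma cosh_sub (s : ℝ) (F k : ℝ → ℝ≥0∞) :
    ∫⁻ t in Set.Ioi |s|, F t * (ENNReal.ofReal (Real.sinh t) * k (Real.cosh t)) =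
      ∫⁻ a in Set.Ioi (Real.cosh s), F (Real.arcosh a) * k a := by
  have himg : Real.cosh '' Set.Ioi |s| = Set.Ioi (Real.cosh s) := by
    ext y
    constructor
    · rintro ⟨t, ht, rfl⟩
      have ht : |s| < t := ht
      show Real.cosh s < Real.cosh t
      rw [Real.cosh_lt_cosh]
      exact ht.trans_le (le_abs_self t)
    · intro hy
      have hy : Real.cosh s < y := hy
      have hy1 : 1 ≤ y := (Real.one_le_cosh s).trans hy.le
      refine ⟨Real.arcosh y, ?_, Real.cosh_arcosh hy1⟩
      show |s| < Real.arcosh y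
      rw [← Real.cosh_arcosh hy1, Real.cosh_lt_cosh, abs_of_nonneg (Real.arcosh_nonneg hy1)] at hy
      exact hy
  rw [← himg, lintegral_image_eq_lintegral_abs_deriv_mul (f := Real.cosh)
      (f' := Real.sinh) measurableSet_Ioi]
  · apply setLIntegral_congr_fun measurableSet_Ioi
    intro t ht
    have ht0 : 0 < t := (abs_nonneg s).trans_lt ht
    simp only
    rw [abs_of_pos (Real.sinh_pos_iff.2 ht0), Real.arcosh_cosh ht0.le]
    ring
  · intro x hx
    exact (Real.hasDerivAt_cosh x).hasDerivWithinAt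
  · intro x hx y hy hxy
    have hx : |s| < x := hx
    have hy : |s| < y := hy
    exact Real.cosh_injOn ((abs_nonneg s).trans hx.le) ((abs_nonneg s).trans hy.le) hxy

lemma measurable_arcosh' : Measurable Real.arcosh := by
  unfold Real.arcosh
  fun_prop

lemma psi_int (m₁ m₂ : ℕ) (s : ℝ) (F : ℝ → ℝ≥0∞) :
    ∫⁻ t in Set.Ioi |s|, F t * ENNReal.ofReal (psiT m₁ m₂ t s) =
      ∫⁻ a in Set.Ioi (Real.cosh s), F (Real.arcosh a) *
        ENNReal.ofReal (a ^ ((m₂ : ℝ) / 2) *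
          (a - Real.cosh s) ^ ((m₁ : ℝ) / 2 + (m₂ : ℝ) / 2 - 1)) := by
  rw [← cosh_sub s F (fun a => ENNReal.ofReal (a ^ ((m₂ : ℝ) / 2) *
          (a - Real.cosh s) ^ ((m₁ : ℝ) / 2 + (m₂ : ℝ) / 2 - 1)))]
  apply setLIntegral_congr_fun measurableSet_Ioi
  intro t ht
  have ht0 : 0 < t := (abs_nonneg s).trans_lt ht
  simp only
  rw [← ENNReal.ofReal_mul (Real.sinh_pos_iff.2 ht0).le, psiT, mul_assoc]
  congr 5
  ring

lemma integration_aux (m₁ m₂ : ℕ) (hm₁ : 1 ≤ m₁)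
    (T : ℝ → EuclideanSpace ℝ (Fin m₁) → EuclideanSpace ℝ (Fin m₂) → ℝ)
    (hT : ∀ (s : ℝ) (v : EuclideanSpace ℝ (Fin m₁)) (w : EuclideanSpace ℝ (Fin m₂)),
      |s| ≤ T s v w ∧
      Real.cosh (T s v w) ^ 2 =
        (Real.cosh s + Real.exp s * ‖v‖ ^ 2) ^ 2 + Real.exp (2 * s) * ‖w‖ ^ 2) :
    ∃ k₁ k₂ : ℝ≥0∞, k₁ ≠ 0 ∧ k₂ ≠ ∞ ∧ ∀ (s : ℝ) (F : ℝ → ℝ≥0∞), Measurable F →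
      (k₁ * (∫⁻ t in Set.Ioi |s|, F t * ENNReal.ofReal (psiT m₁ m₂ t s)) ≤
        ENNReal.ofReal (Real.exp (((m₁ : ℝ) + 2 * (m₂ : ℝ)) / 2 * s)) *
          ∫⁻ p : EuclideanSpace ℝ (Fin m₁) × EuclideanSpace ℝ (Fin m₂),
            F (T s p.1 p.2)) ∧
      (ENNReal.ofReal (Real.exp (((m₁ : ℝ) + 2 * (m₂ : ℝ)) / 2 * s)) *
          (∫⁻ p : EuclideanSpace ℝ (Fin m₁) × EuclideanSpace ℝ (Fin m₂),
            F (T s p.1 p.2)) ≤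
        k₂ * ∫⁻ t in Set.Ioi |s|, F t * ENNReal.ofReal (psiT m₁ m₂ t s)) := by
  have hTe : ∀ s v w, T s v w = Real.arcosh (√((Real.cosh s + Real.exp s * ‖v‖ ^ 2) ^ 2 +
      Real.exp (2 * s) * ‖w‖ ^ 2)) := by
    intro s v w
    obtain ⟨h1, h2⟩ := hT s v w
    rw [← h2, Real.sqrt_sq (Real.cosh_pos _).le, Real.arcosh_cosh ((abs_nonneg s).trans h1)]
  have hma := measurable_arcosh'
  have hm₁' : (0:ℝ) < m₁ := by exact_mod_cast hm₁
  rcases Nat.eq_zero_or_pos m₂ with rfl | hm₂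
  · refine ⟨_, _, polar_const_ne_zero m₁ hm₁, polar_const_ne_top m₁, ?_⟩
    intro s F hF
    refine (fun h => ⟨h.ge, h.le⟩ : ∀ {x y : ℝ≥0∞}, x = y → y ≤ x ∧ x ≤ y) ?_
    have hc := Real.cosh_pos s
    rw [psi_int]
    have e1 : ∫⁻ p : EuclideanSpace ℝ (Fin m₁) × EuclideanSpace ℝ (Fin 0), F (T s p.1 p.2) =
        ∫⁻ v : EuclideanSpace ℝ (Fin m₁),
          F (Real.arcosh (Real.cosh s + Real.exp s * ‖v‖ ^ 2)) := by
      simp only [hTe]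
      rw [Measure.volume_eq_prod, lintegral_prod _ (by fun_prop)]
      congr 1
      ext v
      rw [volume_euclideanSpace_eq_dirac, lintegral_dirac]
      have : 0 ≤ Real.cosh s + Real.exp s * ‖v‖ ^ 2 := by positivity
      simp [Real.sqrt_sq this]
    have e2 : Real.exp (((m₁ : ℝ) + 2 * ((0:ℕ) : ℝ)) / 2 * s) = Real.exp s ^ ((m₁ : ℝ) / 2) := by
      rw [← Real.exp_mul]; push_cast; ring_nf
    rw [e1, e2, polar_sq m₁ hm₁ _ (Real.exp_pos s)
      (fun u => F (Real.arcosh (Real.cosh s + u))) (by fun_prop)]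
    congr 1
    have himg : (fun u : ℝ => Real.cosh s + u) '' Set.Ioi 0 = Set.Ioi (Real.cosh s) := by simp
    rw [← himg, lintegral_image_eq_lintegral_abs_deriv_mul (f := fun u : ℝ => Real.cosh s + u)
      (f' := fun _ => 1) measurableSet_Ioi]
    · apply setLIntegral_congr_fun measurableSet_Ioi
      intro u hu
      simp
      ring
    · intro x hx
      simpa using ((hasDerivAt_id x).const_add (Real.cosh s)).hasDerivWithinAt
    · intro x _ y _ hxy
      exact add_left_cancel hxy
  · have hm₂' : (0:ℝ) < m₂ := by exact_mod_cast hm₂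
    have hb := ProbabilityTheory.beta_pos (α := (m₁:ℝ)/2) (β := (m₂:ℝ)/2) (by positivity) (by positivity)
    have n1 := polar_const_ne_zero m₁ hm₁
    have n2 := polar_const_ne_zero m₂ hm₂
    have t1 := polar_const_ne_top m₁
    have t2 := polar_const_ne_top m₂
    have P1 := polar_sq m₁ hm₁
    have P2 := polar_sq m₂ hm₂
    generalize ((volume : Measure (EuclideanSpace ℝ (Fin m₁))).toSphere Set.univ * 2⁻¹) = K₁ at n1 t1 P1
    generalize ((volume : Measure (EuclideanSpace ℝ (Fin m₂))).toSphere Set.univ * 2⁻¹) = K₂ at n2 t2 P2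
    set B := ProbabilityTheory.beta ((m₁:ℝ)/2) ((m₂:ℝ)/2) with hB
    refine ⟨K₁ * K₂ * ENNReal.ofReal (2 * (2 ^ |(m₂:ℝ)/2 - 1|)⁻¹ * B),
      K₁ * K₂ * ENNReal.ofReal (2 * 2 ^ |(m₂:ℝ)/2 - 1| * B), ?_, ?_, ?_⟩
    · refine mul_ne_zero (mul_ne_zero n1 n2) ?_
      rw [Ne, ENNReal.ofReal_eq_zero, not_le]
      positivity
    · exact ENNReal.mul_ne_top (ENNReal.mul_ne_top t1 t2) ENNReal.ofReal_ne_top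
    intro s F hF
    have hc := Real.cosh_pos s
    rw [psi_int]
    set G : ℝ → ℝ≥0∞ := fun a => F (Real.arcosh a) with hGdef
    have hG : Measurable G := by fun_prop
    have e1 : ENNReal.ofReal (Real.exp (((m₁ : ℝ) + 2 * (m₂ : ℝ)) / 2 * s)) *
          ∫⁻ p : EuclideanSpace ℝ (Fin m₁) × EuclideanSpace ℝ (Fin m₂), F (T s p.1 p.2) =
        K₁ * K₂ * ∫⁻ u in Set.Ioi (0:ℝ), ENNReal.ofReal (u ^ ((m₁:ℝ)/2 - 1)) *
          ∫⁻ p in Set.Ioi (0:ℝ), ENNReal.ofReal (p ^ ((m₂:ℝ)/2 - 1)) *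
            G (√((Real.cosh s + u) ^ 2 + p)) := by
      have e2 : Real.exp (((m₁ : ℝ) + 2 * (m₂ : ℝ)) / 2 * s) =
          Real.exp s ^ ((m₁ : ℝ) / 2) * Real.exp (2 * s) ^ ((m₂ : ℝ) / 2) := by
        rw [← Real.exp_mul, ← Real.exp_mul, ← Real.exp_add]; ring_nf
      simp only [hTe]
      rw [Measure.volume_eq_prod, lintegral_prod _ (by fun_prop), e2,
        ENNReal.ofReal_mul (by positivity), mul_assoc, ← lintegral_const_mul _ (by fun_prop)]
      have e3 : ∀ v : EuclideanSpace ℝ (Fin m₁), ENNReal.ofReal (Real.exp (2 * s) ^ ((m₂ : ℝ) / 2)) *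
          ∫⁻ w : EuclideanSpace ℝ (Fin m₂), F (Real.arcosh (√((Real.cosh s + Real.exp s * ‖v‖ ^ 2) ^ 2 +
            Real.exp (2 * s) * ‖w‖ ^ 2))) = K₂ * ∫⁻ p in Set.Ioi (0:ℝ),
            ENNReal.ofReal (p ^ ((m₂:ℝ)/2 - 1)) *
            G (√((Real.cosh s + Real.exp s * ‖v‖ ^ 2) ^ 2 + p)) := fun v =>
        P2 (Real.exp (2 * s)) (Real.exp_pos _)
          (fun p => G (√((Real.cosh s + Real.exp s * ‖v‖ ^ 2) ^ 2 + p))) (by fun_prop)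
      simp only [e3]
      rw [lintegral_const_mul _ (by fun_prop), mul_left_comm,
        P1 (Real.exp s) (Real.exp_pos _) (fun u => ∫⁻ p in Set.Ioi (0:ℝ),
          ENNReal.ofReal (p ^ ((m₂:ℝ)/2 - 1)) * G (√((Real.cosh s + u) ^ 2 + p))) (by fun_prop)]
      ring
    rw [e1, mul_assoc, mul_assoc (K₁ * K₂)]
    obtain ⟨b1, b2⟩ := double_bd ((m₁:ℝ)/2) ((m₂:ℝ)/2) (Real.cosh s) (by positivity) (by positivity)
      hc G hG
    exact ⟨by gcongr, by gcongr⟩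

/-- **Lemma 1**: the integration formula relating the Iwasawa and Cartan decompositions.
Here `T s v w` is the unique `t ≥ |s|` with
`(cosh t)² = (cosh s + eˢ|v|²)² + e^{2s}|w|²`, and `ρ = (m₁ + 2m₂)/2`. -/
theorem integration_formula (m₁ m₂ : ℕ) (hm₁ : 1 ≤ m₁)
    (T : ℝ → EuclideanSpace ℝ (Fin m₁) → EuclideanSpace ℝ (Fin m₂) → ℝ)
    (hT : ∀ (s : ℝ) (v : EuclideanSpace ℝ (Fin m₁)) (w : EuclideanSpace ℝ (Fin m₂)),
      |s| ≤ T s v w ∧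
      Real.cosh (T s v w) ^ 2 =
        (Real.cosh s + Real.exp s * ‖v‖ ^ 2) ^ 2 + Real.exp (2 * s) * ‖w‖ ^ 2) :
    ∃ C : ℝ≥0, 1 ≤ C ∧ ∀ (s : ℝ) (F : ℝ → ℝ≥0∞), Measurable F →
      ((C : ℝ≥0∞)⁻¹ * (∫⁻ t in Set.Ioi |s|, F t * ENNReal.ofReal (psiT m₁ m₂ t s)) ≤
        ENNReal.ofReal (Real.exp (((m₁ : ℝ) + 2 * (m₂ : ℝ)) / 2 * s)) *
          ∫⁻ p : EuclideanSpace ℝ (Fin m₁) × EuclideanSpace ℝ (Fin m₂),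
            F (T s p.1 p.2)) ∧
      (ENNReal.ofReal (Real.exp (((m₁ : ℝ) + 2 * (m₂ : ℝ)) / 2 * s)) *
          (∫⁻ p : EuclideanSpace ℝ (Fin m₁) × EuclideanSpace ℝ (Fin m₂),
            F (T s p.1 p.2)) ≤
        (C : ℝ≥0∞) * ∫⁻ t in Set.Ioi |s|, F t * ENNReal.ofReal (psiT m₁ m₂ t s)) := by
  classical
  obtain ⟨k₁, k₂, hk₁, hk₂, hk⟩ := integration_aux m₁ m₂ hm₁ T hT
  have hm : max 1 (max k₂ k₁⁻¹) ≠ ∞ := by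
    simp [hk₁, hk₂]
  refine ⟨(max 1 (max k₂ k₁⁻¹)).toNNReal, ?_, ?_⟩
  · rw [← ENNReal.coe_le_coe, ENNReal.coe_toNNReal hm]
    simp
  · intro s F hF
    rw [ENNReal.coe_toNNReal hm]
    obtain ⟨h1, h2⟩ := hk s F hF
    constructor
    · refine le_trans ?_ h1
      gcongr
      rw [ENNReal.inv_le_iff_inv_le]
      exact (le_max_right _ _).trans (le_max_right _ _)
    · refine h2.trans ?_
      gcongr
      exact (le_max_left _ _).trans (le_max_right _ _)


end
end

section
/- There exists a constant C = C(m₁, m₂) such that for every s ∈ ℝ and every measurable set E ⊆ (0,∞), ∫_{|s|}^∞ 1_E(t) · ψ̃(t,s) dt ≤ C · ( ∫₀^∞ 1_E(t) · (sinh t)^{m₁} (sinh 2t)^{m₂} dt )^{1/2}. -/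
open MeasureTheory ENNReal NNReal

noncomputable section

theorem sq_measure_le (μ : Measure ℝ) [SFinite μ] (E : Set ℝ) :
    μ E * μ E ≤ 2 * ∫⁻ t in E, μ (Set.Iic t) ∂μ := by
  set ν := μ.restrict E with hν
  have hA1 : MeasurableSet {p : ℝ × ℝ | p.2 ≤ p.1} := measurableSet_le measurable_snd measurable_fst
  have hA2 : MeasurableSet {p : ℝ × ℝ | p.1 ≤ p.2} := measurableSet_le measurable_fst measurable_snd
  have h0 : μ E * μ E = (ν.prod ν) (Set.univ ×ˢ Set.univ) := by
    rw [Measure.prod_prod]; simp [hν]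
  have h1 : (ν.prod ν) {p : ℝ × ℝ | p.2 ≤ p.1} ≤ ∫⁻ t, μ (Set.Iic t) ∂ν := by
    rw [Measure.prod_apply hA1]
    exact lintegral_mono fun t => Measure.restrict_apply_le _ _
  have h2 : (ν.prod ν) {p : ℝ × ℝ | p.1 ≤ p.2} ≤ ∫⁻ t, μ (Set.Iic t) ∂ν := by
    rw [Measure.prod_apply_symm hA2]
    exact lintegral_mono fun t => Measure.restrict_apply_le _ _
  rw [h0, two_mul]
  refine le_trans (measure_mono ?_) ((measure_union_le _ _).trans (add_le_add h1 h2))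
  rintro ⟨x, y⟩ -
  exact (le_total y x)

theorem psiT_lintegral_le (m₁ m₂ : ℕ) (hm₁ : 1 ≤ m₁) (s t : ℝ) (ht : |s| < t) :
    ∫⁻ x in Set.Ioc |s| t, ENNReal.ofReal (psiT m₁ m₂ x s) ≤
      ENNReal.ofReal (Real.cosh t ^ ((m₂ : ℝ) / 2) *
        (2 * (Real.cosh t - Real.cosh s) ^ (((m₁ : ℝ) + (m₂ : ℝ)) / 2))) := by
  set b : ℝ := ((m₁ : ℝ) + (m₂ : ℝ)) / 2 with hb
  have hm : (1 : ℝ) ≤ m₁ := by exact_mod_cast hm₁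
  have hm2 : (0 : ℝ) ≤ m₂ := Nat.cast_nonneg _
  have hb0 : 1 / 2 ≤ b := by rw [hb]; linarith
  have hbpos : 0 < b := by linarith
  have hexp : ((m₁ : ℝ) + (m₂ : ℝ) - 2) / 2 = b - 1 := by rw [hb]; ring
  have hpos : ∀ x, |s| < x → 0 < Real.cosh x - Real.cosh s := by
    intro x hx
    have : Real.cosh s < Real.cosh x := by
      rw [Real.cosh_lt_cosh]; exact hx.trans_le (le_abs_self x)
    linarith
  let F : ℝ → ℝ := fun x => (Real.cosh x - Real.cosh s) ^ b / b
  let f : ℝ → ℝ := fun x => Real.sinh x * (Real.cosh x - Real.cosh s) ^ (b - 1)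
  have hF : ∀ x ∈ Set.Ioo |s| t, HasDerivAt F (f x) x := by
    intro x hx
    have h := (((Real.hasDerivAt_cosh x).sub_const (Real.cosh s)).rpow_const (p := b)
      (Or.inl (hpos x hx.1).ne')).div_const b
    have e : f x = Real.sinh x * b * (Real.cosh x - Real.cosh s) ^ (b - 1) / b := by
      change Real.sinh x * (Real.cosh x - Real.cosh s) ^ (b - 1) = _
      field_simp
    rw [e]
    exact h
  have hFc : ContinuousOn F (Set.Icc |s| t) := by
    apply Continuous.continuousOn
    exact ((Real.continuous_cosh.sub continuous_const).rpow_const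
      (fun _ => Or.inr hbpos.le)).div_const b
  have hs0 : ∀ x, |s| < x → 0 ≤ Real.sinh x := fun x hx =>
    Real.sinh_nonneg_iff.2 ((abs_nonneg s).trans hx.le)
  have hf0 : ∀ x, |s| < x → 0 ≤ f x := fun x hx =>
    mul_nonneg (hs0 x hx) (Real.rpow_nonneg (hpos x hx).le _)
  have hint : IntegrableOn f (Set.Ioc |s| t) :=
    intervalIntegral.integrableOn_deriv_of_nonneg hFc hF (fun x hx => hf0 x hx.1)
  have hval : ∫ x in |s|..t, f x = F t - F |s| :=
    intervalIntegral.integral_eq_sub_of_hasDerivAt_of_le ht.le hFc hF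
      ((intervalIntegrable_iff_integrableOn_Ioc_of_le ht.le).2 hint)
  have hFs : F |s| = 0 := by simp [F, Real.cosh_abs, Real.zero_rpow hbpos.ne']
  have hlin : ∫⁻ x in Set.Ioc |s| t, ENNReal.ofReal (f x) = ENNReal.ofReal (F t) := by
    rw [← ofReal_integral_eq_lintegral_ofReal hint, ← intervalIntegral.integral_of_le ht.le, hval,
      hFs, sub_zero]
    filter_upwards [ae_restrict_mem measurableSet_Ioc] with x hx using hf0 x hx.1
  have hc0 : 0 ≤ Real.cosh t ^ ((m₂ : ℝ) / 2) := Real.rpow_nonneg (Real.cosh_pos t).le _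
  calc ∫⁻ x in Set.Ioc |s| t, ENNReal.ofReal (psiT m₁ m₂ x s)
      ≤ ∫⁻ x in Set.Ioc |s| t, ENNReal.ofReal (Real.cosh t ^ ((m₂ : ℝ) / 2)) *
          ENNReal.ofReal (f x) := by
        refine setLIntegral_mono' measurableSet_Ioc fun x hx => ?_
        rw [← ENNReal.ofReal_mul hc0]
        apply ENNReal.ofReal_le_ofReal
        have hx0 : 0 ≤ x := (abs_nonneg s).trans hx.1.le
        have hcx : Real.cosh x ^ ((m₂ : ℝ) / 2) ≤ Real.cosh t ^ ((m₂ : ℝ) / 2) := by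
          apply Real.rpow_le_rpow (Real.cosh_pos x).le _ (by positivity)
          rw [Real.cosh_le_cosh, abs_of_nonneg hx0]
          exact hx.2.trans (le_abs_self t)
        have := mul_le_mul_of_nonneg_right hcx (hf0 x hx.1)
        unfold psiT
        rw [hexp]
        simp only [f] at this ⊢
        linarith
    _ = ENNReal.ofReal (Real.cosh t ^ ((m₂ : ℝ) / 2)) * ENNReal.ofReal (F t) := by
        rw [lintegral_const_mul' _ _ ENNReal.ofReal_ne_top, hlin]
    _ ≤ _ := by
        rw [← ENNReal.ofReal_mul hc0]
        apply ENNReal.ofReal_le_ofReal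
        apply mul_le_mul_of_nonneg_left _ hc0
        simp only [F]
        have h := Real.rpow_nonneg (hpos t ht).le b
        rw [div_le_iff₀ hbpos]
        nlinarith

theorem psiT_pointwise (m₁ m₂ : ℕ) (hm₁ : 1 ≤ m₁) (s t : ℝ) (ht : |s| < t) :
    (Real.cosh t ^ ((m₂ : ℝ) / 2) *
        (2 * (Real.cosh t - Real.cosh s) ^ (((m₁ : ℝ) + (m₂ : ℝ)) / 2))) * psiT m₁ m₂ t s ≤
      2 * (Real.sinh t ^ m₁ * Real.sinh (2 * t) ^ m₂) := by
  have ht0 : 0 < t := (abs_nonneg s).trans_lt ht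
  have hv : 0 < Real.cosh t - Real.cosh s := by
    have : Real.cosh s < Real.cosh t := by
      rw [Real.cosh_lt_cosh]; exact ht.trans_le (le_abs_self t)
    linarith
  have hS : 0 < Real.sinh t := Real.sinh_pos_iff.2 ht0
  have hC := Real.cosh_pos t
  have hC1 := Real.one_le_cosh t
  have hvS : Real.cosh t - Real.cosh s ≤ Real.sinh t := by
    have h1 := Real.one_le_cosh s
    have h2 := Real.cosh_sq t
    nlinarith
  set v := Real.cosh t - Real.cosh s
  obtain ⟨k, rfl⟩ : ∃ k, m₁ = k + 1 := ⟨m₁ - 1, by omega⟩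
  have e1 : Real.cosh t ^ ((m₂ : ℝ) / 2) * Real.cosh t ^ ((m₂ : ℝ) / 2) = Real.cosh t ^ m₂ := by
    rw [← Real.rpow_add hC, add_halves, Real.rpow_natCast]
  have e2 : v ^ ((((k + 1 : ℕ) : ℝ) + (m₂ : ℝ)) / 2) * v ^ ((((k + 1 : ℕ) : ℝ) + (m₂ : ℝ) - 2) / 2)
      = v ^ (k + m₂) := by
    rw [← Real.rpow_add hv, ← Real.rpow_natCast]
    congr 1; push_cast; ring
  have e3 : v ^ (k + m₂) ≤ Real.sinh t ^ (k + m₂) := pow_le_pow_left₀ hv.le hvS _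
  have e4 : Real.cosh t ^ m₂ * Real.sinh t * v ^ (k + m₂) ≤
      2 ^ m₂ * (Real.cosh t ^ m₂ * Real.sinh t * Real.sinh t ^ (k + m₂)) := by
    have h2 : (1 : ℝ) ≤ 2 ^ m₂ := one_le_pow₀ (by norm_num)
    calc _ ≤ Real.cosh t ^ m₂ * Real.sinh t * Real.sinh t ^ (k + m₂) := by gcongr
      _ ≤ _ := le_mul_of_one_le_left (by positivity) h2
  unfold psiT
  calc _ = 2 * ((Real.cosh t ^ ((m₂ : ℝ) / 2) * Real.cosh t ^ ((m₂ : ℝ) / 2)) * Real.sinh t *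
        (v ^ ((((k + 1 : ℕ) : ℝ) + (m₂ : ℝ)) / 2) *
          v ^ ((((k + 1 : ℕ) : ℝ) + (m₂ : ℝ) - 2) / 2))) := by ring
    _ ≤ 2 * (2 ^ m₂ * (Real.cosh t ^ m₂ * Real.sinh t * Real.sinh t ^ (k + m₂))) := by
        rw [e1, e2]; linarith
    _ = _ := by rw [Real.sinh_two_mul, mul_pow, mul_pow]; ring

/-- Inequality (2.9): for any `s ∈ ℝ` and measurable `E ⊆ (0,∞)`,
`∫_{|s|}^∞ 1_E(t) ψ̃(t,s) dt ≤ C (∫₀^∞ 1_E(t) (sinh t)^{m₁} (sinh 2t)^{m₂} dt)^{1/2}`. -/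
theorem indicator_psi_estimate (m₁ m₂ : ℕ) (hm₁ : 1 ≤ m₁) :
    ∃ C : ℝ≥0, ∀ (s : ℝ) (E : Set ℝ), MeasurableSet E → E ⊆ Set.Ioi 0 →
      (∫⁻ t in Set.Ioi |s|,
          E.indicator (fun _ => (1 : ℝ≥0∞)) t * ENNReal.ofReal (psiT m₁ m₂ t s)) ≤
        C * (∫⁻ t in Set.Ioi (0 : ℝ),
          E.indicator (fun _ => (1 : ℝ≥0∞)) t *
            ENNReal.ofReal (Real.sinh t ^ m₁ * Real.sinh (2 * t) ^ m₂)) ^ (1 / 2 : ℝ) := by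
  refine ⟨2, fun s E hE hE0 => ?_⟩
  have hmeas : Measurable fun t => ENNReal.ofReal (psiT m₁ m₂ t s) := by
    unfold psiT
    have := Real.measurable_sinh
    have := Real.measurable_cosh
    fun_prop
  set μ : Measure ℝ := (volume.restrict (Set.Ioi |s|)).withDensity
    (fun t => ENNReal.ofReal (psiT m₁ m₂ t s)) with hμ
  have hind : ∀ (g : ℝ → ℝ≥0∞) (t : ℝ),
      E.indicator (fun _ => (1 : ℝ≥0∞)) t * g t = E.indicator g t := by
    intro g t
    by_cases h : t ∈ E <;> simp [h]
  have hL : (∫⁻ t in Set.Ioi |s|,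
      E.indicator (fun _ => (1 : ℝ≥0∞)) t * ENNReal.ofReal (psiT m₁ m₂ t s)) = μ E := by
    rw [hμ, withDensity_apply _ hE, ← lintegral_indicator hE]
    exact lintegral_congr fun t => hind (fun t => ENNReal.ofReal (psiT m₁ m₂ t s)) t
  rw [hL]
  set R := ∫⁻ t in Set.Ioi (0 : ℝ), E.indicator (fun _ => (1 : ℝ≥0∞)) t *
            ENNReal.ofReal (Real.sinh t ^ m₁ * Real.sinh (2 * t) ^ m₂) with hR
  have hG : Measurable fun t => μ (Set.Iic t) :=
    Monotone.measurable fun a b hab => measure_mono (Set.Iic_subset_Iic.2 hab)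
  have hkey : ∫⁻ t in E, μ (Set.Iic t) ∂μ ≤ 2 * R := by
    rw [← lintegral_indicator hE, hμ, lintegral_withDensity_eq_lintegral_mul _ hmeas
      (hG.indicator hE), hR, ← lintegral_const_mul' _ _ (by simp)]
    refine le_trans (setLIntegral_mono' measurableSet_Ioi fun t ht => ?_)
      (lintegral_mono_set (Set.Ioi_subset_Ioi (abs_nonneg s)))
    by_cases h : t ∈ E
    · simp only [Pi.mul_apply, Set.indicator_of_mem h, one_mul]
      have h1 : μ (Set.Iic t) = ∫⁻ x in Set.Ioc |s| t, ENNReal.ofReal (psiT m₁ m₂ x s) := by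
        rw [hμ, withDensity_apply _ measurableSet_Iic, Measure.restrict_restrict measurableSet_Iic,
          Set.inter_comm, Set.Ioi_inter_Iic]
      have ht' : |s| < t := ht
      have h2 := psiT_lintegral_le m₁ m₂ hm₁ s t ht'
      have h3 := psiT_pointwise m₁ m₂ hm₁ s t ht'
      have hv : 0 ≤ Real.cosh t - Real.cosh s := by
        rw [sub_nonneg, Real.cosh_le_cosh]; exact ht'.le.trans (le_abs_self t)
      have hc := Real.cosh_pos t
      rw [h1, mul_comm]
      refine (mul_le_mul_left h2 _).trans ?_
      rw [← ENNReal.ofReal_mul (by positivity)]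
      refine (ENNReal.ofReal_le_ofReal h3).trans ?_
      rw [ENNReal.ofReal_mul (by norm_num)]
      simp
    · simp [h]
  have hsq : μ E * μ E ≤ 4 * R := by
    refine (sq_measure_le μ E).trans ?_
    calc 2 * ∫⁻ t in E, μ (Set.Iic t) ∂μ ≤ 2 * (2 * R) := by gcongr
      _ = 4 * R := by rw [← mul_assoc]; norm_num
  have h := ENNReal.rpow_le_rpow hsq (show (0 : ℝ) ≤ 1 / 2 by norm_num)
  rw [ENNReal.mul_rpow_of_nonneg _ _ (by norm_num), ENNReal.mul_rpow_of_nonneg _ _ (by norm_num),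
    ← ENNReal.rpow_add_of_nonneg _ _ (by norm_num) (by norm_num)] at h
  have h4 : (4 : ℝ≥0∞) ^ (1 / 2 : ℝ) = 2 := by
    rw [show (4 : ℝ≥0∞) = 2 ^ (2 : ℝ) by norm_num, ← ENNReal.rpow_mul]; norm_num
  rw [h4] at h
  norm_num at h
  simpa using h

end
end

section
/- For every a ∈ ℝ and every measurable set E ⊆ ℝ, ∫_a^{a+1} 1_E(t) · (t − a)^{−1/2} dt ≤ 2 · ( Leb(E ∩ (a, a+1)) )^{1/2}, where Leb denotes one-dimensional Lebesgue measure. -/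
open MeasureTheory ENNReal NNReal

lemma aux_int (a m : ℝ) (hm : 0 < m) :
    ∫⁻ t in Set.Ioc a (a + m), ENNReal.ofReal ((t - a) ^ (-(1 / 2) : ℝ))
      = 2 * (ENNReal.ofReal m) ^ (1 / 2 : ℝ) := by
  have hii : IntervalIntegrable (fun t : ℝ => (t - a) ^ (-(1 / 2) : ℝ)) volume a (a + m) := by
    have h := (intervalIntegral.intervalIntegrable_rpow' (a := 0) (b := m)
      (r := (-(1 / 2) : ℝ)) (by norm_num)).comp_sub_right a
    simpa [add_comm] using h
  have hi := (intervalIntegrable_iff_integrableOn_Ioc_of_le (by linarith)).1 hii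
  rw [← ofReal_integral_eq_lintegral_ofReal hi]
  · rw [← intervalIntegral.integral_of_le (by linarith),
      intervalIntegral.integral_comp_sub_right (fun t : ℝ => t ^ (-(1 / 2) : ℝ)) a,
      integral_rpow (Or.inl (by norm_num)), ENNReal.ofReal_rpow_of_pos hm]
    have h2 : (2 : ℝ≥0∞) = ENNReal.ofReal 2 := by simp
    rw [h2, ← ENNReal.ofReal_mul (by norm_num)]
    congr 1
    have : (-(1 / 2) + 1 : ℝ) = 1 / 2 := by norm_num
    rw [this, sub_self, Real.zero_rpow (by norm_num), add_sub_cancel_left]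
    ring
  · refine (ae_restrict_iff' measurableSet_Ioc).2 (Filter.Eventually.of_forall fun t ht => ?_)
    exact Real.rpow_nonneg (by linarith [ht.1]) _

/-- For every `a ∈ ℝ` and every measurable set `E ⊆ ℝ`,
`∫_a^{a+1} 1_E(t) (t − a)^{−1/2} dt ≤ 2 (Leb(E ∩ (a, a+1)))^{1/2}`. -/
theorem indicator_rpow_estimate (a : ℝ) (E : Set ℝ) (hE : MeasurableSet E) :
    (∫⁻ t in Set.Ioo a (a + 1),
        E.indicator (fun _ => (1 : ℝ≥0∞)) t * ENNReal.ofReal ((t - a) ^ (-(1 / 2) : ℝ))) ≤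
      2 * (volume (E ∩ Set.Ioo a (a + 1))) ^ (1 / 2 : ℝ) := by
  set g : ℝ → ℝ≥0∞ := fun t => ENNReal.ofReal ((t - a) ^ (-(1 / 2) : ℝ)) with hg
  have h1 : ∫⁻ t in Set.Ioo a (a + 1), E.indicator (fun _ => (1 : ℝ≥0∞)) t * g t
      = ∫⁻ t in E ∩ Set.Ioo a (a + 1), g t := by
    rw [← Measure.restrict_restrict hE, ← lintegral_indicator hE]
    congr 1
    ext t
    by_cases ht : t ∈ E <;> simp [ht]
  change ∫⁻ t in Set.Ioo a (a + 1), E.indicator (fun _ => (1 : ℝ≥0∞)) t * g t ≤ _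
  rw [h1]
  have hF : MeasurableSet (E ∩ Set.Ioo a (a + 1)) := hE.inter measurableSet_Ioo
  have hsub : E ∩ Set.Ioo a (a + 1) ⊆ Set.Ioo a (a + 1) := Set.inter_subset_right
  generalize E ∩ Set.Ioo a (a + 1) = F at hF hsub ⊢
  have hfin : volume F ≠ ∞ := ((measure_mono hsub).trans_lt (by simp)).ne
  by_cases h0 : volume F = 0
  · rw [Measure.restrict_eq_zero.2 h0]; simp
  obtain ⟨m, hm, hmF⟩ : ∃ m : ℝ, 0 < m ∧ volume F = ENNReal.ofReal m :=
    ⟨_, ENNReal.toReal_pos h0 hfin, (ENNReal.ofReal_toReal hfin).symm⟩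
  rw [hmF, ← aux_int a m hm]
  change _ ≤ ∫⁻ t in Set.Ioc a (a + m), g t
  set I := Set.Ioc a (a + m) with hI
  have hIm : MeasurableSet I := measurableSet_Ioc
  have hIv : volume I = ENNReal.ofReal m := by simp [hI]
  have hd : volume (F \ I) = volume (I \ F) := by
    have e1 := measure_inter_add_sdiff (μ := volume) F hIm
    have e2 := measure_inter_add_sdiff (μ := volume) I hF
    rw [Set.inter_comm, hIv, ← hmF, ← e1] at e2
    exact ((ENNReal.add_right_inj
      (ne_top_of_le_ne_top hfin (measure_mono Set.inter_subset_left))).1 e2).symm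
  set c := ENNReal.ofReal (m ^ (-(1 / 2) : ℝ))
  rw [← lintegral_inter_add_sdiff g F hIm, ← lintegral_inter_add_sdiff g I hF, Set.inter_comm I F]
  refine add_le_add le_rfl ?_
  calc ∫⁻ t in F \ I, g t ≤ ∫⁻ t in F \ I, c := by
        refine setLIntegral_mono measurable_const fun t ht => ?_
        have hta := (hsub ht.1).1
        have : a + m < t := by
          by_contra h
          exact ht.2 ⟨hta, not_lt.1 h⟩
        exact ENNReal.ofReal_le_ofReal
          (Real.rpow_le_rpow_of_nonpos hm (by linarith) (by norm_num))
    _ = ∫⁻ t in I \ F, c := by simp [hd]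
    _ ≤ ∫⁻ t in I \ F, g t := by
        refine setLIntegral_mono' (hIm.diff hF) fun t ht => ?_
        exact ENNReal.ofReal_le_ofReal
          (Real.rpow_le_rpow_of_nonpos (by linarith [ht.1.1]) (by linarith [ht.1.2]) (by norm_num))
end

section
/- Let δ ≠ 0 be a real number. There exists a constant C_δ such that for every measurable function f : ℝ → [0,∞], ∫_ℝ f(t) e^{δ t} dt ≤ C_δ · ‖f‖_{L^{2,1}(μ₂)}, where μ₂ is the measure e^{2δ t} dt on ℝ and ‖f‖_{L^{2,1}(μ₂)} = 2 ∫₀^∞ μ₂({t : f(t) > λ})^{1/2} dλ. -/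
open MeasureTheory ENNReal NNReal

lemma aux_tail (δ : ℝ) (hδ : δ ≠ 0) (s : ℝ) (hs : 0 < s) :
    ∫⁻ t in {t : ℝ | Real.exp (δ * t) ≤ s}, ENNReal.ofReal (Real.exp (δ * t))
      ≤ ENNReal.ofReal (s / |δ|) := by
  rcases lt_or_gt_of_ne hδ with h | h
  · have hset : {t : ℝ | Real.exp (δ * t) ≤ s} = Set.Ici (Real.log s / δ) := by
      ext t
      simp only [Set.mem_setOf_eq, Set.mem_Ici]
      rw [← Real.le_log_iff_exp_le hs, div_le_iff_of_neg h, mul_comm]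
    rw [hset, Measure.restrict_congr_set Ioi_ae_eq_Ici.symm,
      ← ofReal_integral_eq_lintegral_ofReal (integrableOn_exp_mul_Ioi h _)
        (Filter.Eventually.of_forall fun t => (Real.exp_pos _).le),
      integral_exp_mul_Ioi h, mul_div_cancel₀ _ hδ, Real.exp_log hs, abs_of_neg h, div_neg, neg_div]
  · have hset : {t : ℝ | Real.exp (δ * t) ≤ s} = Set.Iic (Real.log s / δ) := by
      ext t
      simp only [Set.mem_setOf_eq, Set.mem_Iic]
      rw [← Real.le_log_iff_exp_le hs, le_div_iff₀ h, mul_comm]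
    rw [hset,
      ← ofReal_integral_eq_lintegral_ofReal (integrableOn_exp_mul_Iic h _)
        (Filter.Eventually.of_forall fun t => (Real.exp_pos _).le),
      integral_exp_mul_Iic h, mul_div_cancel₀ _ hδ, Real.exp_log hs, abs_of_pos h]

lemma aux_set (δ : ℝ) (hδ : δ ≠ 0) (E : Set ℝ) (hE : MeasurableSet E) :
    ∫⁻ t in E, ENNReal.ofReal (Real.exp (δ * t)) ≤
      ((1 / |δ| + 1).toNNReal : ℝ≥0) *
        ((volume.withDensity fun t => ENNReal.ofReal (Real.exp (2 * δ * t))) E) ^ (1 / 2 : ℝ) := by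
  have hd : 0 < 1 / |δ| := by positivity
  rw [withDensity_apply _ hE]
  set m := ∫⁻ t in E, ENNReal.ofReal (Real.exp (2 * δ * t)) with hm
  by_cases htop : m = ∞
  · rw [htop, ENNReal.top_rpow_of_pos (by norm_num), ENNReal.mul_top]
    · exact le_top
    · simp
  by_cases h0 : m = 0
  · have hv : volume E = 0 := by
      rw [hm, lintegral_eq_zero_iff (by fun_prop)] at h0
      rw [← Measure.restrict_eq_zero, ← ae_eq_bot, ← Filter.eventually_false_iff_eq_bot]
      filter_upwards [h0] with t ht
      have := Real.exp_pos (2 * δ * t)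
      simp at ht
      linarith
    rw [setLIntegral_measure_zero _ _ hv]
    exact zero_le
  have hmr : 0 < m.toReal := ENNReal.toReal_pos h0 htop
  set s := Real.sqrt m.toReal with hsdef
  have hs : 0 < s := Real.sqrt_pos.2 hmr
  have hms : m = ENNReal.ofReal (s * s) := by
    rw [hsdef, Real.mul_self_sqrt hmr.le, ENNReal.ofReal_toReal htop]
  have hpow : m ^ (1 / 2 : ℝ) = ENNReal.ofReal s := by
    rw [hms, ENNReal.ofReal_rpow_of_pos (by positivity), ← Real.sqrt_eq_rpow,
      Real.sqrt_mul_self hs.le]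
  have hA : MeasurableSet {t : ℝ | Real.exp (δ * t) ≤ s} :=
    measurableSet_le (by fun_prop) (by fun_prop)
  rw [hpow]
  calc ∫⁻ t in E, ENNReal.ofReal (Real.exp (δ * t))
      ≤ ∫⁻ t in E, ({t : ℝ | Real.exp (δ * t) ≤ s}.indicator
            (fun t => ENNReal.ofReal (Real.exp (δ * t))) t
          + ENNReal.ofReal (1 / s) * ENNReal.ofReal (Real.exp (2 * δ * t))) := by
        apply lintegral_mono
        intro t
        dsimp only
        by_cases h : Real.exp (δ * t) ≤ s
        · rw [Set.indicator_of_mem (by exact h)]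
          exact le_self_add
        · rw [Set.indicator_of_notMem (by exact h), zero_add, ← ENNReal.ofReal_mul (by positivity)]
          apply ENNReal.ofReal_le_ofReal
          have : Real.exp (2 * δ * t) = Real.exp (δ * t) * Real.exp (δ * t) := by
            rw [← Real.exp_add]; ring_nf
          rw [this, one_div, inv_mul_eq_div, le_div_iff₀ hs]
          push Not at h
          have := Real.exp_pos (δ * t)
          gcongr
    _ = (∫⁻ t in E, {t : ℝ | Real.exp (δ * t) ≤ s}.indicator
            (fun t => ENNReal.ofReal (Real.exp (δ * t))) t) + ENNReal.ofReal (1 / s) * m := by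
        rw [lintegral_add_right _ (by fun_prop), lintegral_const_mul _ (by fun_prop)]
    _ ≤ ENNReal.ofReal (s / |δ|) + ENNReal.ofReal (1 / s) * m := by
        gcongr
        refine (setLIntegral_le_lintegral _ _).trans ?_
        rw [lintegral_indicator hA]
        exact aux_tail δ hδ s hs
    _ = _ := by
        rw [hms, ← ENNReal.ofReal_mul (by positivity), ← ENNReal.ofReal_add (by positivity) (by positivity)]
        change _ = ENNReal.ofReal (1 / |δ| + 1) * _
        rw [← ENNReal.ofReal_mul (by positivity)]
        congr 1
        field_simp

lemma aux_layer (a : ℝ≥0∞) :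
    a = ∫⁻ l in Set.Ioi (0 : ℝ), Set.indicator {l : ℝ | ENNReal.ofReal l < a} 1 l := by
  have hA : MeasurableSet {l : ℝ | ENNReal.ofReal l < a} :=
    measurableSet_lt (by fun_prop) (by fun_prop)
  rw [lintegral_indicator_one hA, Measure.restrict_apply hA]
  by_cases h : a = ∞
  · subst h
    simp
  · have : {l : ℝ | ENNReal.ofReal l < a} ∩ Set.Ioi 0 = Set.Ioo 0 a.toReal := by
      ext l
      simp only [Set.mem_inter_iff, Set.mem_setOf_eq, Set.mem_Ioi, Set.mem_Ioo]
      constructor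
      · rintro ⟨h1, h2⟩
        exact ⟨h2, (ENNReal.ofReal_lt_iff_lt_toReal h2.le h).1 h1⟩
      · rintro ⟨h1, h2⟩
        exact ⟨(ENNReal.ofReal_lt_iff_lt_toReal h1.le h).2 h2, h1⟩
    rw [this, Real.volume_Ioo, sub_zero, ENNReal.ofReal_toReal h]

/-- **Lemma 3**: for `δ ≠ 0`, `‖f‖_{L¹(e^{δt}dt)} ≤ C_δ ‖f‖_{L^{2,1}(e^{2δt}dt)}`. -/
theorem L1_le_L21_exponential (δ : ℝ) (hδ : δ ≠ 0) :
    ∃ C : ℝ≥0, ∀ f : ℝ → ℝ≥0∞, Measurable f →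
      (∫⁻ t, f t * ENNReal.ofReal (Real.exp (δ * t))) ≤
        C * (2 * ∫⁻ l in Set.Ioi (0 : ℝ),
          ((volume.withDensity fun t => ENNReal.ofReal (Real.exp (2 * δ * t)))
              {t | ENNReal.ofReal l < f t}) ^ (1 / 2 : ℝ)) := by
  refine ⟨(1 / |δ| + 1).toNNReal, fun f hf => ?_⟩
  have hS : MeasurableSet {p : ℝ × ℝ | ENNReal.ofReal p.2 < f p.1} :=
    measurableSet_lt (by fun_prop) (by fun_prop)
  have hE : ∀ l : ℝ, MeasurableSet {t | ENNReal.ofReal l < f t} := fun l =>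
    measurableSet_lt (by fun_prop) (by fun_prop)
  calc ∫⁻ t, f t * ENNReal.ofReal (Real.exp (δ * t))
      = ∫⁻ t, ∫⁻ l in Set.Ioi (0 : ℝ), {p : ℝ × ℝ | ENNReal.ofReal p.2 < f p.1}.indicator
          (fun p => ENNReal.ofReal (Real.exp (δ * p.1))) (t, l) := by
        apply lintegral_congr
        intro t
        conv_lhs => rw [aux_layer (f t)]
        rw [← lintegral_mul_const' _ _ ENNReal.ofReal_ne_top]
        apply lintegral_congr
        intro l
        by_cases h : ENNReal.ofReal l < f t <;> simp [h]
    _ = ∫⁻ l in Set.Ioi (0 : ℝ), ∫⁻ t, {p : ℝ × ℝ | ENNReal.ofReal p.2 < f p.1}.indicator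
          (fun p => ENNReal.ofReal (Real.exp (δ * p.1))) (t, l) := by
        apply lintegral_lintegral_swap
        apply Measurable.aemeasurable
        exact Measurable.indicator (by fun_prop) hS
    _ = ∫⁻ l in Set.Ioi (0 : ℝ), ∫⁻ t in {t | ENNReal.ofReal l < f t},
          ENNReal.ofReal (Real.exp (δ * t)) := by
        apply lintegral_congr
        intro l
        rw [← lintegral_indicator (hE l)]
        rfl
    _ ≤ ∫⁻ l in Set.Ioi (0 : ℝ), ((1 / |δ| + 1).toNNReal : ℝ≥0) *
          ((volume.withDensity fun t => ENNReal.ofReal (Real.exp (2 * δ * t)))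
              {t | ENNReal.ofReal l < f t}) ^ (1 / 2 : ℝ) :=
        lintegral_mono fun l => aux_set δ hδ _ (hE l)
    _ ≤ _ := by
        rw [lintegral_const_mul' _ _ ENNReal.coe_ne_top]
        rw [two_mul (lintegral _ _), mul_add]
        exact self_le_add_right _ _
end

section
/- There exists an absolute constant C such that for all σ-finite measure spaces (U, μ) and (V, ν) and every measurable function H : U × V → [0,∞], ( ∫_U ‖H(u, ·)‖_{L^{2,1}(ν)}² dμ(u) )^{1/2} ≤ C · ‖H‖_{L^{2,1}(μ ⊗ ν)}, where for a measure λ we write ‖h‖_{L^{2,1}(λ)} = 2 ∫₀^∞ λ({h > t})^{1/2} dt. -/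
open MeasureTheory ENNReal NNReal

noncomputable section

/-- The Lorentz quasi-norm `‖h‖_{L^{2,1}(λ)} = 2 ∫₀^∞ λ({h > t})^{1/2} dt`. -/
def lorentz21 {α : Type*} [MeasurableSpace α] (μ : Measure α) (f : α → ℝ≥0∞) : ℝ≥0∞ :=
  2 * ∫⁻ t in Set.Ioi (0 : ℝ), (μ {x | ENNReal.ofReal t < f x}) ^ (1 / 2 : ℝ)

/-- Minkowski's integral inequality for `p = 2`. -/
lemma minkowski_two {U T : Type*} [MeasurableSpace U] [MeasurableSpace T]
    (μ : Measure U) (τ : Measure T) [SigmaFinite μ] [SigmaFinite τ]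
    (F : U → T → ℝ≥0∞) (hF : Measurable (Function.uncurry F)) :
    ∫⁻ u, (∫⁻ t, F u t ∂τ) ^ 2 ∂μ ≤ (∫⁻ t, (∫⁻ u, F u t ^ 2 ∂μ) ^ (1 / 2 : ℝ) ∂τ) ^ 2 := by
  have hFt : ∀ t, Measurable fun u => F u t := fun t =>
    hF.comp (measurable_id.prodMk measurable_const)
  have hFu : ∀ u, Measurable fun t => F u t := fun u =>
    hF.comp (measurable_const.prodMk measurable_id)
  have hG : Measurable fun t => (∫⁻ u, F u t ^ 2 ∂μ) ^ (1 / 2 : ℝ) := by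
    refine Measurable.pow_const ?_ _
    exact Measurable.lintegral_prod_left' (f := fun p : U × T => F p.1 p.2 ^ 2) (hF.pow_const 2)
  have key : ∀ (f : T → ℝ≥0∞), Measurable f →
      (∫⁻ t, f t ∂τ) ^ 2 = ∫⁻ p : T × T, f p.1 * f p.2 ∂(τ.prod τ) := by
    intro f hf
    rw [lintegral_prod_mul hf.aemeasurable hf.aemeasurable, sq]
  rw [key _ hG]
  simp_rw [fun u => key _ (hFu u)]
  rw [lintegral_lintegral_swap]
  · refine lintegral_mono fun p => ?_
    have h := ENNReal.lintegral_mul_le_Lp_mul_Lq μ Real.HolderConjugate.two_two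
      (hFt p.1).aemeasurable (hFt p.2).aemeasurable
    simpa using h
  · apply Measurable.aemeasurable
    have h1 : Measurable fun q : U × (T × T) => F q.1 q.2.1 :=
      hF.comp (measurable_fst.prodMk measurable_snd.fst)
    have h2 : Measurable fun q : U × (T × T) => F q.1 q.2.2 :=
      hF.comp (measurable_fst.prodMk measurable_snd.snd)
    exact h1.mul h2

/-- **Lemma 5**: `(∫_U ‖H(u,·)‖_{L^{2,1}(ν)}² dμ(u))^{1/2} ≤ C ‖H‖_{L^{2,1}(μ⊗ν)}`. -/
theorem lorentz21_fubini :
    ∃ C : ℝ≥0, ∀ (U V : Type*) [MeasurableSpace U] [MeasurableSpace V]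
      (μ : Measure U) (ν : Measure V) [SigmaFinite μ] [SigmaFinite ν]
      (H : U × V → ℝ≥0∞), Measurable H →
        (∫⁻ u, (lorentz21 ν fun v => H (u, v)) ^ 2 ∂μ) ^ (1 / 2 : ℝ) ≤
          C * lorentz21 (μ.prod ν) H := by
  refine ⟨1, ?_⟩
  intro U V _ _ μ ν _ _ H hH
  have hS : MeasurableSet {q : (U × ℝ) × V | ENNReal.ofReal q.1.2 < H (q.1.1, q.2)} :=
    measurableSet_lt (by fun_prop) (by fun_prop)
  have hF : Measurable (Function.uncurry fun (u : U) (t : ℝ) =>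
      (ν {v | ENNReal.ofReal t < H (u, v)}) ^ (1 / 2 : ℝ)) :=
    (measurable_measure_prodMk_left (ν := ν) hS).pow_const _
  have hM := minkowski_two μ (volume.restrict (Set.Ioi (0 : ℝ))) _ hF
  have hsq : ∀ x : ℝ≥0∞, (x ^ (1 / 2 : ℝ)) ^ 2 = x := fun x => by
    rw [← ENNReal.rpow_natCast, ← ENNReal.rpow_mul]; norm_num
  have hsq' : ∀ x : ℝ≥0∞, (x ^ 2) ^ (1 / 2 : ℝ) = x := fun x => by
    rw [← ENNReal.rpow_natCast, ← ENNReal.rpow_mul]; norm_num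
  have hP : ∀ t : ℝ, ∫⁻ u, ν {v | ENNReal.ofReal t < H (u, v)} ∂μ
      = (μ.prod ν) {x | ENNReal.ofReal t < H x} := fun t => by
    rw [Measure.prod_apply (measurableSet_lt measurable_const hH)]; rfl
  simp only [hsq, hP] at hM
  rw [ENNReal.coe_one, one_mul, ← hsq' (lorentz21 (μ.prod ν) H)]
  refine ENNReal.rpow_le_rpow ?_ (by norm_num)
  unfold lorentz21
  simp only [mul_pow]
  rw [lintegral_const_mul' _ _ (by simp)]
  gcongr

end
end

section
/- There exists a constant C = C(m₁, m₂) such that for every u ≥ 1 and every r ∈ ℝ, ∫_{ {s : −u ≤ s ≤ u, s ≤ r} } ψ̃(u,s) · e^{ρ s} ds ≤ C · e^{ρ u} · e^{ρ r}. -/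
open MeasureTheory ENNReal NNReal

noncomputable section

/-- Truncated singular kernel. -/
def Ksing (x : ℝ) : ℝ := Set.indicator (Set.Ioc (0:ℝ) 1) (fun x => x ^ (-(1/2) : ℝ)) x

lemma Ksing_nonneg (x : ℝ) : 0 ≤ Ksing x := by
  unfold Ksing
  apply Set.indicator_nonneg
  intro y hy
  exact Real.rpow_nonneg hy.1.le _

lemma Ksing_meas : Measurable Ksing := by
  unfold Ksing
  refine Measurable.indicator ?_ measurableSet_Ioc
  fun_prop

lemma Ksing_int : (∫⁻ x, ENNReal.ofReal (Ksing x)) ≠ ⊤ := by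
  have h : IntervalIntegrable (fun x : ℝ => x ^ (-(1/2) : ℝ)) volume 0 1 :=
    intervalIntegral.intervalIntegrable_rpow' (by norm_num)
  rw [intervalIntegrable_iff_integrableOn_Ioc_of_le zero_le_one] at h
  have h2 : Integrable Ksing := (integrable_indicator_iff measurableSet_Ioc).2 h
  exact h2.lintegral_lt_top.ne

lemma exp_int (ρ : ℝ) (hρ : 0 < ρ) (r : ℝ) :
    (∫⁻ s in Set.Iic r, ENNReal.ofReal (Real.exp (ρ * s))) =
      ENNReal.ofReal (1 / ρ) * ENNReal.ofReal (Real.exp (ρ * r)) := by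
  rw [← ofReal_integral_eq_lintegral_ofReal (integrableOn_exp_mul_Iic hρ r)
    (Filter.Eventually.of_forall fun s => (Real.exp_pos _).le), integral_exp_mul_Iic hρ,
    ← ENNReal.ofReal_mul (by positivity)]
  congr 1
  ring

lemma cosh_gap (u d : ℝ) (hu : 1 ≤ u) (hd : 0 ≤ d) (hdu : d ≤ u) :
    Real.exp u / 9 * min 1 d ≤ Real.cosh u - Real.cosh (u - d) := by
  have e1 : Real.cosh u - Real.cosh (u - d) =
      Real.exp u / 2 * ((1 - Real.exp (-(2 * u - d))) * (1 - Real.exp (-d))) := by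
    rw [Real.cosh_eq, Real.cosh_eq]
    have a1 : Real.exp (u - d) = Real.exp u * Real.exp (-d) := by rw [← Real.exp_add]; ring_nf
    have a2 : Real.exp (-u) = Real.exp u * (Real.exp (-(2*u-d)) * Real.exp (-d)) := by
      rw [← Real.exp_add, ← Real.exp_add]; ring_nf
    have a3 : Real.exp (-(u - d)) = Real.exp u * Real.exp (-(2*u-d)) := by
      rw [← Real.exp_add]; ring_nf
    rw [a1, a2, a3]; ring
  rw [e1]
  have key : ∀ x : ℝ, 0 ≤ x → min 1 x / 2 ≤ 1 - Real.exp (-x) := by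
    intro x hx
    have h1 : x + 1 ≤ Real.exp x := Real.add_one_le_exp x
    have h2 : Real.exp (-x) ≤ 1 / (x + 1) := by
      rw [Real.exp_neg, ← one_div]
      exact one_div_le_one_div_of_le (by linarith) h1
    have h3 : min 1 x / 2 ≤ 1 - 1 / (x + 1) := by
      rw [le_sub_iff_add_le, ← le_sub_iff_add_le', div_le_iff₀ (by linarith)]
      rcases le_total 1 x with h | h
      · rw [min_eq_left h]; nlinarith
      · rw [min_eq_right h]; nlinarith
    linarith
  have k1 := key (2 * u - d) (by linarith)
  rw [min_eq_left (by linarith)] at k1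
  have k2 := key d hd
  have hm : 0 ≤ min 1 d := le_min zero_le_one hd
  have k3 : 1 / 2 * (min 1 d / 2) ≤ (1 - Real.exp (-(2 * u - d))) * (1 - Real.exp (-d)) :=
    mul_le_mul k1 k2 (by linarith) (by linarith)
  have hp := Real.exp_pos u
  calc Real.exp u / 9 * min 1 d ≤ Real.exp u / 2 * (1 / 2 * (min 1 d / 2)) := by
        nlinarith [mul_nonneg hp.le hm]
    _ ≤ _ := mul_le_mul_of_nonneg_left k3 (by positivity)

lemma sing_bound (u d : ℝ) (hu : 1 ≤ u) (hd : 0 ≤ d) (hdu : d ≤ u) :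
    (Real.cosh u - Real.cosh (u - d)) ^ (-(1/2) : ℝ) ≤
      3 * Real.exp (-(u / 2)) * (1 + Ksing d) := by
  rcases hd.eq_or_lt with h | h
  · subst h
    rw [sub_zero, sub_self, Real.zero_rpow (by norm_num)]
    have := Ksing_nonneg 0
    positivity
  have hm : 0 < min 1 d := lt_min zero_lt_one h
  have hp := Real.exp_pos u
  have g := cosh_gap u d hu hd hdu
  have g2 : (Real.cosh u - Real.cosh (u - d)) ^ (-(1/2) : ℝ) ≤
      (Real.exp u / 9 * min 1 d) ^ (-(1/2) : ℝ) :=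
    Real.rpow_le_rpow_of_nonpos (by positivity) g (by norm_num)
  refine g2.trans ?_
  rw [Real.mul_rpow (by positivity) hm.le, Real.div_rpow hp.le (by norm_num), ← Real.exp_mul]
  have h9 : (9:ℝ) ^ (-(1/2) : ℝ) = 1 / 3 := by
    rw [show (9:ℝ) = 3 ^ (2:ℝ) by norm_num, ← Real.rpow_mul (by norm_num)]
    norm_num [Real.rpow_neg_one]
  rw [h9]
  have hK : (min 1 d) ^ (-(1/2) : ℝ) ≤ 1 + Ksing d := by
    rcases le_total d 1 with h1 | h1
    · rw [min_eq_right h1]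
      have : Ksing d = d ^ (-(1/2) : ℝ) := by
        unfold Ksing; exact Set.indicator_of_mem (s := Set.Ioc (0:ℝ) 1) ⟨h, h1⟩ _
      linarith
    · rw [min_eq_left h1, Real.one_rpow]
      have := Ksing_nonneg d
      linarith
  have e : Real.exp (u * -(1/2)) / (1/3) = 3 * Real.exp (-(u/2)) := by
    rw [show u * -(1/2) = -(u/2) by ring]; ring
  rw [e]
  exact mul_le_mul_of_nonneg_left hK (by positivity)

lemma sing_bound' (u s : ℝ) (hu : 1 ≤ u) (h1 : -u ≤ s) (h2 : s ≤ u) :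
    (Real.cosh u - Real.cosh s) ^ (-(1/2) : ℝ) ≤
      3 * Real.exp (-(u / 2)) * (1 + (Ksing (u - s) + Ksing (u + s))) := by
  have a := Ksing_nonneg (u - s)
  have b := Ksing_nonneg (u + s)
  rcases le_total 0 s with h | h
  · have := sing_bound u (u - s) hu (by linarith) (by linarith)
    rw [show u - (u - s) = s by ring] at this
    refine this.trans (mul_le_mul_of_nonneg_left (by linarith) (by positivity))
  · have := sing_bound u (u + s) hu (by linarith) (by linarith)
    rw [show u - (u + s) = -s by ring, Real.cosh_neg] at this
    refine this.trans (mul_le_mul_of_nonneg_left (by linarith) (by positivity))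

lemma psi_bound (m₁ m₂ : ℕ) (hm₁ : 1 ≤ m₁) (u s : ℝ) (hu : 1 ≤ u) (h1 : -u ≤ s) (h2 : s ≤ u) :
    psiT m₁ m₂ u s ≤ 3 * Real.exp (((m₁ : ℝ) + 2 * (m₂ : ℝ)) / 2 * u) *
      (1 + (Ksing (u - s) + Ksing (u + s))) := by
  have a := Ksing_nonneg (u - s)
  have b := Ksing_nonneg (u + s)
  have hsinh : Real.sinh u ≤ Real.exp u := by
    rw [Real.sinh_eq]; linarith [Real.exp_pos u, Real.exp_pos (-u)]
  have hs0 : 0 ≤ Real.sinh u := Real.sinh_nonneg_iff.2 (by linarith)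
  have hcosh : Real.cosh u ≤ Real.exp u := by
    rw [Real.cosh_eq]
    have : Real.exp (-u) ≤ Real.exp u := Real.exp_le_exp.2 (by linarith)
    linarith
  have hgap : 0 ≤ Real.cosh u - Real.cosh s := by
    rw [sub_nonneg, Real.cosh_le_cosh, abs_of_nonneg (by linarith : 0 ≤ u)]
    exact abs_le.2 ⟨h1, h2⟩
  unfold psiT
  by_cases hm : 2 ≤ m₁ + m₂
  · have ha : (0:ℝ) ≤ ((m₁ : ℝ) + (m₂ : ℝ) - 2) / 2 := by
      have : (2:ℝ) ≤ (m₁:ℝ) + m₂ := by exact_mod_cast hm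
      linarith
    have c1 : Real.cosh u ^ ((m₂ : ℝ) / 2) ≤ Real.exp (u * ((m₂ : ℝ) / 2)) := by
      rw [Real.exp_mul]
      exact Real.rpow_le_rpow (Real.cosh_pos u).le hcosh (by positivity)
    have c2 : (Real.cosh u - Real.cosh s) ^ (((m₁ : ℝ) + (m₂ : ℝ) - 2) / 2) ≤
        Real.exp (u * (((m₁ : ℝ) + (m₂ : ℝ) - 2) / 2)) := by
      rw [Real.exp_mul]
      exact Real.rpow_le_rpow hgap (by linarith [Real.cosh_pos s]) ha
    have hc := Real.cosh_pos u
    calc _ ≤ Real.exp u * Real.exp (u * ((m₂ : ℝ) / 2)) *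
          Real.exp (u * (((m₁ : ℝ) + (m₂ : ℝ) - 2) / 2)) := by
          apply mul_le_mul _ c2 (Real.rpow_nonneg hgap _) (by positivity)
          exact mul_le_mul hsinh c1 (by positivity) (by positivity)
      _ = Real.exp (((m₁ : ℝ) + 2 * (m₂ : ℝ)) / 2 * u) * 1 := by
          rw [← Real.exp_add, ← Real.exp_add, mul_one]; ring_nf
      _ ≤ Real.exp (((m₁ : ℝ) + 2 * (m₂ : ℝ)) / 2 * u) *
          (3 * (1 + (Ksing (u - s) + Ksing (u + s)))) :=
          mul_le_mul_of_nonneg_left (by linarith) (by positivity)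
      _ = _ := by ring
  · obtain ⟨rfl, rfl⟩ : m₁ = 1 ∧ m₂ = 0 := by omega
    have := sing_bound' u s hu h1 h2
    have e1 : (((1:ℕ):ℝ) + ((0:ℕ):ℝ) - 2) / 2 = -(1/2) := by norm_num
    have e2 : (((1:ℕ):ℝ) + 2 * ((0:ℕ):ℝ)) / 2 * u = u + -(u / 2) := by push_cast; ring
    rw [e1, e2, Real.exp_add]
    simp only [Nat.cast_zero, zero_div, Real.rpow_zero, mul_one]
    calc _ ≤ Real.exp u * (3 * Real.exp (-(u / 2)) * (1 + (Ksing (u - s) + Ksing (u + s)))) :=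
          mul_le_mul hsinh this (Real.rpow_nonneg hgap _) (by positivity)
      _ = _ := by ring

/-- For every `u ≥ 1` and `r ∈ ℝ`,
`∫_{{s : −u ≤ s ≤ u, s ≤ r}} ψ̃(u,s) e^{ρ s} ds ≤ C e^{ρ u} e^{ρ r}`,
where `ρ = (m₁ + 2m₂)/2`. -/
theorem psi_exponential_estimate (m₁ m₂ : ℕ) (hm₁ : 1 ≤ m₁) :
    ∃ C : ℝ≥0, ∀ (u : ℝ), 1 ≤ u → ∀ r : ℝ,
      (∫⁻ s in Set.Icc (-u) u ∩ Set.Iic r,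
          ENNReal.ofReal
            (psiT m₁ m₂ u s * Real.exp (((m₁ : ℝ) + 2 * (m₂ : ℝ)) / 2 * s))) ≤
        C * ENNReal.ofReal
          (Real.exp (((m₁ : ℝ) + 2 * (m₂ : ℝ)) / 2 * u) *
            Real.exp (((m₁ : ℝ) + 2 * (m₂ : ℝ)) / 2 * r)) := by
  set ρ : ℝ := ((m₁ : ℝ) + 2 * (m₂ : ℝ)) / 2 with hρdef
  have hρ : 0 < ρ := by
    have : (1:ℝ) ≤ m₁ := by exact_mod_cast hm₁
    positivity
  set A : ℝ≥0∞ := ∫⁻ x, ENNReal.ofReal (Ksing x) with hA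
  have hAtop : A ≠ ⊤ := Ksing_int
  have hCtop : 3 * (ENNReal.ofReal (1 / ρ) + (A + A)) ≠ ⊤ :=
    ENNReal.mul_ne_top (by norm_num)
      (ENNReal.add_ne_top.2 ⟨ENNReal.ofReal_ne_top, ENNReal.add_ne_top.2 ⟨hAtop, hAtop⟩⟩)
  refine ⟨(3 * (ENNReal.ofReal (1 / ρ) + (A + A))).toNNReal, ?_⟩
  intro u hu r
  rw [ENNReal.coe_toNNReal hCtop]
  set E := ENNReal.ofReal (Real.exp (ρ * u)) with hE
  set R := ENNReal.ofReal (Real.exp (ρ * r)) with hR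
  have hk1 : Measurable fun s => ENNReal.ofReal (Ksing (u - s)) :=
    (Ksing_meas.comp (measurable_const.sub measurable_id)).ennreal_ofReal
  have hk2 : Measurable fun s => ENNReal.ofReal (Ksing (u + s)) :=
    (Ksing_meas.comp (measurable_const.add measurable_id)).ennreal_ofReal
  have hexp : Measurable fun s : ℝ => ENNReal.ofReal (Real.exp (ρ * s)) := by fun_prop
  calc _ ≤ ∫⁻ s in Set.Icc (-u) u ∩ Set.Iic r, 3 * E * (ENNReal.ofReal (Real.exp (ρ * s)) +
          R * (ENNReal.ofReal (Ksing (u - s)) + ENNReal.ofReal (Ksing (u + s)))) := by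
        refine setLIntegral_mono' (measurableSet_Icc.inter measurableSet_Iic) ?_
        rintro s ⟨⟨h1, h2⟩, h3⟩
        have hb := psi_bound m₁ m₂ hm₁ u s hu h1 h2
        rw [← hρdef] at hb
        have a := Ksing_nonneg (u - s)
        have b := Ksing_nonneg (u + s)
        have hsr : Real.exp (ρ * s) ≤ Real.exp (ρ * r) :=
          Real.exp_le_exp.2 (mul_le_mul_of_nonneg_left h3 hρ.le)
        rw [hE, hR, ← ENNReal.ofReal_add a b, ← ENNReal.ofReal_mul (by positivity),
          ← ENNReal.ofReal_add (by positivity) (by positivity),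
          show (3:ℝ≥0∞) = ENNReal.ofReal 3 by norm_num, ← ENNReal.ofReal_mul (by positivity),
          ← ENNReal.ofReal_mul (by positivity)]
        apply ENNReal.ofReal_le_ofReal
        calc _ ≤ 3 * Real.exp (ρ * u) * (1 + (Ksing (u - s) + Ksing (u + s))) *
              Real.exp (ρ * s) := mul_le_mul_of_nonneg_right hb (by positivity)
          _ = 3 * Real.exp (ρ * u) * (Real.exp (ρ * s) +
              Real.exp (ρ * s) * (Ksing (u - s) + Ksing (u + s))) := by ring
          _ ≤ _ := by gcongr
    _ ≤ ∫⁻ s in Set.Iic r, 3 * E * (ENNReal.ofReal (Real.exp (ρ * s)) +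
          R * (ENNReal.ofReal (Ksing (u - s)) + ENNReal.ofReal (Ksing (u + s)))) :=
        lintegral_mono_set Set.inter_subset_right
    _ = 3 * E * ((∫⁻ s in Set.Iic r, ENNReal.ofReal (Real.exp (ρ * s))) +
          R * ((∫⁻ s in Set.Iic r, ENNReal.ofReal (Ksing (u - s))) +
            ∫⁻ s in Set.Iic r, ENNReal.ofReal (Ksing (u + s)))) := by
        rw [lintegral_const_mul _ (by fun_prop), lintegral_add_left hexp,
          lintegral_const_mul _ (by fun_prop), lintegral_add_left hk1]
    _ ≤ 3 * E * (ENNReal.ofReal (1 / ρ) * R + R * (A + A)) := by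
        rw [exp_int ρ hρ r]
        have i1 : (∫⁻ s in Set.Iic r, ENNReal.ofReal (Ksing (u - s))) ≤ A :=
          (setLIntegral_le_lintegral _ _).trans
            (lintegral_sub_left_eq_self (fun x => ENNReal.ofReal (Ksing x)) u).le
        have i2 : (∫⁻ s in Set.Iic r, ENNReal.ofReal (Ksing (u + s))) ≤ A :=
          (setLIntegral_le_lintegral _ _).trans
            (lintegral_add_left_eq_self (fun x => ENNReal.ofReal (Ksing x)) u).le
        gcongr
    _ = _ := by
        rw [ENNReal.ofReal_mul (Real.exp_pos _).le]
        ring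

end
end

section
/- For all measurable sets D ⊆ K and E ⊆ K', ∫_D ∫_E a(k, k') dν(k') dμ(k) ≤ ∫₀^{μ(D)} ∫₀^{ν(E)} a**(x, y) dy dx. -/
open MeasureTheory ENNReal NNReal

noncomputable section

/-- Nonincreasing rearrangement: `f*(x) = inf{λ ≥ 0 : μ({ω : f ω > λ}) ≤ x}`. -/
def rearr {Ω : Type*} [MeasurableSpace Ω] (μ : Measure Ω) (f : Ω → ℝ) (x : ℝ) : ℝ :=
  sInf {l : ℝ | 0 ≤ l ∧ μ {ω | l < f ω} ≤ ENNReal.ofReal x}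

/-- Rearrangement in the second variable: `a*(k, y)`. -/
def rearrSnd {K K' : Type*} [MeasurableSpace K'] (ν : Measure K')
    (a : K → K' → ℝ) (k : K) (y : ℝ) : ℝ :=
  rearr ν (a k) y

/-- Double rearrangement: `a**(x, y)` is the rearrangement in `k` of `k ↦ a*(k, y)`. -/
def rearrDouble {K K' : Type*} [MeasurableSpace K] [MeasurableSpace K']
    (μ : Measure K) (ν : Measure K') (a : K → K' → ℝ) (x y : ℝ) : ℝ :=
  rearr μ (fun k => rearrSnd ν a k y) x

theorem lt_rearr_iff {Ω : Type*} [MeasurableSpace Ω] (μ : Measure Ω) [IsProbabilityMeasure μ]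
    (f : Ω → ℝ) (hf : Measurable f) {x l : ℝ} (hx : 0 < x) (hl : 0 ≤ l) :
    l < rearr μ f x ↔ ENNReal.ofReal x < μ {ω | l < f ω} := by
  have hbdd : BddBelow {l : ℝ | 0 ≤ l ∧ μ {ω | l < f ω} ≤ ENNReal.ofReal x} :=
    ⟨0, fun l h => h.1⟩
  constructor
  · intro h
    by_contra hc
    exact absurd (csInf_le hbdd (show l ∈ _ from ⟨hl, not_lt.1 hc⟩)) (not_le.2 h)
  · intro h
    -- continuity from below of the distribution function
    have hU : {ω | l < f ω} = ⋃ n : ℕ, {ω | l + 1 / ((n : ℝ) + 1) < f ω} := by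
      ext ω
      simp only [Set.mem_ofPred_eq, Set.mem_iUnion]
      constructor
      · intro h
        obtain ⟨n, hn⟩ := exists_nat_one_div_lt (sub_pos.2 h)
        exact ⟨n, by linarith⟩
      · rintro ⟨n, hn⟩
        have : (0 : ℝ) < 1 / ((n : ℝ) + 1) := by positivity
        linarith
    have hmono : Monotone fun n : ℕ => {ω | l + 1 / ((n : ℝ) + 1) < f ω} := by
      intro n m hnm ω hω
      simp only [Set.mem_ofPred_eq] at hω ⊢
      have : 1 / ((m : ℝ) + 1) ≤ 1 / ((n : ℝ) + 1) := by gcongr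
      linarith
    rw [hU, hmono.measure_iUnion, lt_iSup_iff] at h
    obtain ⟨n, hn⟩ := h
    have hpos : (0 : ℝ) < 1 / ((n : ℝ) + 1) := by positivity
    refine lt_of_lt_of_le (b := l + 1 / ((n : ℝ) + 1)) (by linarith) ?_
    apply le_csInf
    · -- nonempty
      have ht : Filter.Tendsto (fun n : ℕ => μ {ω | (n : ℝ) < f ω}) Filter.atTop
          (nhds (μ (⋂ n : ℕ, {ω | (n : ℝ) < f ω}))) := by
        apply tendsto_measure_iInter_atTop
        · intro n
          exact (measurableSet_lt measurable_const hf).nullMeasurableSet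
        · intro n m hnm ω hω
          simp only [Set.mem_ofPred_eq] at hω ⊢
          have : (n : ℝ) ≤ m := by exact_mod_cast hnm
          linarith
        · exact ⟨0, measure_ne_top _ _⟩
      have he : (⋂ n : ℕ, {ω | (n : ℝ) < f ω}) = ∅ := by
        ext ω
        simp only [Set.mem_iInter, Set.mem_ofPred_eq, Set.mem_empty_iff_false, iff_false, not_forall,
          not_lt]
        exact exists_nat_ge (f ω)
      rw [he, measure_empty] at ht
      obtain ⟨m, hm⟩ := (ht.eventually (gt_mem_nhds (ENNReal.ofReal_pos.2 hx))).exists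
      exact ⟨m, by positivity, hm.le⟩
    · rintro b ⟨hb0, hb⟩
      by_contra hc
      push Not at hc
      have : μ {ω | l + 1 / ((n : ℝ) + 1) < f ω} ≤ μ {ω | b < f ω} :=
        measure_mono fun ω hω => lt_trans hc hω
      exact absurd (hn.trans_le (this.trans hb)) (lt_irrefl _)

theorem rearr_nonneg {Ω : Type*} [MeasurableSpace Ω] (μ : Measure Ω) (f : Ω → ℝ) (x : ℝ) :
    0 ≤ rearr μ f x := Real.sInf_nonneg fun _ h => h.1

theorem measurable_rearr {Ω T : Type*} [MeasurableSpace Ω] [MeasurableSpace T]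
    (μ : Measure Ω) [IsProbabilityMeasure μ]
    (F : Ω → T → ℝ) (hF : Measurable fun p : Ω × T => F p.1 p.2) :
    Measurable fun p : T × ℝ => if 0 < p.2 then rearr μ (fun ω => F ω p.1) p.2 else 0 := by
  apply measurable_of_Ioi
  intro l
  rcases lt_or_ge l 0 with hl | hl
  · convert MeasurableSet.univ
    ext p
    simp only [Set.mem_preimage, Set.mem_Ioi, Set.mem_univ, iff_true]
    split_ifs
    · exact hl.trans_le (rearr_nonneg _ _ _)
    · exact hl
  · have : ((fun p : T × ℝ => if 0 < p.2 then rearr μ (fun ω => F ω p.1) p.2 else 0) ⁻¹' Set.Ioi l)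
        = {p : T × ℝ | 0 < p.2} ∩
          {p : T × ℝ | ENNReal.ofReal p.2 < μ {ω | l < F ω p.1}} := by
      ext p
      simp only [Set.mem_preimage, Set.mem_Ioi, Set.mem_inter_iff, Set.mem_ofPred_eq]
      split_ifs with h
      · rw [lt_rearr_iff μ (fun ω => F ω p.1) (hF.comp measurable_prodMk_right) h hl]
        simp [h]
      · simp [h, hl]
    rw [this]
    apply (measurableSet_lt measurable_const measurable_snd).inter
    apply measurableSet_lt (ENNReal.measurable_ofReal.comp measurable_snd)
    have h1 : MeasurableSet {p : Ω × T | l < F p.1 p.2} := measurableSet_lt measurable_const hF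
    have h2 : Measurable fun t : T => μ {ω | l < F ω t} := measurable_measure_prodMk_right h1
    exact h2.comp measurable_fst

theorem lintegral_le_rearr {Ω : Type*} [MeasurableSpace Ω] (μ : Measure Ω)
    [IsProbabilityMeasure μ] (f : Ω → ℝ) (hf : Measurable f) (h0 : ∀ ω, 0 ≤ f ω) (D : Set Ω)
    (hD : MeasurableSet D) :
    ∫⁻ ω in D, ENNReal.ofReal (f ω) ∂μ ≤
      ∫⁻ x in Set.Ioo (0 : ℝ) (μ D).toReal, ENNReal.ofReal (rearr μ f x) := by
  have hm : Measurable fun x : ℝ => if 0 < x then rearr μ f x else 0 :=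
    (measurable_rearr μ (fun ω (_ : Unit) => f ω) (hf.comp measurable_fst)).comp
      (measurable_const (a := ()) |>.prodMk measurable_id)
  have ham : AEMeasurable (rearr μ f) (volume.restrict (Set.Ioo (0 : ℝ) (μ D).toReal)) := by
    refine ⟨_, hm, ?_⟩
    filter_upwards [ae_restrict_mem measurableSet_Ioo] with x hx
    rw [if_pos hx.1]
  rw [lintegral_eq_lintegral_meas_lt _ (Filter.Eventually.of_forall h0) hf.aemeasurable,
    lintegral_eq_lintegral_meas_lt _ (Filter.Eventually.of_forall (rearr_nonneg μ f)) ham]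
  refine setLIntegral_mono' measurableSet_Ioi fun l hl => ?_
  rw [Measure.restrict_apply (measurableSet_lt measurable_const hf)]
  have hsub : Set.Ioo (0 : ℝ) (μ ({ω | l < f ω} ∩ D)).toReal ⊆
      {x | l < rearr μ f x} ∩ Set.Ioo (0 : ℝ) (μ D).toReal := by
    rintro x ⟨hx0, hx⟩
    refine ⟨(lt_rearr_iff μ f hf hx0 (le_of_lt hl)).2 ?_, hx0, hx.trans_le ?_⟩
    · exact ((ENNReal.ofReal_lt_iff_lt_toReal hx0.le (measure_ne_top _ _)).2 hx).trans_le
        (measure_mono Set.inter_subset_left)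
    · exact ENNReal.toReal_mono (measure_ne_top _ _) (measure_mono Set.inter_subset_right)
  calc μ ({ω | l < f ω} ∩ D)
      = volume (Set.Ioo (0 : ℝ) (μ ({ω | l < f ω} ∩ D)).toReal) := by
        rw [Real.volume_Ioo, sub_zero, ENNReal.ofReal_toReal (measure_ne_top _ _)]
    _ ≤ volume ({x | l < rearr μ f x} ∩ Set.Ioo (0 : ℝ) (μ D).toReal) := measure_mono hsub
    _ ≤ _ := Measure.le_restrict_apply _ _

/-- **Lemma 7(b)(iii)**: for measurable `D ⊆ K`, `E ⊆ K'`,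
`∫_D ∫_E a(k,k') dν dμ ≤ ∫₀^{μ(D)} ∫₀^{ν(E)} a**(x,y) dy dx`. -/
theorem integral_le_rearrDouble {K K' : Type*} [MeasurableSpace K] [MeasurableSpace K']
    (μ : Measure K) (ν : Measure K') [IsProbabilityMeasure μ] [IsProbabilityMeasure ν]
    (a : K → K' → ℝ) (hmeas : Measurable fun p : K × K' => a p.1 p.2)
    (hpos : ∀ k k', 0 ≤ a k k')
    (D : Set K) (E : Set K') (hD : MeasurableSet D) (hE : MeasurableSet E) :
    (∫⁻ k in D, ∫⁻ k' in E, ENNReal.ofReal (a k k') ∂ν ∂μ) ≤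
      ∫⁻ x in Set.Ioo (0 : ℝ) (μ D).toReal,
        ∫⁻ y in Set.Ioo (0 : ℝ) (ν E).toReal,
          ENNReal.ofReal (rearrDouble μ ν a x y) := by
  -- measurable version of `a*`
  set A : K → ℝ → ℝ := fun k y => if 0 < y then rearr ν (a k) y else 0 with hA
  have hAm : Measurable fun p : K × ℝ => A p.1 p.2 :=
    measurable_rearr ν (fun k' k => a k k') (hmeas.comp measurable_swap)
  have hA0 : ∀ k y, 0 ≤ A k y := by
    intro k y
    simp only [hA]
    split_ifs
    · exact rearr_nonneg _ _ _
    · exact le_rfl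
  -- measurable version of `a**`
  set B : ℝ → ℝ → ℝ := fun y x => if 0 < x then rearr μ (fun k => A k y) x else 0 with hB
  have hBm : Measurable fun p : ℝ × ℝ => B p.1 p.2 := measurable_rearr μ A hAm
  calc (∫⁻ k in D, ∫⁻ k' in E, ENNReal.ofReal (a k k') ∂ν ∂μ)
      ≤ ∫⁻ k in D, (∫⁻ y in Set.Ioo (0 : ℝ) (ν E).toReal, ENNReal.ofReal (A k y)) ∂μ := by
        refine lintegral_mono fun k => ?_
        refine (lintegral_le_rearr ν (a k) (hmeas.comp measurable_prodMk_left) (hpos k) E hE).trans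
          (le_of_eq ?_)
        refine setLIntegral_congr_fun measurableSet_Ioo fun y hy => ?_
        simp only [hA, if_pos hy.1]
    _ = ∫⁻ y in Set.Ioo (0 : ℝ) (ν E).toReal, ∫⁻ k in D, ENNReal.ofReal (A k y) ∂μ :=
        lintegral_lintegral_swap (ENNReal.measurable_ofReal.comp hAm).aemeasurable
    _ ≤ ∫⁻ y in Set.Ioo (0 : ℝ) (ν E).toReal, ∫⁻ x in Set.Ioo (0 : ℝ) (μ D).toReal,
          ENNReal.ofReal (B y x) := by
        refine lintegral_mono fun y => ?_
        refine (lintegral_le_rearr μ (fun k => A k y) (hAm.comp measurable_prodMk_right)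
          (fun k => hA0 k y) D hD).trans (le_of_eq ?_)
        refine setLIntegral_congr_fun measurableSet_Ioo fun x hx => ?_
        simp only [hB, if_pos hx.1]
    _ = ∫⁻ x in Set.Ioo (0 : ℝ) (μ D).toReal, ∫⁻ y in Set.Ioo (0 : ℝ) (ν E).toReal,
          ENNReal.ofReal (B y x) :=
        lintegral_lintegral_swap (ENNReal.measurable_ofReal.comp hBm).aemeasurable
    _ = _ := by
        refine setLIntegral_congr_fun measurableSet_Ioo fun x hx => ?_
        refine setLIntegral_congr_fun measurableSet_Ioo fun y hy => ?_
        simp only [hB, hA, if_pos hx.1, if_pos hy.1, rearrDouble, rearrSnd]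

end
end

section
/- Let ρ > 0. There exists a constant C = C(ρ) such that for all measurable functions F, H : (0,1] → [0,∞] and every measurable function G : (0,1] × (0,1] × (0,∞) → [0,1], ∫₀^∞ ∫₀^1 ∫₀^1 F(x) H(y) G(x,y,u) e^{ρ u} dy dx du ≤ C · ( ∫₀^1 F(x)² dx )^{1/2} · ( ∫₀^1 H(y)² dy )^{1/2} · ( ∫₀^∞ ∫₀^1 ∫₀^1 G(x,y,u) e^{2ρ u} dy dx du )^{1/2}. -/
open MeasureTheory ENNReal NNReal

lemma exp_layer (ρ : ℝ) (hρ : 0 < ρ) (a : ℝ) :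
    ∫⁻ u in Set.Iic a, ENNReal.ofReal (Real.exp (ρ * u)) = ENNReal.ofReal (Real.exp (ρ * a) / ρ) := by
  rw [← integral_exp_mul_Iic hρ a, ofReal_integral_eq_lintegral_ofReal]
  · exact integrableOn_exp_mul_Iic hρ a
  · exact Filter.Eventually.of_forall fun u => (Real.exp_pos _).le

lemma inner_bound (ρ : ℝ) (hρ : 0 < ρ) (g : ℝ → ℝ≥0∞) (hg : Measurable g) (h1 : ∀ u, g u ≤ 1) :
    ∫⁻ u in Set.Ioi (0 : ℝ), g u * ENNReal.ofReal (Real.exp (ρ * u)) ≤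
      ENNReal.ofReal (1 / ρ + 1) *
        (∫⁻ u in Set.Ioi (0 : ℝ), g u * ENNReal.ofReal (Real.exp (2 * ρ * u))) ^ (1 / 2 : ℝ) := by
  set K := ∫⁻ u in Set.Ioi (0 : ℝ), g u * ENNReal.ofReal (Real.exp (2 * ρ * u)) with hK
  have hc : 0 < 1 / ρ + 1 := by positivity
  have hc1 : (1 : ℝ≥0∞) ≤ ENNReal.ofReal (1 / ρ + 1) := by
    rw [ENNReal.one_le_ofReal]
    have : 0 < 1 / ρ := by positivity
    linarith
  rcases le_or_gt K 1 with hK1 | hK1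
  · calc _ ≤ K := by
          refine setLIntegral_mono' measurableSet_Ioi fun u hu => ?_
          have hu : 0 < u := hu
          gcongr
          nlinarith
      _ = K ^ (1 : ℝ) := (ENNReal.rpow_one K).symm
      _ ≤ K ^ (1 / 2 : ℝ) := ENNReal.rpow_le_rpow_of_exponent_ge hK1 (by norm_num)
      _ = 1 * K ^ (1 / 2 : ℝ) := (one_mul _).symm
      _ ≤ _ := by gcongr
  rcases eq_or_ne K ⊤ with hT | hT
  · rw [hT, ENNReal.top_rpow_of_pos (by norm_num), ENNReal.mul_top]
    · exact le_top
    · simpa using hc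
  obtain ⟨k, hk0, hk⟩ : ∃ k : ℝ, 0 < k ∧ K = ENNReal.ofReal k :=
    ⟨K.toReal, ENNReal.toReal_pos (by positivity) hT, (ENNReal.ofReal_toReal hT).symm⟩
  set a := Real.log (Real.sqrt k) / ρ with ha
  have hs : 0 < Real.sqrt k := Real.sqrt_pos.2 hk0
  have hea : Real.exp (ρ * a) = Real.sqrt k := by
    rw [ha, mul_div_cancel₀ _ hρ.ne', Real.exp_log hs]
  have hpt : ∀ u, g u * ENNReal.ofReal (Real.exp (ρ * u)) ≤
      (Set.Iic a).indicator (fun u => ENNReal.ofReal (Real.exp (ρ * u))) u +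
        ENNReal.ofReal (Real.exp (-(ρ * a))) * (g u * ENNReal.ofReal (Real.exp (2 * ρ * u))) := by
    intro u
    by_cases hu : u ≤ a
    · rw [Set.indicator_of_mem (by exact hu)]
      exact le_add_right ((mul_le_mul_left (h1 u) _).trans (one_mul _).le)
    · rw [Set.indicator_of_notMem (by exact hu), zero_add, mul_left_comm,
        ← ENNReal.ofReal_mul (Real.exp_pos _).le, ← Real.exp_add]
      push Not at hu
      gcongr
      nlinarith
  calc _ ≤ ∫⁻ u in Set.Ioi (0 : ℝ),
          ((Set.Iic a).indicator (fun u => ENNReal.ofReal (Real.exp (ρ * u))) u +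
        ENNReal.ofReal (Real.exp (-(ρ * a))) * (g u * ENNReal.ofReal (Real.exp (2 * ρ * u)))) :=
        lintegral_mono hpt
    _ = (∫⁻ u in Set.Ioi (0 : ℝ),
          (Set.Iic a).indicator (fun u => ENNReal.ofReal (Real.exp (ρ * u))) u) +
        ENNReal.ofReal (Real.exp (-(ρ * a))) * K := by
        rw [lintegral_add_left, lintegral_const_mul]
        · fun_prop
        · exact Measurable.indicator (by fun_prop) measurableSet_Iic
    _ ≤ ENNReal.ofReal (Real.exp (ρ * a) / ρ) + ENNReal.ofReal (Real.exp (-(ρ * a))) * K := by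
        gcongr
        rw [← exp_layer ρ hρ a, ← lintegral_indicator measurableSet_Iic]
        exact setLIntegral_le_lintegral _ _
    _ = _ := by
        rw [Real.exp_neg, hea, hk, ENNReal.ofReal_rpow_of_pos hk0, ← Real.sqrt_eq_rpow,
          ← ENNReal.ofReal_mul (by positivity), ← ENNReal.ofReal_mul (by positivity),
          ← ENNReal.ofReal_add (by positivity) (by positivity)]
        congr 1
        have := Real.mul_self_sqrt hk0.le
        field_simp
        nlinarith

/-- **Step 4 estimate**: for `ρ > 0` there is `C = C(ρ)` such that for all measurable
`F, H : (0,1] → [0,∞]` and measurable `G : (0,1]×(0,1]×(0,∞) → [0,1]`,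
`∫₀^∞∫₀^1∫₀^1 F(x)H(y)G(x,y,u)e^{ρu} dy dx du` is bounded by
`C (∫F²)^{1/2} (∫H²)^{1/2} (∫∫∫ G e^{2ρu})^{1/2}`. -/
theorem trilinear_exponential_estimate (ρ : ℝ) (hρ : 0 < ρ) :
    ∃ C : ℝ≥0, ∀ (F H : ℝ → ℝ≥0∞) (G : ℝ → ℝ → ℝ → ℝ≥0∞),
      Measurable F → Measurable H →
      Measurable (fun p : ℝ × ℝ × ℝ => G p.1 p.2.1 p.2.2) →
      (∀ x y u, G x y u ≤ 1) →
      (∫⁻ u in Set.Ioi (0 : ℝ), ∫⁻ x in Set.Ioc (0 : ℝ) 1, ∫⁻ y in Set.Ioc (0 : ℝ) 1,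
          F x * H y * G x y u * ENNReal.ofReal (Real.exp (ρ * u))) ≤
        C * (∫⁻ x in Set.Ioc (0 : ℝ) 1, F x ^ 2) ^ (1 / 2 : ℝ) *
          (∫⁻ y in Set.Ioc (0 : ℝ) 1, H y ^ 2) ^ (1 / 2 : ℝ) *
          (∫⁻ u in Set.Ioi (0 : ℝ), ∫⁻ x in Set.Ioc (0 : ℝ) 1, ∫⁻ y in Set.Ioc (0 : ℝ) 1,
            G x y u * ENNReal.ofReal (Real.exp (2 * ρ * u))) ^ (1 / 2 : ℝ) := by
  refine ⟨Real.toNNReal (1 / ρ + 1), ?_⟩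
  intro F H G hF hH hG h1
  set μ : Measure ℝ := volume.restrict (Set.Ioc (0 : ℝ) 1) with hμ
  set ν : Measure ℝ := volume.restrict (Set.Ioi (0 : ℝ)) with hν
  change _ ≤ ENNReal.ofReal (1 / ρ + 1) * _ * _ * _
  have hG' : Measurable (fun q : ℝ × (ℝ × ℝ) => G q.2.1 q.2.2 q.1) :=
    hG.comp (g := fun p : ℝ × ℝ × ℝ => G p.1 p.2.1 p.2.2)
      (f := fun q : ℝ × (ℝ × ℝ) => (q.2.1, q.2.2, q.1)) (by fun_prop)
  have key : ∀ (Φ : ℝ × (ℝ × ℝ) → ℝ≥0∞), Measurable Φ →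
      ∫⁻ u, ∫⁻ x, ∫⁻ y, Φ (u, (x, y)) ∂μ ∂μ ∂ν = ∫⁻ p, ∫⁻ u, Φ (u, p) ∂ν ∂(μ.prod μ) := by
    intro Φ hΦ
    rw [← lintegral_lintegral_swap (f := fun u p => Φ (u, p)) (by exact hΦ.aemeasurable)]
    refine lintegral_congr fun u => ?_
    rw [lintegral_prod]
    exact (hΦ.comp measurable_prodMk_left).aemeasurable
  have hGp : ∀ p : ℝ × ℝ, Measurable (fun u => G p.1 p.2 u) := fun p =>
    hG'.comp (measurable_prodMk_right (y := p))
  have hK : Measurable (fun p : ℝ × ℝ =>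
      ∫⁻ u, G p.1 p.2 u * ENNReal.ofReal (Real.exp (2 * ρ * u)) ∂ν) := by
    refine Measurable.lintegral_prod_left'
      (f := fun q : ℝ × (ℝ × ℝ) => G q.2.1 q.2.2 q.1 * ENNReal.ofReal (Real.exp (2 * ρ * q.1))) ?_
    exact hG'.mul (by fun_prop)
  have hFH : Measurable fun p : ℝ × ℝ => F p.1 * H p.2 := by fun_prop
  have hM : Measurable fun q : ℝ × (ℝ × ℝ) =>
      F q.2.1 * H q.2.2 * G q.2.1 q.2.2 q.1 * ENNReal.ofReal (Real.exp (ρ * q.1)) := by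
    refine Measurable.mul (Measurable.mul ?_ hG') ?_ <;> fun_prop
  rw [key (fun q => F q.2.1 * H q.2.2 * G q.2.1 q.2.2 q.1 * ENNReal.ofReal (Real.exp (ρ * q.1)))
      hM,
    key (fun q => G q.2.1 q.2.2 q.1 * ENNReal.ofReal (Real.exp (2 * ρ * q.1)))
      (by exact hG'.mul (by fun_prop))]
  calc _ ≤ ∫⁻ p, ENNReal.ofReal (1 / ρ + 1) * ((fun p : ℝ × ℝ => F p.1 * H p.2) * (fun p : ℝ × ℝ =>
        (∫⁻ u, G p.1 p.2 u * ENNReal.ofReal (Real.exp (2 * ρ * u)) ∂ν) ^ (1 / 2 : ℝ))) p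
          ∂(μ.prod μ) := by
        refine lintegral_mono fun p => ?_
        simp only [mul_assoc (F p.1 * H p.2), Pi.mul_apply]
        have hm : Measurable fun u => G p.1 p.2 u * ENNReal.ofReal (Real.exp (ρ * u)) :=
          (hGp p).mul (by fun_prop)
        rw [lintegral_const_mul _ hm, mul_left_comm]
        gcongr
        exact inner_bound ρ hρ _ (hGp p) fun u => h1 _ _ u
    _ = ENNReal.ofReal (1 / ρ + 1) * ∫⁻ p, ((fun p : ℝ × ℝ => F p.1 * H p.2) * (fun p : ℝ × ℝ =>
        (∫⁻ u, G p.1 p.2 u * ENNReal.ofReal (Real.exp (2 * ρ * u)) ∂ν) ^ (1 / 2 : ℝ))) p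
          ∂(μ.prod μ) := lintegral_const_mul _ (hFH.mul (hK.pow_const _))
    _ ≤ _ := by
        refine (mul_le_mul_right (ENNReal.lintegral_mul_le_Lp_mul_Lq (μ.prod μ)
          (Real.HolderConjugate.two_two) hFH.aemeasurable (hK.pow_const _).aemeasurable) _).trans ?_
        have e1 : ∫⁻ p : ℝ × ℝ, (F p.1 * H p.2) ^ (2 : ℝ) ∂(μ.prod μ) =
            (∫⁻ x, F x ^ 2 ∂μ) * ∫⁻ y, H y ^ 2 ∂μ := by
          rw [← lintegral_prod_mul (by fun_prop) (by fun_prop)]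
          refine lintegral_congr fun p => ?_
          rw [ENNReal.rpow_two, mul_pow]
        have e2 : ∀ t : ℝ≥0∞, (t ^ (1 / 2 : ℝ)) ^ (2 : ℝ) = t := fun t => by
          rw [← ENNReal.rpow_mul]; norm_num
        simp only [e2]
        rw [e1, ENNReal.mul_rpow_of_nonneg _ _ (by norm_num)]
        simp only [mul_assoc, le_refl]
end
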